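/- If 1 − |α| < |λ| < 1 + |α|, then for every θ ∈ ℝ there exist E₁, E₂ ∈ σ(H_{α,θ,b}) with L(E₁) > 0 and L(E₂) = 0; that is, zero Lyapunov exponent and positive Lyapunov exponent coexist in the spectrum. -/

import Mathlib

open scoped Real

/-- The quasi-periodic potential `v(x) = 2λcos(2πx)/(1 - αcos(2πx))`. -/
noncomputable def potV (α lam : ℝ) (x : ℝ) : ℝ :=
  2 * lam * Real.cos (2 * Real.pi * x) / (1 - α * Real.cos (2 * Real.pi * x))

/-- One-step transfer matrix `A(x,z) = [[z - V x, -1],[1,0]]`. -/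
noncomputable def tMat (V : ℝ → ℝ) (x : ℝ) (z : ℂ) : Matrix (Fin 2) (Fin 2) ℂ :=
  !![z - (V x : ℝ), -1; 1, 0]

/-- The `n`-step transfer matrix `A_n(x,z) = A(x+(n-1)b,z) ⋯ A(x+b,z) A(x,z)`. -/
noncomputable def tProd (V : ℝ → ℝ) (b : ℝ) (n : ℕ) (x : ℝ) (z : ℂ) :
    Matrix (Fin 2) (Fin 2) ℂ :=
  (((List.range n).reverse).map (fun j => tMat V (x + (j : ℝ) * b) z)).prod

/-- The operator norm of a 2×2 complex matrix, acting on the Euclidean space `ℂ²`. -/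
noncomputable def opNorm2 (M : Matrix (Fin 2) (Fin 2) ℂ) : ℝ :=
  ‖Matrix.toEuclideanCLM (𝕜 := ℂ) M‖

/-- The Lyapunov exponent `L(z) = lim_n (1/n)∫₀¹ log‖A_n(x,z)‖ dx`; the limit exists and
equals `inf_{n ≥ 1} (1/n)∫₀¹ log‖A_n(x,z)‖ dx` by subadditivity, so we take that as the
definition. -/
noncomputable def lyap (V : ℝ → ℝ) (b : ℝ) (z : ℂ) : ℝ :=
  ⨅ n : ℕ+, ((n : ℝ))⁻¹ * ∫ x in (0:ℝ)..(1:ℝ), Real.log (opNorm2 (tProd V b n x z))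

/-- `IsSchrodingerOp V b θ H` says that `H` is the bounded operator on `ℓ²(ℤ)` given by
`(Hu)ₙ = u_{n+1} + u_{n-1} + V(nb+θ)uₙ`. -/
def IsSchrodingerOp (V : ℝ → ℝ) (b θ : ℝ)
    (H : lp (fun _ : ℤ => ℂ) 2 →L[ℂ] lp (fun _ : ℤ => ℂ) 2) : Prop :=
  ∀ u : lp (fun _ : ℤ => ℂ) 2, ∀ n : ℤ,
    (H u : ∀ _ : ℤ, ℂ) n = (u : ∀ _ : ℤ, ℂ) (n + 1) + (u : ∀ _ : ℤ, ℂ) (n - 1)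
      + (V ((n : ℝ) * b + θ) : ℂ) * (u : ∀ _ : ℤ, ℂ) n

theorem tProd_zero (V : ℝ → ℝ) (b x : ℝ) (z : ℂ) : tProd V b 0 x z = 1 := by
  simp [tProd]

theorem tProd_succ (V : ℝ → ℝ) (b : ℝ) (n : ℕ) (x : ℝ) (z : ℂ) :
    tProd V b (n + 1) x z = tMat V (x + (n : ℝ) * b) z * tProd V b n x z := by
  simp [tProd, List.range_succ]

theorem tProd_add (V : ℝ → ℝ) (b : ℝ) (m n : ℕ) (x : ℝ) (z : ℂ) :
    tProd V b (m + n) x z = tProd V b m (x + (n : ℝ) * b) z * tProd V b n x z := by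
  induction m with
  | zero => simp [tProd_zero]
  | succ m ih =>
    have : m + 1 + n = (m + n) + 1 := by ring
    rw [this, tProd_succ, ih, tProd_succ, Matrix.mul_assoc]
    congr 2
    push_cast
    ring

theorem tProd_one (V : ℝ → ℝ) (b x : ℝ) (z : ℂ) : tProd V b 1 x z = tMat V x z := by
  simp [tProd]

theorem tProd_succ' (V : ℝ → ℝ) (b : ℝ) (n : ℕ) (x : ℝ) (z : ℂ) :
    tProd V b (n + 1) x z = tProd V b n (x + b) z * tMat V x z := by
  rw [tProd_add, tProd_one]; simp

theorem tProd_det (V : ℝ → ℝ) (b : ℝ) (n : ℕ) (x : ℝ) (z : ℂ) :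
    (tProd V b n x z).det = 1 := by
  induction n with
  | zero => simp [tProd_zero]
  | succ n ih => rw [tProd_succ, Matrix.det_mul, ih]; simp [tMat, Matrix.det_fin_two]

theorem opNorm2_nonneg (M : Matrix (Fin 2) (Fin 2) ℂ) : 0 ≤ opNorm2 M := norm_nonneg _

theorem opNorm2_mul_le (M N : Matrix (Fin 2) (Fin 2) ℂ) :
    opNorm2 (M * N) ≤ opNorm2 M * opNorm2 N := by
  unfold opNorm2
  rw [map_mul]
  exact norm_mul_le _ _

theorem opNorm2_smul (c : ℂ) (M : Matrix (Fin 2) (Fin 2) ℂ) :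
    opNorm2 (c • M) = ‖c‖ * opNorm2 M := by
  unfold opNorm2
  rw [map_smul, norm_smul]

theorem opNorm2_one : opNorm2 1 = 1 := by
  unfold opNorm2
  rw [map_one]
  exact norm_one

/-- bilinear lower bound -/
theorem opNorm2_bilin (M : Matrix (Fin 2) (Fin 2) ℂ) (w : Fin 2 → ℂ) :
    (‖(M.mulVec w) 0‖ ^ 2 + ‖(M.mulVec w) 1‖ ^ 2) ≤
      opNorm2 M ^ 2 * (‖w 0‖ ^ 2 + ‖w 1‖ ^ 2) := by
  have h := (Matrix.toEuclideanCLM (𝕜 := ℂ) M).le_opNorm (WithLp.toLp 2 w)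
  rw [Matrix.toEuclideanCLM_toLp] at h
  have h2 := pow_le_pow_left₀ (norm_nonneg _) h 2
  rw [mul_pow, EuclideanSpace.norm_sq_eq, EuclideanSpace.norm_sq_eq] at h2
  simpa [Fin.sum_univ_two, opNorm2] using h2

theorem opNorm2_entry (M : Matrix (Fin 2) (Fin 2) ℂ) (i j : Fin 2) :
    ‖M i j‖ ≤ opNorm2 M := by
  have h := opNorm2_bilin M (Pi.single j 1)
  have h1 : ‖(Pi.single j 1 : Fin 2 → ℂ) 0‖ ^ 2 + ‖(Pi.single j 1 : Fin 2 → ℂ) 1‖ ^ 2 = 1 := by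
    fin_cases j <;> simp
  rw [h1, Matrix.mulVec_single_one, mul_one] at h
  have : ‖M i j‖ ^ 2 ≤ opNorm2 M ^ 2 := by
    refine le_trans ?_ h
    fin_cases i <;> simp [Matrix.col]
  exact le_of_sq_le_sq this (opNorm2_nonneg M)

theorem opNorm2_le_sum (M : Matrix (Fin 2) (Fin 2) ℂ) :
    opNorm2 M ≤ ‖M 0 0‖ + ‖M 0 1‖ + ‖M 1 0‖ + ‖M 1 1‖ := by
  refine ContinuousLinearMap.opNorm_le_bound _ (by positivity) ?_
  intro v
  have hv : v = WithLp.toLp 2 (v.ofLp) := rfl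
  rw [hv, Matrix.toEuclideanCLM_toLp]
  set w := v.ofLp
  have hw : ∀ i, ‖w i‖ ≤ ‖WithLp.toLp 2 w‖ := fun i => PiLp.norm_apply_le (WithLp.toLp 2 w) i
  set t := ‖WithLp.toLp 2 w‖
  have hs : ‖(WithLp.toLp 2 (M.mulVec w) : EuclideanSpace ℂ (Fin 2))‖ ≤
      ‖M.mulVec w 0‖ + ‖M.mulVec w 1‖ := by
    rw [EuclideanSpace.norm_eq]
    refine Real.sqrt_le_iff.2 ⟨by positivity, ?_⟩
    simp only [Fin.sum_univ_two]
    nlinarith [norm_nonneg (M.mulVec w 0), norm_nonneg (M.mulVec w 1)]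
  refine hs.trans ?_
  simp only [Matrix.mulVec, dotProduct, Fin.sum_univ_two]
  have e : ∀ i j, ‖M i j * w j‖ ≤ ‖M i j‖ * t := fun i j => by
    rw [norm_mul]; exact mul_le_mul_of_nonneg_left (hw j) (norm_nonneg _)
  have := norm_add_le (M 0 0 * w 0) (M 0 1 * w 1)
  have := norm_add_le (M 1 0 * w 0) (M 1 1 * w 1)
  linarith [e 0 0, e 0 1, e 1 0, e 1 1]

theorem one_le_opNorm2 (M : Matrix (Fin 2) (Fin 2) ℂ) (h : M.det = 1) : 1 ≤ opNorm2 M := by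
  have h0 := opNorm2_bilin M (Pi.single 0 1)
  have h1 := opNorm2_bilin M (Pi.single 1 1)
  simp [Matrix.col] at h0 h1
  rw [Matrix.det_fin_two] at h
  have hd : 1 ≤ ‖M 0 0‖ * ‖M 1 1‖ + ‖M 0 1‖ * ‖M 1 0‖ := by
    rw [← norm_mul, ← norm_mul]
    calc (1 : ℝ) = ‖M 0 0 * M 1 1 - M 0 1 * M 1 0‖ := by rw [h]; simp
      _ ≤ _ := norm_sub_le _ _
  have : 1 ≤ opNorm2 M ^ 2 := by
    nlinarith [sq_nonneg (‖M 0 0‖ - ‖M 1 1‖), sq_nonneg (‖M 0 1‖ - ‖M 1 0‖)]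
  nlinarith [opNorm2_nonneg M]

theorem one_le_opNorm2_tProd (V : ℝ → ℝ) (b : ℝ) (n : ℕ) (x : ℝ) (z : ℂ) :
    1 ≤ opNorm2 (tProd V b n x z) := one_le_opNorm2 _ (tProd_det _ _ _ _ _)

theorem continuous_tProd (V : ℝ → ℝ) (hV : Continuous V) (b : ℝ) (n : ℕ) (z : ℂ) :
    Continuous fun x => tProd V b n x z := by
  induction n with
  | zero => simp only [tProd_zero]; exact continuous_const
  | succ n ih =>
    simp only [tProd_succ]
    refine Continuous.matrix_mul ?_ ih
    refine continuous_matrix ?_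
    intro i j
    fin_cases i <;> fin_cases j <;> simp [tMat] <;> fun_prop

theorem continuous_opNorm2 : Continuous opNorm2 := by
  let f : Matrix (Fin 2) (Fin 2) ℂ →ₗ[ℂ]
      (EuclideanSpace ℂ (Fin 2) →L[ℂ] EuclideanSpace ℂ (Fin 2)) :=
    { toFun := fun M => Matrix.toEuclideanCLM (𝕜 := ℂ) M
      map_add' := fun M N => map_add _ M N
      map_smul' := fun c M => map_smul _ c M }
  have : Continuous f := LinearMap.continuous_of_finiteDimensional _
  exact continuous_norm.comp this

theorem continuous_log_tProd (V : ℝ → ℝ) (hV : Continuous V) (b : ℝ) (n : ℕ) (z : ℂ) :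
    Continuous fun x => Real.log (opNorm2 (tProd V b n x z)) := by
  refine Continuous.log (continuous_opNorm2.comp (continuous_tProd V hV b n z)) ?_
  intro x
  have := one_le_opNorm2_tProd V b n x z
  positivity

theorem tProd_periodic (V : ℝ → ℝ) (hV : Function.Periodic V 1) (b : ℝ) (n : ℕ) (z : ℂ) :
    Function.Periodic (fun x => tProd V b n x z) 1 := by
  intro x
  induction n with
  | zero => simp [tProd_zero]
  | succ n ih =>
    simp only [tProd_succ] at *
    rw [ih]
    congr 1
    have : x + 1 + (n : ℝ) * b = (x + (n : ℝ) * b) + 1 := by ring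
    simp [tMat, this, hV (x + (n : ℝ) * b)]

theorem lyap_bddBelow (V : ℝ → ℝ) (b : ℝ) (z : ℂ) :
    BddBelow (Set.range fun n : ℕ+ => ((n : ℝ))⁻¹ *
      ∫ x in (0:ℝ)..(1:ℝ), Real.log (opNorm2 (tProd V b n x z))) := by
  refine ⟨0, ?_⟩
  rintro _ ⟨n, rfl⟩
  refine mul_nonneg (by positivity) ?_
  refine intervalIntegral.integral_nonneg (by norm_num) ?_
  intro x _
  exact Real.log_nonneg (one_le_opNorm2_tProd V b n x z)

theorem lyap_nonneg (V : ℝ → ℝ) (b : ℝ) (z : ℂ) : 0 ≤ lyap V b z := by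
  refine Real.iInf_nonneg ?_
  intro n
  refine mul_nonneg (by positivity) ?_
  refine intervalIntegral.integral_nonneg (by norm_num) ?_
  intro x _
  exact Real.log_nonneg (one_le_opNorm2_tProd V b n x z)

theorem lyap_le (V : ℝ → ℝ) (b : ℝ) (z : ℂ) (n : ℕ) (hn : 0 < n) :
    n * lyap V b z ≤ ∫ x in (0:ℝ)..(1:ℝ), Real.log (opNorm2 (tProd V b n x z)) := by
  have h := ciInf_le (lyap_bddBelow V b z) (⟨n, hn⟩ : ℕ+)
  have h2 : lyap V b z ≤ (n : ℝ)⁻¹ * ∫ x in (0:ℝ)..(1:ℝ),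
    Real.log (opNorm2 (tProd V b n x z)) := h
  have hn' : (0 : ℝ) < n := by exact_mod_cast hn
  calc n * lyap V b z ≤ n * ((n : ℝ)⁻¹ * ∫ x in (0:ℝ)..(1:ℝ),
      Real.log (opNorm2 (tProd V b n x z))) := by gcongr
    _ = _ := by field_simp

theorem exists_ge_lyap (V : ℝ → ℝ) (hV : Continuous V) (b : ℝ) (z : ℂ) (n : ℕ) (hn : 0 < n) :
    ∃ x, Real.exp (n * lyap V b z) ≤ opNorm2 (tProd V b n x z) := by
  obtain ⟨x, hx, hmax⟩ := isCompact_Icc.exists_isMaxOn (Set.nonempty_Icc.2 (zero_le_one' ℝ))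
    (continuous_log_tProd V hV b n z).continuousOn
  refine ⟨x, ?_⟩
  rw [← Real.le_log_iff_exp_le (by have := one_le_opNorm2_tProd V b n x z; positivity)]
  refine (lyap_le V b z n hn).trans ?_
  have := intervalIntegral.integral_mono_on (μ := MeasureTheory.volume) (zero_le_one' ℝ)
    ((continuous_log_tProd V hV b n z).intervalIntegrable 0 1)
    (g := fun _ => Real.log (opNorm2 (tProd V b n x z)))
    (continuous_const.intervalIntegrable 0 1) (fun y hy => hmax hy)
  simpa using this

def EqD (b : ℝ) (f : ℝ → ℂ) : Prop := ∀ η > 0, ∃ n0 : ℕ, ∀ n : ℕ, n0 ≤ n → ∀ x : ℝ,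
  ‖∑ j ∈ Finset.range n, f (x + j * b) - n * ∫ y in (0:ℝ)..1, f y‖ ≤ η * n

theorem EqD_exp (b : ℝ) (hb : Irrational b) (k : ℤ) :
    EqD b (fun x => Complex.exp (2 * Real.pi * Complex.I * k * x)) := by
  by_cases hk : k = 0
  · subst hk
    intro η hη
    refine ⟨0, fun n _ x => ?_⟩
    simp
    positivity
  · have hk' : (k : ℂ) ≠ 0 := by exact_mod_cast hk
    have hc : 2 * Real.pi * Complex.I * (k : ℂ) ≠ 0 := by
      simp [Real.pi_ne_zero, hk']
    have hIntg : ∫ y in (0:ℝ)..1, Complex.exp (2 * Real.pi * Complex.I * k * y) = 0 := by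
      rw [integral_exp_mul_complex hc]
      have : Complex.exp (2 * Real.pi * Complex.I * k * (1:ℝ)) = 1 := by
        rw [Complex.exp_eq_one_iff]
        exact ⟨k, by push_cast; ring⟩
      rw [this]; simp
    set w := Complex.exp (2 * Real.pi * Complex.I * k * b) with hw
    have hw1 : w ≠ 1 := by
      intro h
      rw [hw, Complex.exp_eq_one_iff] at h
      obtain ⟨m, hm⟩ := h
      have h2 : (2 * Real.pi * Complex.I) * (k * b - m) = 0 := by
        linear_combination hm
      have h3 : (2 * Real.pi * Complex.I) ≠ 0 := by simp [Real.pi_ne_zero]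
      have h4 : (k : ℂ) * b - m = 0 := (mul_eq_zero.1 h2).resolve_left h3
      have h5 : (k : ℝ) * b = m := by
        have : ((k * b - m : ℝ) : ℂ) = 0 := by push_cast; exact h4
        have := Complex.ofReal_eq_zero.1 this
        linarith
      have : Irrational ((k : ℝ) * b) := hb.intCast_mul hk
      rw [h5] at this
      exact (Int.not_irrational m) this
    have hwn : ‖w‖ = 1 := by
      have : 2 * Real.pi * Complex.I * k * b = ((2 * Real.pi * k * b : ℝ) : ℂ) * Complex.I := by
        push_cast; ring
      rw [hw, this, Complex.norm_exp_ofReal_mul_I]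
    intro η hη
    obtain ⟨n0, hn0⟩ := exists_nat_gt (2 / ‖w - 1‖ / η)
    refine ⟨n0, fun n hn x => ?_⟩
    rw [hIntg, mul_zero, sub_zero]
    have e : ∀ j : ℕ, Complex.exp (2 * Real.pi * Complex.I * k * ((x + j * b : ℝ) : ℂ)) =
        Complex.exp (2 * Real.pi * Complex.I * k * x) * w ^ j := by
      intro j
      rw [hw, ← Complex.exp_nat_mul, ← Complex.exp_add]
      congr 1
      push_cast; ring
    simp only [e]
    rw [← Finset.mul_sum, geom_sum_eq hw1, norm_mul, norm_div]
    have hx : ‖Complex.exp (2 * Real.pi * Complex.I * k * x)‖ = 1 := by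
      have : 2 * Real.pi * Complex.I * k * x = ((2 * Real.pi * k * x : ℝ) : ℂ) * Complex.I := by
        push_cast; ring
      rw [this, Complex.norm_exp_ofReal_mul_I]
    rw [hx, one_mul]
    have hpos : 0 < ‖w - 1‖ := norm_pos_iff.2 (sub_ne_zero.2 hw1)
    have h2 : ‖w ^ n - 1‖ ≤ 2 := by
      refine (norm_sub_le _ _).trans ?_
      rw [norm_pow, hwn]; norm_num
    have hnn : (n0 : ℝ) ≤ n := by exact_mod_cast hn
    calc ‖w ^ n - 1‖ / ‖w - 1‖ ≤ 2 / ‖w - 1‖ := by gcongr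
      _ = η * (2 / ‖w - 1‖ / η) := by field_simp
      _ ≤ η * n := by gcongr; linarith

theorem EqD_add (b : ℝ) (f g : ℝ → ℂ) (cf : Continuous f) (cg : Continuous g)
    (hf : EqD b f) (hg : EqD b g) : EqD b (fun x => f x + g x) := by
  intro η hη
  obtain ⟨n1, h1⟩ := hf (η / 2) (by positivity)
  obtain ⟨n2, h2⟩ := hg (η / 2) (by positivity)
  refine ⟨max n1 n2, fun n hn x => ?_⟩
  have a1 := h1 n (le_trans (le_max_left _ _) hn) x
  have a2 := h2 n (le_trans (le_max_right _ _) hn) x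
  rw [Finset.sum_add_distrib, intervalIntegral.integral_add (cf.intervalIntegrable _ _)
    (cg.intervalIntegrable _ _)]
  have := norm_add_le (∑ j ∈ Finset.range n, f (x + j * b) - n * ∫ y in (0:ℝ)..1, f y)
    (∑ j ∈ Finset.range n, g (x + j * b) - n * ∫ y in (0:ℝ)..1, g y)
  calc _ = ‖(∑ j ∈ Finset.range n, f (x + j * b) - n * ∫ y in (0:ℝ)..1, f y) +
    (∑ j ∈ Finset.range n, g (x + j * b) - n * ∫ y in (0:ℝ)..1, g y)‖ := by congr 1; ring
    _ ≤ _ := by linarith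

theorem EqD_smul (b : ℝ) (f : ℝ → ℂ) (c : ℂ) (hf : EqD b f) : EqD b (fun x => c * f x) := by
  intro η hη
  obtain ⟨n1, h1⟩ := hf (η / (‖c‖ + 1)) (by positivity)
  refine ⟨n1, fun n hn x => ?_⟩
  rw [← Finset.mul_sum, intervalIntegral.integral_const_mul]
  have : c * ∑ i ∈ Finset.range n, f (x + i * b) - n * (c * ∫ y in (0:ℝ)..1, f y) =
    c * (∑ i ∈ Finset.range n, f (x + i * b) - n * (∫ y in (0:ℝ)..1, f y)) := by ring
  rw [this, norm_mul]
  calc _ ≤ ‖c‖ * (η / (‖c‖ + 1) * n) := by gcongr; exact h1 n hn x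
    _ = (‖c‖ / (‖c‖ + 1)) * (η * n) := by field_simp
    _ ≤ 1 * (η * n) := by
        gcongr
        rw [div_le_one (by positivity)]; linarith
    _ = _ := one_mul _

theorem EqD_circle (b : ℝ) (hb : Irrational b) (g : C(AddCircle (1:ℝ), ℂ)) :
    EqD b (fun x => g (x : AddCircle (1:ℝ))) := by
  have cont : ∀ g : C(AddCircle (1:ℝ), ℂ), Continuous (fun x : ℝ => g (x : AddCircle (1:ℝ))) :=
    fun g => g.continuous.comp (AddCircle.continuous_mk' 1)
  have hspan : ∀ g ∈ Submodule.span ℂ (Set.range (@fourier (1:ℝ))),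
      EqD b (fun x => g (x : AddCircle (1:ℝ))) := by
    intro g hg
    induction hg using Submodule.span_induction with
    | mem g hg =>
      obtain ⟨k, rfl⟩ := hg
      convert EqD_exp b hb k using 2 with x
      rw [fourier_coe_apply]
      simp
    | zero =>
      intro η hη
      refine ⟨0, fun n _ x => ?_⟩
      simp
      positivity
    | add f g _ _ hf hg => exact EqD_add b _ _ (cont f) (cont g) hf hg
    | smul c f _ hf => exact EqD_smul b _ c hf
  have hmem : g ∈ (Submodule.span ℂ (Set.range (@fourier (1:ℝ)))).topologicalClosure := by
    rw [span_fourier_closure_eq_top]; trivial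
  intro η hη
  obtain ⟨t, ht, hd⟩ := Metric.mem_closure_iff.1 hmem (η / 3) (by positivity)
  obtain ⟨n0, h0⟩ := hspan t ht (η / 3) (by positivity)
  refine ⟨n0, fun n hn x => ?_⟩
  have hpt : ∀ y, ‖g y - t y‖ ≤ η / 3 := fun y => by
    rw [← dist_eq_norm]; exact (ContinuousMap.dist_apply_le_dist y).trans hd.le
  have hs : ‖∑ j ∈ Finset.range n, g ((x + j * b : ℝ) : AddCircle (1:ℝ)) -
      ∑ j ∈ Finset.range n, t ((x + j * b : ℝ) : AddCircle (1:ℝ))‖ ≤ n * (η / 3) := by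
    rw [← Finset.sum_sub_distrib]
    refine (norm_sum_le _ _).trans ?_
    refine (Finset.sum_le_sum (fun j _ => hpt _)).trans ?_
    simp
  have hi : ‖(∫ y in (0:ℝ)..1, g (y : AddCircle (1:ℝ))) -
      ∫ y in (0:ℝ)..1, t (y : AddCircle (1:ℝ))‖ ≤ η / 3 := by
    rw [← intervalIntegral.integral_sub ((cont g).intervalIntegrable _ _)
      ((cont t).intervalIntegrable _ _)]
    refine (intervalIntegral.norm_integral_le_of_norm_le_const (fun y _ => hpt y)).trans ?_
    simp
  have h1 := h0 n hn x
  set S := ∑ j ∈ Finset.range n, g ((x + j * b : ℝ) : AddCircle (1:ℝ))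
  set T := ∑ j ∈ Finset.range n, t ((x + j * b : ℝ) : AddCircle (1:ℝ))
  set I := ∫ y in (0:ℝ)..1, g (y : AddCircle (1:ℝ))
  set J := ∫ y in (0:ℝ)..1, t (y : AddCircle (1:ℝ))
  have h2 : ‖(n : ℂ) * (I - J)‖ ≤ n * (η / 3) := by
    rw [norm_mul]; simp only [Complex.norm_natCast]; gcongr
  calc ‖S - n * I‖ = ‖(S - T) + (T - n * J) - n * (I - J)‖ := by congr 1; ring
    _ ≤ ‖(S - T) + (T - n * J)‖ + ‖n * (I - J)‖ := norm_sub_le _ _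
    _ ≤ ‖S - T‖ + ‖T - n * J‖ + ‖n * (I - J)‖ := by gcongr; exact norm_add_le _ _
    _ ≤ η * n := by linarith

/-- Uniform equidistribution. -/
theorem equidist (b : ℝ) (hb : Irrational b) (f : ℝ → ℝ) (cf : Continuous f)
    (pf : Function.Periodic f 1) (η : ℝ) (hη : 0 < η) :
    ∃ n0 : ℕ, ∀ n : ℕ, n0 ≤ n → ∀ x : ℝ,
      |∑ j ∈ Finset.range n, f (x + j * b) - n * ∫ y in (0:ℝ)..1, f y| ≤ η * n := by
  have pf' : Function.Periodic (fun x => (f x : ℂ)) 1 := fun x => by simp [pf x]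
  have hc : Continuous pf'.lift := by
    refine (QuotientAddGroup.isQuotientMap_mk (AddSubgroup.zmultiples (1:ℝ))).continuous_iff.2 ?_
    exact Complex.continuous_ofReal.comp cf
  obtain ⟨n0, h⟩ := EqD_circle b hb ⟨pf'.lift, hc⟩ η hη
  refine ⟨n0, fun n hn x => ?_⟩
  have h1 := h n hn x
  simp only [ContinuousMap.coe_mk, Function.Periodic.lift_coe] at h1
  rw [intervalIntegral.integral_ofReal] at h1
  rw [← Real.norm_eq_abs, ← Complex.norm_real]
  push_cast
  exact h1

theorem periodic_bdd (f : ℝ → ℝ) (cf : Continuous f) (pf : Function.Periodic f 1) :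
    ∃ M : ℝ, 0 ≤ M ∧ ∀ x, |f x| ≤ M := by
  obtain ⟨M, hM⟩ := (isCompact_Icc (a := (0:ℝ)) (b := 1)).exists_bound_of_continuousOn cf.continuousOn
  refine ⟨M, (norm_nonneg _).trans (hM 0 (by simp)), fun x => ?_⟩
  obtain ⟨y, hy, e⟩ := pf.exists_mem_Ico₀ one_pos x
  rw [e]
  exact hM y (Set.Ico_subset_Icc_self hy)

theorem tProd_le_pow (V : ℝ → ℝ) (cV : Continuous V) (pV : Function.Periodic V 1) (b : ℝ) (z : ℂ) :
    ∃ M : ℝ, 1 ≤ M ∧ ∀ n x, opNorm2 (tProd V b n x z) ≤ M ^ n := by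
  obtain ⟨M, hM0, hM⟩ := periodic_bdd (fun x => opNorm2 (tProd V b 1 x z))
    (continuous_opNorm2.comp (continuous_tProd V cV b 1 z))
    (fun x => by simp only [tProd_periodic V pV b 1 z x])
  simp only [tProd_one] at hM
  have h1 : 1 ≤ M := by
    have := hM 0
    have h2 := one_le_opNorm2_tProd V b 1 0 z
    rw [tProd_one] at h2
    exact h2.trans ((le_abs_self _).trans this)
  refine ⟨M, h1, fun n x => ?_⟩
  induction n with
  | zero => simp [tProd_zero, opNorm2_one]
  | succ n ih =>
    rw [tProd_succ, pow_succ, mul_comm]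
    refine (opNorm2_mul_le _ _).trans ?_
    rw [mul_comm]
    exact mul_le_mul ih ((le_abs_self _).trans (hM _)) (opNorm2_nonneg _) (by positivity)

theorem log_tProd_mul_le (V : ℝ → ℝ) (b : ℝ) (z : ℂ) (m k : ℕ) (x : ℝ) :
    Real.log (opNorm2 (tProd V b (m * k) x z)) ≤
      ∑ i ∈ Finset.range k, Real.log (opNorm2 (tProd V b m (x + i * (m * b)) z)) := by
  induction k with
  | zero => simp [tProd_zero, opNorm2_one]
  | succ k ih =>
    rw [Finset.sum_range_succ, mul_add, mul_one, add_comm (m * k) m, tProd_add]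
    have h1 := one_le_opNorm2_tProd V b m (x + ((m * k : ℕ):ℝ) * b) z
    have h2 := one_le_opNorm2_tProd V b (m * k) x z
    have h3 := one_le_opNorm2_tProd V b (m + m * k) x z
    rw [tProd_add] at h3
    have := Real.log_le_log (by linarith) (opNorm2_mul_le (tProd V b m (x + ((m * k : ℕ):ℝ) * b) z)
      (tProd V b (m * k) x z))
    rw [Real.log_mul (by linarith) (by linarith)] at this
    have e : x + ((m * k : ℕ):ℝ) * b = x + k * (m * b) := by push_cast; ring
    rw [e] at this ⊢
    linarith

/-- Uniform upper bound for the growth of transfer matrices. -/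
theorem tProd_upper (V : ℝ → ℝ) (cV : Continuous V) (pV : Function.Periodic V 1) (b : ℝ)
    (hb : Irrational b) (z : ℂ) (η : ℝ) (hη : 0 < η) :
    ∃ C : ℝ, 0 < C ∧ ∀ n x, opNorm2 (tProd V b n x z) ≤ C * Real.exp (n * (lyap V b z + η)) := by
  obtain ⟨M, hM1, hM⟩ := tProd_le_pow V cV pV b z
  have hl0 := lyap_nonneg V b z
  set ℓ := lyap V b z with hℓ
  obtain ⟨m, hm⟩ := exists_lt_of_ciInf_lt (show (⨅ n : ℕ+, ((n : ℝ))⁻¹ *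
    ∫ x in (0:ℝ)..(1:ℝ), Real.log (opNorm2 (tProd V b n x z))) < ℓ + η / 2 by
      change ℓ < _; linarith)
  have hmpos : (0:ℝ) < (m:ℕ) := by exact_mod_cast m.pos
  have hm' : ∫ x in (0:ℝ)..(1:ℝ), Real.log (opNorm2 (tProd V b m x z)) < m * (ℓ + η / 2) := by
    have := mul_lt_mul_of_pos_left hm hmpos
    rwa [← mul_assoc, mul_inv_cancel₀ hmpos.ne', one_mul] at this
  obtain ⟨k0, hk0⟩ := equidist ((m:ℕ) * b) (hb.natCast_mul m.ne_zero)
    (fun x => Real.log (opNorm2 (tProd V b m x z)))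
    (continuous_log_tProd V cV b m z)
    (fun x => by simp only [tProd_periodic V pV b m z x]) (m * (η / 2)) (by positivity)
  refine ⟨M ^ (m * k0 + m : ℕ), by positivity, fun n x => ?_⟩
  have hdm := Nat.div_add_mod n m
  have hmod : n % m < m := Nat.mod_lt _ m.pos
  set k := n / m
  set r := n % m
  by_cases hk : k0 ≤ k
  · have e : tProd V b n x z = tProd V b r (x + ((m * k : ℕ) : ℝ) * b) z * tProd V b (m * k) x z := by
      rw [← tProd_add, add_comm, hdm]
    rw [e]
    refine (opNorm2_mul_le _ _).trans ?_
    refine mul_le_mul ((hM _ _).trans (pow_le_pow_right₀ hM1 (by omega))) ?_ (opNorm2_nonneg _)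
      (by positivity)
    have hpos : 0 < opNorm2 (tProd V b (m * k) x z) :=
      lt_of_lt_of_le one_pos (one_le_opNorm2_tProd _ _ _ _ _)
    rw [← Real.log_le_iff_le_exp hpos]
    refine (log_tProd_mul_le V b z m k x).trans ?_
    have h1 := (abs_le.1 (hk0 k hk x)).2
    have h2 : (k:ℝ) * ∫ x in (0:ℝ)..(1:ℝ), Real.log (opNorm2 (tProd V b m x z)) ≤
      k * (m * (ℓ + η / 2)) := by gcongr
    have h3 : ((m:ℕ):ℝ) * k ≤ n := by
      have : (m:ℕ) * k ≤ n := by omega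
      exact_mod_cast this
    have h4 : ((m:ℕ):ℝ) * k * (ℓ + η) ≤ n * (ℓ + η) := by gcongr
    nlinarith
  · have hn : n ≤ m * k0 + m := by
      have : (m:ℕ) * k ≤ m * k0 := by gcongr; omega
      omega
    calc _ ≤ M ^ n := hM _ _
      _ ≤ M ^ (m * k0 + m : ℕ) * 1 := by rw [mul_one]; exact pow_le_pow_right₀ hM1 hn
      _ ≤ _ := by gcongr; exact Real.one_le_exp (by positivity)

noncomputable def ee (x : ℝ) : ℂ := Complex.exp ((2 * π * x : ℝ) * Complex.I)

theorem ee_norm (x : ℝ) : ‖ee x‖ = 1 := Complex.norm_exp_ofReal_mul_I _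

theorem ee_ne_zero (x : ℝ) : ee x ≠ 0 := Complex.exp_ne_zero _

theorem ee_add (x y : ℝ) : ee (x + y) = ee x * ee y := by
  unfold ee; rw [← Complex.exp_add]; congr 1; push_cast; ring

theorem ee_zero : ee 0 = 1 := by simp [ee]

theorem ee_one : ee 1 = 1 := by
  unfold ee
  have : ((2 * π * 1 : ℝ) : ℂ) * Complex.I = 2 * π * Complex.I := by push_cast; ring
  rw [this, Complex.exp_two_pi_mul_I]

theorem ee_periodic : Function.Periodic ee 1 := fun x => by rw [ee_add, ee_one, mul_one]

theorem ee_neg (x : ℝ) : ee (-x) = (ee x)⁻¹ := by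
  refine eq_inv_of_mul_eq_one_left ?_; rw [← ee_add]; simp [ee_zero]

theorem continuous_ee : Continuous ee := by unfold ee; fun_prop

theorem ee_eq (x : ℝ) : ee x = Real.cos (2 * π * x) + Real.sin (2 * π * x) * Complex.I := by
  unfold ee; rw [Complex.exp_mul_I]; push_cast; rfl

theorem ee_cos (x : ℝ) : ee x * (Real.cos (2 * π * x) : ℂ) = (ee x ^ 2 + 1) / 2 := by
  have h : ((Real.cos (2 * π * x) : ℝ) : ℂ) ^ 2 + ((Real.sin (2 * π * x) : ℝ) : ℂ) ^ 2 = 1 := by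
    exact_mod_cast Real.cos_sq_add_sin_sq (2 * π * x)
  rw [ee_eq]
  linear_combination (1/2) * h - (1/2) * (Real.sin (2 * π * x) : ℂ) ^ 2 * Complex.I_sq

theorem exists_ee (z : ℂ) (hz : ‖z‖ = 1) : ∃ x : ℝ, z = ee x := by
  refine ⟨z.arg / (2 * π), ?_⟩
  unfold ee
  have h := Complex.norm_mul_exp_arg_mul_I z
  rw [hz] at h
  have e : 2 * π * (z.arg / (2 * π)) = z.arg := by field_simp
  rw [e]
  simpa using h.symm

noncomputable def hh (α x : ℝ) : ℝ := 1 - α * Real.cos (2 * π * x)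

theorem hh_bounds (α x : ℝ) : 1 - |α| ≤ hh α x ∧ hh α x ≤ 1 + |α| := by
  unfold hh
  have h : |α * Real.cos (2 * π * x)| ≤ |α| := by
    rw [abs_mul]
    exact mul_le_of_le_one_right (abs_nonneg _) (Real.abs_cos_le_one _)
  have := abs_le.1 h
  constructor <;> linarith

theorem hh_pos (α x : ℝ) (hα : |α| < 1) : 0 < hh α x := by
  have := (hh_bounds α x).1; linarith

theorem continuous_hh (α : ℝ) : Continuous (hh α) := by unfold hh; fun_prop

theorem cos_two_pi_periodic : Function.Periodic (fun x : ℝ => Real.cos (2 * π * x)) 1 := by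
  intro x
  simp only
  rw [mul_add, mul_one, Real.cos_add_two_pi]

theorem hh_periodic (α : ℝ) : Function.Periodic (hh α) 1 := by
  intro x
  unfold hh
  have := cos_two_pi_periodic x
  simp only at this
  rw [this]

theorem potV_eq (α lam x : ℝ) : potV α lam x = 2 * lam * Real.cos (2 * π * x) / hh α x := rfl

theorem potV_continuous (α lam : ℝ) (hα : |α| < 1) : Continuous (potV α lam) := by
  have e : potV α lam = fun x => 2 * lam * Real.cos (2 * π * x) / hh α x := rfl
  rw [e]
  exact Continuous.div (by fun_prop) (continuous_hh α) (fun x => (hh_pos α x hα).ne')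

theorem potV_periodic (α lam : ℝ) : Function.Periodic (potV α lam) 1 := by
  intro x
  rw [potV_eq, potV_eq, hh_periodic α x]
  have := cos_two_pi_periodic x
  simp only at this
  rw [this]

theorem potV_even (α lam x : ℝ) : potV α lam (-x) = potV α lam x := by
  rw [potV_eq, potV_eq]
  unfold hh
  rw [mul_neg, Real.cos_neg]

theorem potV_tau (α lam x : ℝ) (hα : |α| < 1) :
    α * potV α lam x + 2 * lam = 2 * lam / hh α x := by
  have h := (hh_pos α x hα).ne'
  rw [potV_eq]
  field_simp
  unfold hh
  ring

theorem integral_log_ee (β : ℂ) (hβ : ‖β‖ < 1) : ∫ y in (0:ℝ)..1, Real.log ‖ee y - β‖ = 0 := by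
  have h := circleAverage_log_norm_sub_const₀ hβ
  rw [Real.circleAverage_def] at h
  have h2 := intervalIntegral.integral_comp_mul_left (a := 0) (b := 1)
    (fun θ => Real.log ‖circleMap 0 1 θ - β‖) (c := 2 * π) (by positivity)
  simp only [mul_zero, mul_one] at h2
  refine Eq.trans ?_ (h2.trans h)
  congr 1
  ext y
  simp [ee, circleMap]

theorem one_sub_ne_zero' (β : ℂ) (hβ : ‖β‖ < 1) (y : ℝ) : ee y - β ≠ 0 := by
  intro h
  have := ee_norm y
  rw [sub_eq_zero.1 h] at this
  linarith

theorem continuous_log_ee (β : ℂ) (hβ : ‖β‖ < 1) : Continuous fun y => Real.log ‖ee y - β‖ := by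
  refine Continuous.log (by have := continuous_ee; fun_prop) ?_
  intro y
  exact norm_ne_zero_iff.2 (one_sub_ne_zero' β hβ y)

/-- uniform equidistribution of `log |e(y) - β|`. -/
theorem equidist_log (b : ℝ) (hb : Irrational b) (β : ℂ) (hβ : ‖β‖ < 1) (η : ℝ) (hη : 0 < η) :
    ∃ n0 : ℕ, ∀ n : ℕ, n0 ≤ n → ∀ x : ℝ,
      |∑ j ∈ Finset.range n, Real.log ‖ee (x + j * b) - β‖| ≤ η * n := by
  obtain ⟨n0, h⟩ := equidist b hb _ (continuous_log_ee β hβ)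
    (fun x => by simp only [ee_periodic x]) η hη
  refine ⟨n0, fun n hn x => ?_⟩
  have := h n hn x
  rwa [integral_log_ee β hβ, mul_zero, sub_zero] at this

noncomputable def kap (α : ℝ) : ℝ := (1 + √(1 - α ^ 2)) / 2

theorem kap_eq (α : ℝ) (hα : |α| < 1) : kap α ^ 2 - kap α + α ^ 2 / 4 = 0 := by
  have h : α ^ 2 < 1 := by rw [← sq_abs]; nlinarith [abs_nonneg α]
  have := Real.sq_sqrt (show 0 ≤ 1 - α ^ 2 by linarith)
  unfold kap; nlinarith

theorem kap_gt (α : ℝ) (hα : |α| < 1) : 1 / 2 < kap α := by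
  have h : α ^ 2 < 1 := by rw [← sq_abs]; nlinarith [abs_nonneg α]
  have := Real.sqrt_pos.2 (show 0 < 1 - α ^ 2 by linarith)
  unfold kap; linarith

theorem beta_lt (α : ℝ) (hα : |α| < 1) : ‖((α / (2 * kap α) : ℝ) : ℂ)‖ < 1 := by
  have := kap_gt α hα
  rw [Complex.norm_real, Real.norm_eq_abs, abs_div, abs_of_pos (show 0 < 2 * kap α by linarith),
    div_lt_one (by linarith)]
  linarith

theorem hh_factor (α x : ℝ) (hα : |α| < 1) :
    hh α x = kap α * ‖ee x - ((α / (2 * kap α) : ℝ) : ℂ)‖ ^ 2 := by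
  have hk := kap_gt α hα
  have hk2 := kap_eq α hα
  rw [ee_eq, ← Complex.normSq_eq_norm_sq, Complex.normSq_apply]
  simp only [Complex.sub_re, Complex.sub_im, Complex.add_re, Complex.add_im, Complex.mul_re,
    Complex.mul_im, Complex.ofReal_re, Complex.ofReal_im, Complex.I_re, Complex.I_im]
  have hcs := Real.cos_sq_add_sin_sq (2 * π * x)
  unfold hh
  set c := Real.cos (2 * π * x)
  set s := Real.sin (2 * π * x)
  have : kap α * (α / (2 * kap α)) = α / 2 := by field_simp
  have h3 : kap α * (α / (2 * kap α)) ^ 2 = 1 - kap α := by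
    field_simp; linarith
  linear_combination (2 * c) * this - h3 - kap α * hcs

theorem equidist_hh (α b : ℝ) (hα : |α| < 1) (hb : Irrational b) (η : ℝ) (hη : 0 < η) :
    ∃ n0 : ℕ, ∀ n : ℕ, n0 ≤ n → ∀ x : ℝ,
      |∑ j ∈ Finset.range n, Real.log (hh α (x + j * b)) - n * Real.log (kap α)| ≤ η * n := by
  obtain ⟨n0, h⟩ := equidist_log b hb _ (beta_lt α hα) (η / 2) (by positivity)
  refine ⟨n0, fun n hn x => ?_⟩
  have := h n hn x
  have hk := kap_gt α hα
  have e : ∑ j ∈ Finset.range n, Real.log (hh α (x + j * b)) - n * Real.log (kap α) =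
      2 * ∑ j ∈ Finset.range n, Real.log ‖ee (x + j * b) - ((α / (2 * kap α) : ℝ) : ℂ)‖ := by
    have : ∀ j ∈ Finset.range n, Real.log (hh α (x + j * b)) = Real.log (kap α) +
      2 * Real.log ‖ee (x + j * b) - ((α / (2 * kap α) : ℝ) : ℂ)‖ := by
      intro j _
      rw [hh_factor α _ hα, Real.log_mul (by linarith), Real.log_pow]
      · norm_num
      · exact pow_ne_zero _ (norm_ne_zero_iff.2 (one_sub_ne_zero' _ (beta_lt α hα) _))
    rw [Finset.sum_congr rfl this, Finset.sum_add_distrib, ← Finset.mul_sum]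
    simp
  rw [e, abs_mul, abs_two]
  linarith

noncomputable def cM (E α τ : ℝ) (z : ℂ) : Matrix (Fin 2) (Fin 2) ℂ :=
  !![E * z - τ / 2 * (z ^ 2 + 1), -(z - α / 2 * (z ^ 2 + 1)); z - α / 2 * (z ^ 2 + 1), 0]

noncomputable def cProd (E α τ b : ℝ) : ℕ → ℂ → Matrix (Fin 2) (Fin 2) ℂ
  | 0, _ => 1
  | n + 1, z => cM E α τ (ee (n * b) * z) * cProd E α τ b n z

theorem cM_ee (E α lam x : ℝ) (hα : |α| < 1) :
    cM E α (α * E + 2 * lam) (ee x) = (ee x * (hh α x : ℂ)) • tMat (potV α lam) x E := by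
  have hp := (hh_pos α x hα).ne'
  have h1 : ee x * (hh α x : ℂ) = ee x - α / 2 * (ee x ^ 2 + 1) := by
    unfold hh
    push_cast
    have := ee_cos x
    push_cast at this
    linear_combination (-(α:ℂ)) * this
  have h2 : (hh α x : ℂ) * (potV α lam x : ℂ) = 2 * lam * (Real.cos (2 * π * x) : ℂ) := by
    rw [potV_eq]
    push_cast
    have : (hh α x : ℂ) ≠ 0 := by exact_mod_cast hp
    field_simp
  have h3 := ee_cos x
  unfold cM tMat
  ext i j
  fin_cases i <;> fin_cases j
  · simp only [Fin.zero_eta, Matrix.of_apply, Matrix.cons_val', Matrix.cons_val_zero,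
      Matrix.smul_apply, smul_eq_mul]
    push_cast
    linear_combination ee x * h2 + 2 * lam * h3 - E * h1
  · simp [h1]
  · simp [h1]
  · simp

theorem cProd_ee (E α lam b x : ℝ) (n : ℕ) (hα : |α| < 1) :
    cProd E α (α * E + 2 * lam) b n (ee x) =
      (∏ j ∈ Finset.range n, (ee (x + j * b) * (hh α (x + j * b) : ℂ))) •
        tProd (potV α lam) b n x E := by
  induction n with
  | zero => simp [cProd, tProd_zero]
  | succ n ih =>
    rw [cProd, ih, tProd_succ, Finset.prod_range_succ, ← ee_add, add_comm (n * b) x, cM_ee _ _ _ _ hα]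
    rw [Matrix.smul_mul, Matrix.mul_smul, smul_smul, mul_comm]

theorem cProd_ee_norm (E α lam b x : ℝ) (n : ℕ) (hα : |α| < 1) (i j : Fin 2) :
    ‖cProd E α (α * E + 2 * lam) b n (ee x) i j‖ =
      (∏ j ∈ Finset.range n, hh α (x + j * b)) * ‖tProd (potV α lam) b n x E i j‖ := by
  rw [cProd_ee _ _ _ _ _ _ hα, Matrix.smul_apply, norm_smul, norm_prod]
  congr 1
  refine Finset.prod_congr rfl fun k _ => ?_
  rw [norm_mul, ee_norm, one_mul, Complex.norm_real, Real.norm_eq_abs, abs_of_pos (hh_pos _ _ hα)]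

theorem cProd_poly (E α τ b : ℝ) (n : ℕ) : ∃ P : Matrix (Fin 2) (Fin 2) (Polynomial ℂ),
    ∀ z, cProd E α τ b n z = P.map (Polynomial.evalRingHom z) := by
  induction n with
  | zero => exact ⟨1, fun z => by ext i j; simp [cProd, Matrix.one_apply, apply_ite]⟩
  | succ n ih =>
    obtain ⟨P, hP⟩ := ih
    let Y : Polynomial ℂ := Polynomial.C (ee (n * b)) * Polynomial.X
    let cc : ℂ → Polynomial ℂ := fun c => Polynomial.C c
    refine ⟨!![cc E * Y - cc (τ / 2) * (Y ^ 2 + 1), -(Y - cc (α / 2) * (Y ^ 2 + 1));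
      Y - cc (α / 2) * (Y ^ 2 + 1), 0] * P, fun z => ?_⟩
    rw [Matrix.map_mul, cProd, hP]
    congr 1
    ext i j
    fin_cases i <;> fin_cases j <;> simp [cM, cc, Y]

theorem prod_hh_upper (α b : ℝ) (hα : |α| < 1) (hb : Irrational b) (η : ℝ) (hη : 0 < η) :
    ∃ n0 : ℕ, ∀ n : ℕ, n0 ≤ n → ∀ x : ℝ,
      (∏ j ∈ Finset.range n, hh α (x + j * b)) ≤ Real.exp (n * (Real.log (kap α) + η)) ∧
      Real.exp (n * (Real.log (kap α) - η)) ≤ (∏ j ∈ Finset.range n, hh α (x + j * b)) := by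
  obtain ⟨n0, h⟩ := equidist_hh α b hα hb η hη
  refine ⟨n0, fun n hn x => ?_⟩
  have h1 := abs_le.1 (h n hn x)
  have hpos : 0 < ∏ j ∈ Finset.range n, hh α (x + j * b) :=
    Finset.prod_pos fun j _ => hh_pos _ _ hα
  rw [← Real.log_prod (fun j _ => (hh_pos _ _ hα).ne')] at h1
  rw [← Real.log_le_iff_le_exp hpos, ← Real.le_log_iff_exp_le hpos]
  constructor <;> linarith

theorem exists_root (α T : ℝ) (hα : |α| < 1) (hT : 2 < T) :
    ∃ m, kap α < m ∧ m ^ 2 - T / 2 * m + α ^ 2 / 4 = 0 := by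
  have h : α ^ 2 < 1 := by rw [← sq_abs]; nlinarith [abs_nonneg α]
  refine ⟨(T + √(T ^ 2 - 4 * α ^ 2)) / 4, ?_, ?_⟩
  · unfold kap
    have h2 : √(1 - α ^ 2) = √(4 - 4 * α ^ 2) / 2 := by
      rw [show 4 - 4 * α ^ 2 = 2 ^ 2 * (1 - α ^ 2) by ring, Real.sqrt_mul (by norm_num),
        Real.sqrt_sq (by norm_num)]; ring
    have h3 : √(4 - 4 * α ^ 2) ≤ √(T ^ 2 - 4 * α ^ 2) := Real.sqrt_le_sqrt (by nlinarith)
    rw [h2]; linarith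
  · have := Real.sq_sqrt (show 0 ≤ T ^ 2 - 4 * α ^ 2 by nlinarith)
    nlinarith

theorem maxmod (p : Polynomial ℂ) (r C : ℝ) (hr : 0 < r) (h : ∀ z : ℂ, ‖z‖ = r → ‖p.eval z‖ ≤ C)
    (z : ℂ) (hz : ‖z‖ ≤ r) : ‖p.eval z‖ ≤ C := by
  refine Complex.norm_le_of_forall_mem_frontier_norm_le (U := Metric.ball (0:ℂ) r)
    (f := fun z => p.eval z) Metric.isBounded_ball ?_ ?_ ?_
  · exact p.differentiable.diffContOnCl
  · intro w hw
    rw [frontier_ball _ hr.ne'] at hw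
    exact h w (by simpa using hw)
  · rw [closure_ball _ hr.ne']; simpa using hz

/-- Positivity of the Lyapunov exponent for `|αE + 2λ| > 2`. -/
theorem lyap_pos (E α lam b : ℝ) (hα : |α| < 1) (hα0 : α ≠ 0) (hb : Irrational b)
    (hτ : 2 < |α * E + 2 * lam|) : 0 < lyap (potV α lam) b E := by
  by_contra hcon
  have hl : lyap (potV α lam) b E = 0 := le_antisymm (not_lt.1 hcon) (lyap_nonneg _ _ _)
  set τ := α * E + 2 * lam with hτd
  obtain ⟨m, hm, hroot⟩ := exists_root α |τ| hα hτ
  have hk := kap_gt α hα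
  obtain ⟨μ, hμ, hμr⟩ : ∃ μ : ℝ, |μ| = m ∧ μ ^ 2 + τ / 2 * μ + α ^ 2 / 4 = 0 := by
    rcases abs_cases τ with ⟨h, _⟩ | ⟨h, _⟩
    · refine ⟨-m, by rw [abs_neg, abs_of_pos (by linarith)], ?_⟩
      rw [h] at hroot; linear_combination hroot
    · refine ⟨m, by rw [abs_of_pos (by linarith)], ?_⟩
      rw [h] at hroot; linear_combination hroot
  have hμpos : 0 < |μ| := by rw [hμ]; linarith
  set δ := (Real.log |μ| - Real.log (kap α)) / 4 with hδ
  have hδpos : 0 < δ := by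
    have := Real.log_lt_log (by linarith) hm
    rw [hδ, hμ]; linarith
  obtain ⟨C, hC0, hC⟩ := tProd_upper _ (potV_continuous α lam hα) (potV_periodic α lam) b hb E δ hδpos
  obtain ⟨n0, hn0⟩ := prod_hh_upper α b hα hb δ hδpos
  have hpow : ∀ n, (cProd E α τ b n 0 1 0 * (-2 * μ) + cProd E α τ b n 0 1 1 * α = μ ^ n * α) ∧
      (cProd E α τ b n 0 0 0 * (-2 * μ) + cProd E α τ b n 0 0 1 * α = μ ^ n * (-2 * μ)) := by
    have hr : (μ:ℂ) ^ 2 + τ / 2 * μ + α ^ 2 / 4 = 0 := by exact_mod_cast hμr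
    intro n
    induction n with
    | zero => simp [cProd]
    | succ n ih =>
      obtain ⟨i1, i2⟩ := ih
      simp only [cProd, cM, Matrix.mul_apply, Fin.sum_univ_two, mul_zero, Matrix.of_apply,
        Matrix.cons_val', Matrix.cons_val_zero, Matrix.cons_val_one, Matrix.cons_val_fin_one]
      constructor
      · linear_combination (-(α:ℂ) / 2) * i2
      · linear_combination (-(τ:ℂ) / 2) * i2 + α / 2 * i1 + 2 * μ ^ n * hr
  have key : ∀ n, n0 ≤ n → |α| * |μ| ^ n ≤
      (2 * |μ| + |α|) * (C * Real.exp (n * (Real.log (kap α) + 2 * δ))) := by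
    intro n hn
    obtain ⟨P, hP⟩ := cProd_poly E α τ b n
    have hent : ∀ z i j, cProd E α τ b n z i j = (P i j).eval z := fun z i j => by
      rw [hP]; simp
    have := maxmod (P 1 0 * Polynomial.C (-2 * (μ:ℂ)) + P 1 1 * Polynomial.C (α:ℂ)) 1
      ((2 * |μ| + |α|) * (C * Real.exp (n * (Real.log (kap α) + 2 * δ)))) one_pos ?_ 0 (by simp)
    · simp only [Polynomial.eval_add, Polynomial.eval_mul, Polynomial.eval_C, ← hent] at this
      rw [(hpow n).1] at this
      simpa [mul_comm] using this
    · intro z hz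
      obtain ⟨x, rfl⟩ := exists_ee z hz
      simp only [Polynomial.eval_add, Polynomial.eval_mul, Polynomial.eval_C, ← hent]
      have hb2 : ∀ i j, ‖cProd E α τ b n (ee x) i j‖ ≤
          C * Real.exp (n * (Real.log (kap α) + 2 * δ)) := by
        intro i j
        rw [hτd, cProd_ee_norm _ _ _ _ _ _ hα]
        have h1 := (opNorm2_entry (tProd (potV α lam) b n x E) i j).trans (hC n x)
        rw [hl, zero_add] at h1
        calc _ ≤ Real.exp (n * (Real.log (kap α) + δ)) * (C * Real.exp (n * δ)) :=
            mul_le_mul (hn0 n hn x).1 h1 (norm_nonneg _) (Real.exp_pos _).le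
          _ = _ := by
            rw [mul_left_comm, ← Real.exp_add]; congr 2; ring
      refine (norm_add_le _ _).trans ?_
      have e1 : ‖(-2 * μ : ℂ)‖ = 2 * |μ| := by simp
      have e2 : ‖(α : ℂ)‖ = |α| := by simp
      rw [norm_mul _ (-2 * (μ:ℂ)), norm_mul _ (α:ℂ), e1, e2, add_mul]
      have := hb2 1 0
      have h11 := hb2 1 1
      have := mul_le_mul_of_nonneg_left this (show 0 ≤ 2 * |μ| by positivity)
      have := mul_le_mul_of_nonneg_left h11 (abs_nonneg α)
      linarith
  have hαp : 0 < |α| := abs_pos.2 hα0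
  set D := (2 * |μ| + |α|) * C / |α| with hD
  have key2 : ∀ n : ℕ, n0 ≤ n → Real.exp (n * (2 * δ)) ≤ D := by
    intro n hn
    have h := key n hn
    have e : |μ| ^ n = Real.exp (n * (2 * δ)) * Real.exp (n * (Real.log (kap α) + 2 * δ)) := by
      rw [← Real.exp_add, ← mul_add, show 2 * δ + (Real.log (kap α) + 2 * δ) = Real.log |μ| by
        rw [hδ]; ring, Real.exp_nat_mul, Real.exp_log hμpos]
    rw [e] at h
    rw [hD, le_div_iff₀ hαp]
    have hp := Real.exp_pos (n * (Real.log (kap α) + 2 * δ))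
    refine le_of_mul_le_mul_right ?_ hp
    linarith
  obtain ⟨k, hk⟩ := exists_nat_gt (D / (2 * δ))
  have h := key2 (max n0 k) (le_max_left _ _)
  have h2 := Real.add_one_le_exp (((max n0 k : ℕ) : ℝ) * (2 * δ))
  have h3 : (k:ℝ) ≤ (max n0 k : ℕ) := by exact_mod_cast le_max_right _ _
  rw [div_lt_iff₀ (by positivity)] at hk
  have : (k:ℝ) * (2 * δ) ≤ (max n0 k : ℕ) * (2 * δ) := by gcongr
  linarith

noncomputable def qf (a d : ℝ) (x y : ℂ) : ℝ :=
  (1 - d ^ 2) * (Complex.normSq x + Complex.normSq y) +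
    2 * a * (1 - d) * (x.re * y.re + x.im * y.im)

theorem qf_step (a d : ℝ) (x y : ℂ) : qf a d (-a * x - d * y) x ≤ qf a d x y := by
  unfold qf
  simp only [Complex.normSq_apply, Complex.sub_re, Complex.sub_im, Complex.mul_re, Complex.mul_im,
    Complex.ofReal_re, Complex.ofReal_im, Complex.neg_re, Complex.neg_im]
  have h1 := mul_nonneg (sq_nonneg (1 - d)) (sq_nonneg (a * x.re + (1 + d) * y.re))
  have h2 := mul_nonneg (sq_nonneg (1 - d)) (sq_nonneg (a * x.im + (1 + d) * y.im))
  nlinarith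

theorem qf_lower (a d : ℝ) (hd : d < 1) (x y : ℂ) :
    (1 - d) * (1 + d - |a|) * (Complex.normSq x + Complex.normSq y) ≤ qf a d x y := by
  unfold qf
  simp only [Complex.normSq_apply]
  have h1 : 0 ≤ (1 - d) * ((|a| + a) * ((x.re + y.re) ^ 2 + (x.im + y.im) ^ 2)) := by
    have := neg_abs_le a
    refine mul_nonneg (by linarith) (mul_nonneg (by linarith) (by positivity))
  have h2 : 0 ≤ (1 - d) * ((|a| - a) * ((x.re - y.re) ^ 2 + (x.im - y.im) ^ 2)) := by
    have := le_abs_self a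
    refine mul_nonneg (by linarith) (mul_nonneg (by linarith) (by positivity))
  nlinarith

theorem qf_upper (a d : ℝ) (hd : d < 1) (x y : ℂ) :
    qf a d x y ≤ (1 - d) * (1 + d + |a|) * (Complex.normSq x + Complex.normSq y) := by
  unfold qf
  simp only [Complex.normSq_apply]
  have h1 : 0 ≤ (1 - d) * ((|a| - a) * ((x.re + y.re) ^ 2 + (x.im + y.im) ^ 2)) := by
    have := le_abs_self a
    refine mul_nonneg (by linarith) (mul_nonneg (by linarith) (by positivity))
  have h2 : 0 ≤ (1 - d) * ((|a| + a) * ((x.re - y.re) ^ 2 + (x.im - y.im) ^ 2)) := by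
    have := neg_abs_le a
    refine mul_nonneg (by linarith) (mul_nonneg (by linarith) (by positivity))
  nlinarith

theorem qf_smul (a d : ℝ) (c x y : ℂ) : qf a d (c * x) (c * y) = ‖c‖ ^ 2 * qf a d x y := by
  unfold qf
  rw [← Complex.normSq_eq_norm_sq]
  simp only [Complex.normSq_apply, Complex.mul_re, Complex.mul_im]
  ring

theorem qf_add (a d η : ℝ) (hη : 0 < η) (hd : d < 1) (ha : |a| < 1 + d) (x y p q : ℂ) :
    qf a d (x + p) (y + q) ≤ (1 + η) * qf a d x y + (1 + 1 / η) * qf a d p q := by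
  have h := qf_lower a d hd (η * x - p) (η * y - q)
  have h0 : 0 ≤ qf a d (η * x - p) (η * y - q) := by
    refine le_trans ?_ h
    refine mul_nonneg (mul_nonneg (by linarith) (by linarith)) ?_
    exact add_nonneg (Complex.normSq_nonneg _) (Complex.normSq_nonneg _)
  have e : (1 + η) * qf a d x y + (1 + 1 / η) * qf a d p q - qf a d (x + p) (y + q) =
      (1 / η) * qf a d (η * x - p) (η * y - q) := by
    unfold qf
    simp only [Complex.normSq_apply, Complex.sub_re, Complex.sub_im, Complex.mul_re, Complex.mul_im,
      Complex.ofReal_re, Complex.ofReal_im, Complex.add_re, Complex.add_im]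
    field_simp
    ring
  have : 0 ≤ (1 / η) * qf a d (η * x - p) (η * y - q) := by positivity
  linarith

theorem normSq_lin (c1 c2 x y : ℂ) : Complex.normSq (c1 * x + c2 * y) ≤
    2 * (‖c1‖ ^ 2 + ‖c2‖ ^ 2) * (Complex.normSq x + Complex.normSq y) := by
  simp only [Complex.normSq_eq_norm_sq]
  have h := norm_add_le (c1 * x) (c2 * y)
  rw [norm_mul, norm_mul] at h
  have h2 : ‖c1 * x + c2 * y‖ ^ 2 ≤ (‖c1‖ * ‖x‖ + ‖c2‖ * ‖y‖) ^ 2 := by gcongr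
  have h3 := sq_nonneg (‖c1‖ * ‖x‖ - ‖c2‖ * ‖y‖)
  have h4 : 0 ≤ ‖c1‖ ^ 2 * ‖y‖ ^ 2 := by positivity
  have h5 : 0 ≤ ‖c2‖ ^ 2 * ‖x‖ ^ 2 := by positivity
  nlinarith

theorem pert_bound (a d k' E β β' : ℝ) (s x y : ℂ) (hs : ‖s‖ ≤ 1) :
    Complex.normSq ((E * k' - a * s) * x + (β * k' - d * s) * y) +
        Complex.normSq ((s - β' * k') * x + 0 * y) ≤
      (2 * ((|E * k'| + |a|) ^ 2 + (|β * k'| + |d|) ^ 2) + 2 * ((1 + |β' * k'|) ^ 2)) *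
        (Complex.normSq x + Complex.normSq y) := by
  have hN : 0 ≤ Complex.normSq x + Complex.normSq y :=
    add_nonneg (Complex.normSq_nonneg _) (Complex.normSq_nonneg _)
  have n1 := normSq_lin (E * k' - a * s) (β * k' - d * s) x y
  have n2 := normSq_lin (s - β' * k') 0 x y
  have bd : ∀ p q : ℝ, ‖((p : ℂ) - q * s)‖ ^ 2 ≤ (|p| + |q|) ^ 2 := by
    intro p q
    gcongr
    refine (norm_sub_le _ _).trans ?_
    simp only [norm_mul, Complex.norm_real, Real.norm_eq_abs]
    have : |q| * ‖s‖ ≤ |q| := mul_le_of_le_one_right (abs_nonneg _) hs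
    linarith
  have u1 := bd (E * k') a
  have u2 := bd (β * k') d
  have u3 := bd (β' * k') 1
  push_cast at u1 u2 u3
  rw [one_mul, norm_sub_rev, abs_one, add_comm] at u3
  simp only [norm_zero] at n2
  generalize Complex.normSq x + Complex.normSq y = N at *
  have v1 := mul_le_mul_of_nonneg_right u1 hN
  have v2 := mul_le_mul_of_nonneg_right u2 hN
  have v3 := mul_le_mul_of_nonneg_right u3 hN
  linarith

theorem pert_step (a d k' E β β' η R B : ℝ) (hη : 0 < η) (hd : d < 1) (ha : |a| < 1 + d)
    (hR1 : 1 ≤ R)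
    (hB : B = (2 * ((|E * k'| + |a|) ^ 2 + (|β * k'| + |d|) ^ 2) + 2 * ((1 + |β' * k'|) ^ 2)))
    (hR : (1 + 1 / η) * ((1 - d) * (1 + d + |a|)) * B ≤
      η * (1 + η) * ((1 - d) * (1 + d - |a|)) * R ^ 2) (s x y : ℂ) (hsn : ‖s‖ = 1 / R) :
    qf a d ((E * k' * s - a * (1 + s ^ 2)) * x + (β * k' * s - d * (1 + s ^ 2)) * y)
        ((1 + s ^ 2 - β' * k' * s) * x) ≤ (1 + η) ^ 2 * qf a d x y := by
  have hR0 : 0 < R := by linarith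
  have hs1 : ‖s‖ ≤ 1 := by rw [hsn, div_le_one hR0]; exact hR1
  have hB0 : 0 ≤ B := by rw [hB]; positivity
  have e1 : (E * k' * s - a * (1 + s ^ 2)) * x + (β * k' * s - d * (1 + s ^ 2)) * y =
      (-a * x - d * y) + s * ((E * k' - a * s) * x + (β * k' - d * s) * y) := by ring
  have e2 : (1 + s ^ 2 - β' * k' * s) * x = x + s * ((s - β' * k') * x + 0 * y) := by ring
  rw [e1, e2]
  have hc1p : 0 ≤ (1 - d) * (1 + d + |a|) := mul_nonneg (by linarith) (by have := abs_nonneg a; linarith)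
  have h1 := qf_step a d x y
  have h4 := qf_lower a d hd x y
  have hN : 0 ≤ Complex.normSq x + Complex.normSq y :=
    add_nonneg (Complex.normSq_nonneg _) (Complex.normSq_nonneg _)
  have h2 := qf_upper a d hd ((E * k' - a * s) * x + (β * k' - d * s) * y)
    ((s - β' * k') * x + 0 * y)
  have t1 := pert_bound a d k' E β β' s x y hs1
  rw [← hB] at t1
  refine (qf_add a d η hη hd ha _ _ _ _).trans ?_
  rw [qf_smul, hsn]
  generalize (1 - d) * (1 + d + |a|) = c1 at *
  generalize (1 - d) * (1 + d - |a|) = c0 at *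
  have h3 := h2.trans (mul_le_mul_of_nonneg_left t1 hc1p)
  generalize qf a d ((E * k' - a * s) * x + (β * k' - d * s) * y) ((s - β' * k') * x + 0 * y) = q2 at *
  generalize qf a d (-a * x - d * y) x = q1 at *
  generalize qf a d x y = q at *
  generalize Complex.normSq x + Complex.normSq y = N at *
  clear e1 e2 h2 t1 hB
  have hη1 : 0 ≤ 1 + 1 / η := by positivity
  have h6 : (1 + 1 / η) * ((1 / R) ^ 2 * q2) ≤ η * (1 + η) * q := by
    calc (1 + 1 / η) * ((1 / R) ^ 2 * q2) ≤ (1 + 1 / η) * ((1 / R) ^ 2 * (c1 * (B * N))) := by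
          gcongr
      _ = ((1 + 1 / η) * c1 * B) * ((1 / R) ^ 2 * N) := by ring
      _ ≤ (η * (1 + η) * c0 * R ^ 2) * ((1 / R) ^ 2 * N) := by gcongr
      _ = η * (1 + η) * (c0 * N) := by field_simp
      _ ≤ η * (1 + η) * q := by gcongr
  have h7 : (1 + η) * q1 ≤ (1 + η) * q := by gcongr
  have h8 : (1 + η) ^ 2 * q = (1 + η) * q + η * (1 + η) * q := by ring
  rw [h8]
  exact add_le_add h7 h6

theorem cProd_step (E α τ b k k' β β' a d : ℝ) (hk : k * k' = 1) (hβ : β * β' = 1)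
    (hα : α = 2 * k * β) (hτ : τ = 2 * k * a) (hd : d = β ^ 2) (n : ℕ) (z s y : ℂ)
    (hs : ee (n * b) * z * s = 1) (hy : cProd E α τ b n z 1 0 = -β * y) :
    cProd E α τ b (n + 1) z 0 0 = (k * (ee (n * b) * z) ^ 2) *
      ((E * k' * s - a * (1 + s ^ 2)) * cProd E α τ b n z 0 0 +
        (β * k' * s - d * (1 + s ^ 2)) * y) ∧
    cProd E α τ b (n + 1) z 1 0 = -β * ((k * (ee (n * b) * z) ^ 2) *
      ((1 + s ^ 2 - β' * k' * s) * cProd E α τ b n z 0 0)) := by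
  have hk' : (k : ℂ) * k' = 1 := by exact_mod_cast hk
  have hβ' : (β : ℂ) * β' = 1 := by exact_mod_cast hβ
  simp only [cProd, cM, Matrix.mul_apply, Fin.sum_univ_two, Matrix.of_apply,
    Matrix.cons_val', Matrix.cons_val_zero, Matrix.cons_val_one, Matrix.cons_val_fin_one]
  rw [hy]
  generalize cProd E α τ b n z 0 0 = x
  generalize ee (n * b) * z = ζ at *
  subst hα hτ hd
  push_cast
  constructor
  · linear_combination (-(E * x + β * y) * ζ) * hk' +
      (-(E * x + β * y) * ζ * k * k' + k * (a * x + β ^ 2 * y) * (ζ * s + 1)) * hs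
  · linear_combination (-ζ * x) * hβ' - ζ * x * β * β' * hk' - ζ * x * β * β' * k * k' * hs +
      k * β * x * (ζ * s + 1) * hs

/-- growth of the polynomial cocycle on large circles. -/
theorem cProd_growth (E α τ b : ℝ) (hα : |α| < 1) (hα0 : α ≠ 0) (hτ : |τ| < 2) (η : ℝ)
    (hη : 0 < η) : ∃ R0 : ℝ, 1 < R0 ∧ ∃ C : ℝ, 0 < C ∧ ∀ R, R0 ≤ R → ∀ n : ℕ, ∀ z : ℂ, ‖z‖ = R →
      ‖cProd E α τ b n z 0 0‖ ≤ C * (R ^ 2 * kap α * (1 + η)) ^ n := by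
  have hk := kap_gt α hα
  have hk2 := kap_eq α hα
  generalize kap α = k at *
  have hk0 : 0 < k := by linarith
  obtain ⟨β, hβ⟩ : ∃ β, α = 2 * k * β := ⟨α / (2 * k), by field_simp⟩
  obtain ⟨a, ha⟩ : ∃ a, τ = 2 * k * a := ⟨τ / (2 * k), by field_simp⟩
  obtain ⟨d, hd⟩ : ∃ d, d = β ^ 2 := ⟨_, rfl⟩
  have hβ0 : β ≠ 0 := by rintro rfl; simp at hβ; exact hα0 hβ
  have hdk : k * d = 1 - k := by
    rw [hβ] at hk2
    have : k * (k * d - (1 - k)) = 0 := by rw [hd]; linear_combination hk2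
    have := (mul_eq_zero.1 this).resolve_left hk0.ne'
    linarith
  have hd1 : d < 1 := by nlinarith
  have hd0 : 0 < d := by rw [hd]; positivity
  have ha1 : |a| < 1 + d := by
    rw [ha, abs_mul, abs_of_pos (show 0 < 2 * k by linarith)] at hτ
    nlinarith
  obtain ⟨B, hB⟩ : ∃ B, B = (2 * ((|E * k⁻¹| + |a|) ^ 2 + (|β * k⁻¹| + |d|) ^ 2) +
    2 * ((1 + |β⁻¹ * k⁻¹|) ^ 2)) := ⟨_, rfl⟩
  have hB0 : 0 ≤ B := by rw [hB]; positivity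
  obtain ⟨c0, hc0⟩ : ∃ c0, c0 = (1 - d) * (1 + d - |a|) := ⟨_, rfl⟩
  obtain ⟨c1, hc1⟩ : ∃ c1, c1 = (1 - d) * (1 + d + |a|) := ⟨_, rfl⟩
  have hc0p : 0 < c0 := by rw [hc0]; exact mul_pos (by linarith) (by linarith)
  have hc1p : 0 < c1 := by
    rw [hc1]; exact mul_pos (by linarith) (by have := abs_nonneg a; linarith)
  have hq : 0 < qf a d 1 0 := by
    refine lt_of_lt_of_le ?_ (qf_lower a d hd1 1 0)
    rw [← hc0]; simpa using hc0p
  have hnn : 0 ≤ (1 + 1 / η) * c1 * B / (η * (1 + η) * c0) := by positivity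
  refine ⟨2 + (1 + 1 / η) * c1 * B / (η * (1 + η) * c0), by linarith, √(qf a d 1 0 / c0),
    Real.sqrt_pos.2 (div_pos hq hc0p), ?_⟩
  intro R hR n z hz
  have hR1 : 1 ≤ R := by linarith
  have hcond : (1 + 1 / η) * c1 * B ≤ η * (1 + η) * c0 * R ^ 2 := by
    have h1 : (1 + 1 / η) * c1 * B / (η * (1 + η) * c0) ≤ R := by linarith
    rw [div_le_iff₀ (by positivity)] at h1
    have h2 : R ≤ R ^ 2 := by nlinarith
    have h3 : R * (η * (1 + η) * c0) ≤ R ^ 2 * (η * (1 + η) * c0) := by gcongr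
    linarith
  rw [hc0, hc1] at hcond
  have ind : ∀ n : ℕ, ∃ y, cProd E α τ b n z 1 0 = -β * y ∧ qf a d (cProd E α τ b n z 0 0) y ≤
      ((R ^ 2 * k * (1 + η)) ^ n) ^ 2 * qf a d 1 0 := by
    intro n
    induction n with
    | zero => exact ⟨0, by simp [cProd], by simp [cProd]⟩
    | succ n ih =>
      obtain ⟨y, hy, ih⟩ := ih
      have hζn : ‖ee (n * b) * z‖ = R := by rw [norm_mul, ee_norm, one_mul, hz]
      have hζ0 : ee (n * b) * z ≠ 0 := by rw [← norm_pos_iff, hζn]; linarith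
      obtain ⟨s1, s2⟩ := cProd_step E α τ b k k⁻¹ β β⁻¹ a d (mul_inv_cancel₀ hk0.ne')
        (mul_inv_cancel₀ hβ0) hβ ha hd n z (ee (n * b) * z)⁻¹ y (mul_inv_cancel₀ hζ0) hy
      refine ⟨_, s2, ?_⟩
      rw [s1, qf_smul]
      have := pert_step a d k⁻¹ E β β⁻¹ η R B hη hd1 ha1 hR1 hB hcond (ee (n * b) * z)⁻¹
        (cProd E α τ b n z 0 0) y (by rw [norm_inv, hζn, one_div])
      have hn2 : ‖(k * (ee (n * b) * z) ^ 2 : ℂ)‖ = k * R ^ 2 := by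
        rw [norm_mul, norm_pow, hζn, Complex.norm_real, Real.norm_eq_abs, abs_of_pos hk0]
      rw [hn2]
      have h3 := this.trans (mul_le_mul_of_nonneg_left ih (sq_nonneg (1 + η)))
      refine (mul_le_mul_of_nonneg_left h3 (sq_nonneg (k * R ^ 2))).trans (le_of_eq ?_)
      ring
  obtain ⟨y, _, h1⟩ := ind n
  have h2 := qf_lower a d hd1 (cProd E α τ b n z 0 0) y
  have h3 := Complex.normSq_nonneg y
  rw [← hc0] at h2
  have h4 : ‖cProd E α τ b n z 0 0‖ ^ 2 ≤ ((R ^ 2 * k * (1 + η)) ^ n) ^ 2 * (qf a d 1 0 / c0) := by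
    rw [← Complex.normSq_eq_norm_sq, ← mul_div_assoc, le_div_iff₀ hc0p]
    have h3' := mul_nonneg hc0p.le h3
    rw [mul_add] at h2
    linarith
  have h5 := Real.sqrt_le_sqrt h4
  have hpos : 0 ≤ (R ^ 2 * k * (1 + η)) ^ n := by positivity
  rwa [Real.sqrt_sq (norm_nonneg _), Real.sqrt_mul (by positivity), Real.sqrt_sq hpos, mul_comm] at h5

/-- truncated Jacobi matrix -/
noncomputable def boxM (W : ℤ → ℝ) (M : ℕ) :
    Matrix ↥(Finset.Icc (-(M:ℤ)) M) ↥(Finset.Icc (-(M:ℤ)) M) ℝ := fun i j =>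
  (if (j:ℤ) = i then W i else 0) + (if (j:ℤ) = (i:ℤ) + 1 then 1 else 0)
    + (if (j:ℤ) = (i:ℤ) - 1 then 1 else 0)

lemma boxM_herm (W : ℤ → ℝ) (M : ℕ) : (boxM W M).IsHermitian := by
  ext i j
  simp only [Matrix.conjTranspose_apply, star_trivial, boxM]
  have e1 : (if (i:ℤ) = j then W j else 0) = (if (j:ℤ) = i then W i else 0) := by
    by_cases h : (i:ℤ) = j
    · simp [h]
    · rw [if_neg h, if_neg (fun h' => h h'.symm)]
  have e2 : (if (i:ℤ) = (j:ℤ) + 1 then (1:ℝ) else 0) = (if (j:ℤ) = (i:ℤ) - 1 then 1 else 0) := by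
    congr 1; simp only [eq_iff_iff]; omega
  have e3 : (if (i:ℤ) = (j:ℤ) - 1 then (1:ℝ) else 0) = (if (j:ℤ) = (i:ℤ) + 1 then 1 else 0) := by
    congr 1; simp only [eq_iff_iff]; omega
  rw [e1, e2, e3]; ring

/-- extension by zero -/
noncomputable def extZ {M : ℕ} (f : ↥(Finset.Icc (-(M:ℤ)) M) → ℝ) (n : ℤ) : ℝ :=
  if h : n ∈ Finset.Icc (-(M:ℤ)) M then f ⟨n, h⟩ else 0

lemma sum_ite_extZ {M : ℕ} (f : ↥(Finset.Icc (-(M:ℤ)) M) → ℝ) (m : ℤ) (w : ℝ) :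
    ∑ j : ↥(Finset.Icc (-(M:ℤ)) M), (if (j:ℤ) = m then w else 0) * f j = w * extZ f m := by
  unfold extZ
  split_ifs with h
  · rw [Finset.sum_eq_single ⟨m, h⟩]
    · simp
    · intro j _ hj
      have : (j:ℤ) ≠ m := fun e => hj (Subtype.ext e)
      simp [this]
    · simp
  · simp only [mul_zero]
    apply Finset.sum_eq_zero
    intro j _
    have : (j:ℤ) ≠ m := fun e => h (e ▸ j.2)
    simp [this]

lemma boxM_mulVec (W : ℤ → ℝ) (M : ℕ) (f : ↥(Finset.Icc (-(M:ℤ)) M) → ℝ)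
    (i : ↥(Finset.Icc (-(M:ℤ)) M)) :
    (boxM W M).mulVec f i = W i * extZ f i + extZ f ((i:ℤ)+1) + extZ f ((i:ℤ)-1) := by
  simp only [Matrix.mulVec, dotProduct, boxM, add_mul, Finset.sum_add_distrib, sum_ite_extZ, one_mul]

lemma box_lemma (W : ℤ → ℝ) (lo hi : ℝ) (hW : ∀ n, lo ≤ W n ∧ W n ≤ hi) (M : ℕ) (hM : 1 ≤ M) :
    ∃ (ψ : ↥(Finset.Icc (-(M:ℤ)) M) → ℤ → ℝ) (ev : ↥(Finset.Icc (-(M:ℤ)) M) → ℝ),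
      (∑ j, ψ j 0 ^ 2 = 1) ∧ (∑ j, ev j * ψ j 0 ^ 2 = W 0) ∧ (∀ n, ∑ j, ψ j n ^ 2 ≤ 1) ∧
      (∀ j, ∀ n : ℤ, |n| ≤ M → ψ j (n+1) + ψ j (n-1) + W n * ψ j n = ev j * ψ j n) ∧
      (∀ j, lo - 2 ≤ ev j ∧ ev j ≤ hi + 2) := by
  have hT := boxM_herm W M
  obtain ⟨B, hB⟩ : ∃ B, B = hT.eigenvectorBasis := ⟨_, rfl⟩
  have row : ∀ a c, ∑ j, B j a * B j c = if a = c then 1 else 0 := by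
    intro a c
    have := B.sum_inner_mul_inner (EuclideanSpace.single a (1:ℝ)) (EuclideanSpace.single c (1:ℝ))
    simpa [EuclideanSpace.inner_single_left, EuclideanSpace.inner_single_right,
      Pi.single_apply, eq_comm] using this
  have eig : ∀ j, ∀ i : ↥(Finset.Icc (-(M:ℤ)) M), W i * extZ (B j) i + extZ (B j) ((i:ℤ)+1) + extZ (B j) ((i:ℤ)-1)
      = hT.eigenvalues j * B j i := by
    intro j i
    rw [← boxM_mulVec, hB]
    have := congrFun (hT.mulVec_eigenvectorBasis j) i
    simpa using this
  have ext_in : ∀ j (i : ↥(Finset.Icc (-(M:ℤ)) M)), extZ (B j) i = B j i := by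
    intro j i; unfold extZ; rw [dif_pos i.2]
  have rowe : ∀ n m : ℤ, |n| ≤ M → |m| ≤ M →
      ∑ j, extZ (B j) n * extZ (B j) m = if n = m then 1 else 0 := by
    intro n m hn hm
    have hn' : n ∈ Finset.Icc (-(M:ℤ)) M := by rw [abs_le] at hn; simpa using hn
    have hm' : m ∈ Finset.Icc (-(M:ℤ)) M := by rw [abs_le] at hm; simpa using hm
    have := row ⟨n, hn'⟩ ⟨m, hm'⟩
    simp only [Subtype.mk.injEq] at this
    rw [← this]
    refine Finset.sum_congr rfl fun j _ => ?_
    rw [← ext_in j ⟨n, hn'⟩, ← ext_in j ⟨m, hm'⟩]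
  have hM' : (1:ℤ) ≤ M := by exact_mod_cast hM
  have eige : ∀ j, ∀ n : ℤ, |n| ≤ M → extZ (B j) (n+1) + extZ (B j) (n-1) + W n * extZ (B j) n
      = hT.eigenvalues j * extZ (B j) n := by
    intro j n hn
    have hn' : n ∈ Finset.Icc (-(M:ℤ)) M := by rw [abs_le] at hn; simpa using hn
    have := eig j ⟨n, hn'⟩
    rw [← ext_in j ⟨n, hn'⟩] at this
    simp only at this
    linarith
  refine ⟨fun j => extZ (B j), hT.eigenvalues, ?_, ?_, ?_, eige, ?_⟩
  · have := rowe 0 0 (by simp) (by simp)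
    simpa [sq] using this
  · have e0 := rowe 0 0 (by simp) (by simp)
    have e1 := rowe 0 1 (by simp) (by simpa using hM')
    have e2 := rowe 0 (-1) (by simp) (by simpa using hM')
    rw [if_pos rfl] at e0
    rw [if_neg (by norm_num)] at e1 e2
    calc ∑ j, hT.eigenvalues j * extZ (B j) 0 ^ 2
        = ∑ j, (extZ (B j) 0 * extZ (B j) 1 + extZ (B j) 0 * extZ (B j) (-1)
          + W 0 * (extZ (B j) 0 * extZ (B j) 0)) := by
          refine Finset.sum_congr rfl fun j _ => ?_
          have := eige j 0 (by simp)
          norm_num at this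
          linear_combination (-extZ (B j) 0) * this
      _ = W 0 := by
          rw [Finset.sum_add_distrib, Finset.sum_add_distrib, ← Finset.mul_sum, e0, e1, e2]; ring
  · intro n
    by_cases hn : |n| ≤ M
    · have := rowe n n hn hn
      rw [if_pos rfl] at this
      rw [← this]
      exact (Finset.sum_congr rfl fun j _ => by ring).le
    · have : ∀ j, extZ (B j) n = 0 := by
        intro j; unfold extZ; rw [dif_neg]
        intro h; exact hn (by rw [abs_le]; simpa using h)
      simp [this]
  · intro j
    have : Nonempty ↥(Finset.Icc (-(M:ℤ)) M) := ⟨⟨0, by simp⟩⟩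
    obtain ⟨i, hi'⟩ := Finite.exists_max (fun i => |B j i|)
    have bd : ∀ n, |extZ (B j) n| ≤ |B j i| := by
      intro n; unfold extZ; split_ifs with h
      · exact hi' _
      · simp
    have pos : 0 < |B j i| := by
      rw [abs_pos]
      intro h0
      have : B j = 0 := by
        ext k
        have := hi' k
        rw [h0, abs_zero] at this
        simpa using abs_nonpos_iff.mp this
      have h1 := B.orthonormal.1 j
      rw [this] at h1; simp at h1
    have hd := eig j i
    rw [ext_in] at hd
    have key : |hT.eigenvalues j - W i| * |B j i| ≤ 2 * |B j i| := by
      rw [← abs_mul]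
      have : (hT.eigenvalues j - W i) * B j i = extZ (B j) ((i:ℤ)+1) + extZ (B j) ((i:ℤ)-1) := by
        linear_combination -hd
      rw [this]
      refine (abs_add_le _ _).trans ?_
      linarith [bd ((i:ℤ)+1), bd ((i:ℤ)-1)]
    have k2 := le_of_mul_le_mul_right key pos
    rw [abs_le] at k2
    have := hW i
    constructor <;> linarith

lemma schnol_fin (W : ℤ → ℝ) (lo hi : ℝ) (hW : ∀ n, lo ≤ W n ∧ W n ≤ hi) (p e0 : ℝ)
    (hp : p = 1 ∨ p = -1) (he : e0 < p * W 0) (k : ℕ)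
    (hk : (|lo| + |hi| + 2 - e0) * (6 / ((k:ℝ)+1)) < p * W 0 - e0) (K : ℕ) :
    ∃ E, lo - 2 ≤ E ∧ E ≤ hi + 2 ∧ e0 ≤ p * E ∧ ∃ v : ℤ → ℝ, v 0 = 1 ∧
      (∀ n : ℤ, |n| < K → v (n+1) + v (n-1) + W n * v n = E * v n) ∧
      ∀ N ∈ Finset.Ioo k K, ∀ n ∈ Finset.Icc (-(N:ℤ)) N, |v n| ≤ (N:ℝ)^2 := by
  obtain ⟨ψ, ev, ha, hb, hc, hd, hE⟩ := box_lemma W lo hi hW (K+1) (by omega)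
  by_contra hcon
  push Not at hcon
  have hpE : ∀ E, lo - 2 ≤ E → E ≤ hi + 2 → p * E ≤ |lo| + |hi| + 2 := by
    intro E h1 h2
    have a1 := neg_abs_le lo
    have a2 := le_abs_self hi
    have a3 := abs_nonneg lo
    have a4 := abs_nonneg hi
    rcases hp with rfl | rfl <;> linarith
  have hpos : 0 < |lo| + |hi| + 2 - e0 := by
    have := hpE (W 0) (by linarith [(hW 0).1]) (by linarith [(hW 0).2]); linarith
  have S0 : ∀ j, 0 ≤ ∑ N ∈ Finset.Ioo k K, ∑ n ∈ Finset.Icc (-(N:ℤ)) N, ψ j n ^ 2 / (N:ℝ)^4 :=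
    fun j => Finset.sum_nonneg fun N _ => Finset.sum_nonneg fun n _ => by positivity
  have main : ∀ j, (p * ev j - e0) * ψ j 0 ^ 2 ≤ (|lo| + |hi| + 2 - e0) *
      ∑ N ∈ Finset.Ioo k K, ∑ n ∈ Finset.Icc (-(N:ℤ)) N, ψ j n ^ 2 / (N:ℝ)^4 := by
    intro j
    by_cases hg : e0 ≤ p * ev j
    · have h1 : ψ j 0 ^ 2 ≤ ∑ N ∈ Finset.Ioo k K, ∑ n ∈ Finset.Icc (-(N:ℤ)) N,
          ψ j n ^ 2 / (N:ℝ)^4 := by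
        by_cases h0 : ψ j 0 = 0
        · rw [h0]; simpa using S0 j
        obtain ⟨N, hN, n, hn, hlt⟩ := hcon (ev j) (hE j).1 (hE j).2 hg (fun n => ψ j n / ψ j 0)
          (div_self h0) (by
            intro n hn
            have := hd j n (by push_cast; omega)
            field_simp
            linarith)
        have hNpos : (0:ℝ) < N := by
          have := (Finset.mem_Ioo.mp hN).1
          exact_mod_cast (by omega : 0 < N)
        refine le_trans ?_ (Finset.single_le_sum (f := fun N : ℕ => ∑ n ∈ Finset.Icc (-(N:ℤ)) N,
          ψ j n ^ 2 / (N:ℝ)^4) (fun N _ => Finset.sum_nonneg fun n _ => by positivity) hN)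
        refine le_trans ?_ (Finset.single_le_sum (f := fun n : ℤ => ψ j n ^ 2 / (N:ℝ)^4)
          (fun n _ => by positivity) hn)
        try simp only at hlt
        rw [le_div_iff₀ (by positivity)]
        rw [abs_div, lt_div_iff₀ (abs_pos.mpr h0)] at hlt
        have := mul_self_le_mul_self (by positivity) hlt.le
        rw [← sq_abs (ψ j 0), ← sq_abs (ψ j n)]
        nlinarith [this]
      have h2 := hpE (ev j) (hE j).1 (hE j).2
      calc (p * ev j - e0) * ψ j 0 ^ 2 ≤ (|lo| + |hi| + 2 - e0) * ψ j 0 ^ 2 := by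
            gcongr
        _ ≤ _ := by gcongr
    · push Not at hg
      have h1 : (p * ev j - e0) * ψ j 0 ^ 2 ≤ 0 :=
        mul_nonpos_of_nonpos_of_nonneg (by linarith) (sq_nonneg _)
      have h2 := mul_nonneg hpos.le (S0 j)
      linarith
  have tot := Finset.sum_le_sum (s := Finset.univ) fun j _ => main j
  have L : ∑ j, (p * ev j - e0) * ψ j 0 ^ 2 = p * W 0 - e0 := by
    have : ∀ j, (p * ev j - e0) * ψ j 0 ^ 2 = p * (ev j * ψ j 0 ^ 2) - e0 * ψ j 0 ^ 2 := by
      intro j; ring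
    simp_rw [this]
    rw [Finset.sum_sub_distrib, ← Finset.mul_sum, ← Finset.mul_sum, ha, hb]; ring
  have R : ∑ j, ∑ N ∈ Finset.Ioo k K, ∑ n ∈ Finset.Icc (-(N:ℤ)) N, ψ j n ^ 2 / (N:ℝ)^4
      ≤ 6 / ((k:ℝ)+1) := by
    rw [Finset.sum_comm]
    have step : ∀ N ∈ Finset.Ioo k K, ∑ j, ∑ n ∈ Finset.Icc (-(N:ℤ)) N, ψ j n ^ 2 / (N:ℝ)^4
        ≤ 3 * ((N:ℝ)^2)⁻¹ := by
      intro N hN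
      have hNpos : (1:ℝ) ≤ N := by
        have := (Finset.mem_Ioo.mp hN).1
        exact_mod_cast (by omega : 1 ≤ N)
      rw [Finset.sum_comm]
      have : ∀ n ∈ Finset.Icc (-(N:ℤ)) N, ∑ j, ψ j n ^ 2 / (N:ℝ)^4 ≤ 1 / (N:ℝ)^4 := by
        intro n _
        rw [← Finset.sum_div]
        have := hc n
        gcongr
      refine (Finset.sum_le_sum this).trans ?_
      rw [Finset.sum_const, nsmul_eq_mul, Int.card_Icc]
      have e : (((N:ℤ) + 1 - -(N:ℤ)).toNat : ℝ) = 2 * N + 1 := by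
        have : ((N:ℤ) + 1 - -(N:ℤ)).toNat = 2 * N + 1 := by omega
        rw [this]; push_cast; ring
      rw [e, mul_one_div, div_le_iff₀ (by positivity)]
      have : 3 * ((N:ℝ)^2)⁻¹ * (N:ℝ)^4 = 3 * N^2 := by field_simp
      rw [this]; nlinarith
    refine (Finset.sum_le_sum step).trans ?_
    rw [← Finset.mul_sum]
    have := sum_Ioo_inv_sq_le (α := ℝ) k K
    calc 3 * ∑ i ∈ Finset.Ioo k K, ((i:ℝ)^2)⁻¹ ≤ 3 * (2 / ((k:ℝ)+1)) := by gcongr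
      _ = 6 / ((k:ℝ)+1) := by ring
  rw [L, ← Finset.mul_sum] at tot
  have := mul_le_mul_of_nonneg_left R hpos.le
  linarith

lemma schnol (W : ℤ → ℝ) (lo hi : ℝ) (hW : ∀ n, lo ≤ W n ∧ W n ≤ hi) (p e0 : ℝ)
    (hp : p = 1 ∨ p = -1) (he : e0 < p * W 0) :
    ∃ E, lo - 2 ≤ E ∧ E ≤ hi + 2 ∧ e0 ≤ p * E ∧ ∃ u : ℤ → ℝ, u 0 = 1 ∧
      (∀ n : ℤ, u (n+1) + u (n-1) + W n * u n = E * u n) ∧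
      ∃ k : ℕ, ∀ n : ℤ, |u n| ≤ ((k:ℝ) + |(n:ℝ)|)^2 := by
  obtain ⟨k, hk⟩ : ∃ k : ℕ, (|lo| + |hi| + 2 - e0) * (6 / ((k:ℝ)+1)) < p * W 0 - e0 := by
    have : Filter.Tendsto (fun k : ℕ => (|lo| + |hi| + 2 - e0) * (6 * (1 / ((k:ℝ)+1))))
        Filter.atTop (nhds ((|lo| + |hi| + 2 - e0) * (6 * 0))) :=
      (tendsto_one_div_add_atTop_nhds_zero_nat.const_mul _).const_mul _
    obtain ⟨k, hk⟩ := ((tendsto_order.mp this).2 (p * W 0 - e0) (by simp; linarith)).exists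
    refine ⟨k, ?_⟩
    have e : (6:ℝ) / ((k:ℝ)+1) = 6 * (1 / ((k:ℝ)+1)) := by ring
    rw [e]; exact hk
  let g : ℤ → ℝ := fun n => (((k+1:ℕ):ℝ) + |(n:ℝ)|)^2
  let Q : ℕ → Set (ℝ × (ℤ → ℝ)) := fun K => {q | (e0 ≤ p * q.1 ∧ q.2 0 = 1 ∧
      ∀ n : ℤ, |n| + 1 < K → q.2 (n+1) + q.2 (n-1) + W n * q.2 n = q.1 * q.2 n)} ∩
      (Set.Icc (lo-2) (hi+2) ×ˢ Set.pi Set.univ (fun n => Set.Icc (-g n) (g n)))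
  have hcomp : IsCompact (Set.Icc (lo-2) (hi+2) ×ˢ Set.pi Set.univ (fun n => Set.Icc (-g n) (g n))) :=
    isCompact_Icc.prod (isCompact_univ_pi fun n => isCompact_Icc)
  have hcl : ∀ K : ℕ, IsClosed {q : ℝ × (ℤ → ℝ) | (e0 ≤ p * q.1 ∧ q.2 0 = 1 ∧
      ∀ n : ℤ, |n| + 1 < K → q.2 (n+1) + q.2 (n-1) + W n * q.2 n = q.1 * q.2 n)} := by
    intro K
    refine IsClosed.and (isClosed_le (by fun_prop) (by fun_prop)) (IsClosed.and
      (isClosed_eq (by fun_prop) (by fun_prop)) ?_)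
    simp only [Set.ofPred_forall]
    refine isClosed_iInter fun n => isClosed_iInter fun _ => isClosed_eq (by fun_prop) (by fun_prop)
  have hne : ∀ K, (Q K).Nonempty := by
    intro K
    obtain ⟨E, h1, h2, h3, v, v0, hv, hb⟩ := schnol_fin W lo hi hW p e0 hp he k hk (K + k + 5)
    refine ⟨(E, fun n => if |n| < K + 1 then v n else 0), ⟨h3, ?_, ?_⟩, ⟨h1, h2⟩, ?_⟩
    · simp only [abs_zero]; rw [if_pos (by positivity)]; exact v0
    · intro n hn
      simp only
      have a1 := abs_add_le n 1
      have a2 := abs_sub n 1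
      rw [abs_one] at a1 a2
      rw [if_pos (by omega), if_pos (by omega), if_pos (by omega)]
      exact hv n (by push_cast; omega)
    · intro n _
      refine abs_le.mp ?_
      simp only
      split_ifs with h
      · have hab := Int.abs_eq_natAbs n
        have := hb (k + 1 + n.natAbs) (by rw [Finset.mem_Ioo]; omega) n
          (by rw [Finset.mem_Icc]; omega)
        refine this.trans (le_of_eq ?_)
        simp only [g]
        congr 1
        push_cast
        rw [Nat.cast_natAbs]; push_cast; ring
      · rw [abs_zero]; positivity
  obtain ⟨q, hq⟩ := IsCompact.nonempty_iInter_of_sequence_nonempty_isCompact_isClosed Q (by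
      intro K q hq
      refine ⟨⟨hq.1.1, hq.1.2.1, fun n hn => hq.1.2.2 n (by push_cast; omega)⟩, hq.2⟩) hne
    (hcomp.inter_left (hcl 0)) (fun K => (hcl K).inter hcomp.isClosed)
  rw [Set.mem_iInter] at hq
  refine ⟨q.1, (hq 0).2.1.1, (hq 0).2.1.2, (hq 0).1.1, q.2, (hq 0).1.2.1, ?_, k + 1, ?_⟩
  · intro n
    exact (hq (n.natAbs + 2)).1.2.2 n (by push_cast; omega)
  · intro n
    exact abs_le.mpr ((hq 0).2.2 n (Set.mem_univ _))

lemma periodic_unif (V : ℝ → ℝ) (cV : Continuous V) (pV : Function.Periodic V 1) (ε : ℝ)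
    (hε : 0 < ε) : ∃ δ > 0, ∀ x y, |x - y| < δ → |V x - V y| < ε := by
  have := (isCompact_Icc (a := (-1:ℝ)) (b := 2)).uniformContinuousOn_of_continuous cV.continuousOn
  rw [Metric.uniformContinuousOn_iff] at this
  obtain ⟨δ, hδ, h⟩ := this ε hε
  refine ⟨min δ 1, by positivity, fun x y hxy => ?_⟩
  have h1 := Int.floor_le x
  have h2 := Int.lt_floor_add_one x
  have h3 := abs_lt.mp (hxy.trans_le (min_le_right _ _))
  have e1 : V (x - ⌊x⌋) = V x := by simpa using pV.sub_int_mul_eq (x := x) ⌊x⌋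
  have e2 : V (y - ⌊x⌋) = V y := by simpa using pV.sub_int_mul_eq (x := y) ⌊x⌋
  have := h (x - ⌊x⌋) ⟨by linarith, by linarith⟩ (y - ⌊x⌋) ⟨by linarith, by linarith⟩ (by
    rw [Real.dist_eq]
    have : x - ⌊x⌋ - (y - ⌊x⌋) = x - y := by ring
    rw [this]; exact hxy.trans_le (min_le_left _ _))
  rwa [Real.dist_eq, e1, e2] at this

lemma approx_shift (b : ℝ) (hb : Irrational b) (t δ : ℝ) (hδ : 0 < δ) :
    ∃ m l : ℤ, |(m:ℝ) * b + l - t| < δ := by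
  have hd : Dense ((AddSubgroup.closure {b, 1} : AddSubgroup ℝ) : Set ℝ) := by
    rw [dense_addSubgroupClosure_pair_iff]; simpa using hb
  obtain ⟨y, hy, h⟩ := hd.exists_dist_lt t hδ
  rw [SetLike.mem_coe, AddSubgroup.mem_closure_pair] at hy
  obtain ⟨m, l, rfl⟩ := hy
  refine ⟨m, l, ?_⟩
  rw [dist_comm, Real.dist_eq] at h
  simpa using h

lemma lp_shift_exists (r : ℕ) (m : ℤ) (f : ℤ → ℂ) (hf : ∀ n, n ∉ Finset.Icc (-(r:ℤ)) r → f n = 0) :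
    ∃ φ : lp (fun _ : ℤ => ℂ) 2, ∀ k, (φ : ∀ _ : ℤ, ℂ) k = f (k - m) := by
  have : Memℓp (fun k : ℤ => f (k - m)) 2 := by
    apply memℓp_gen
    apply summable_of_ne_finset_zero (s := Finset.Icc (-(r:ℤ) + m) (r + m))
    intro k hk
    rw [hf (k - m) (by simp only [Finset.mem_Icc] at hk ⊢; omega)]
    simp
  exact ⟨⟨_, this⟩, fun k => rfl⟩

lemma lp_shift_norm (r : ℕ) (m : ℤ) (f : ℤ → ℂ) (hf : ∀ n, n ∉ Finset.Icc (-(r:ℤ)) r → f n = 0)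
    (φ : lp (fun _ : ℤ => ℂ) 2) (hφ : ∀ k, (φ : ∀ _ : ℤ, ℂ) k = f (k - m)) :
    ‖φ‖^2 = ∑ n ∈ Finset.Icc (-(r:ℤ)) r, ‖f n‖^2 := by
  have := lp.norm_rpow_eq_tsum (p := 2) (by simp) φ
  simp only [ENNReal.toReal_ofNat, Real.rpow_ofNat, hφ] at this
  rw [this]
  have e := (Equiv.subRight m).tsum_eq (fun n => ‖f n‖^2)
  simp only [Equiv.subRight_apply] at e
  rw [e]
  apply tsum_eq_sum
  intro n hn; rw [hf n hn]; simp

lemma sum_Icc_symm (f : ℤ → ℝ) (r : ℕ) :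
    ∑ n ∈ Finset.Icc (-((r+1:ℕ):ℤ)) ((r+1:ℕ):ℤ), f n =
      ∑ n ∈ Finset.Icc (-(r:ℤ)) r, f n + f (r+1) + f (-(r+1)) := by
  have e : Finset.Icc (-((r+1:ℕ):ℤ)) ((r+1:ℕ):ℤ) =
      insert ((r:ℤ)+1) (insert (-((r:ℤ)+1)) (Finset.Icc (-(r:ℤ)) r)) := by
    ext n; simp only [Finset.mem_Icc, Finset.mem_insert]; push_cast; omega
  rw [e, Finset.sum_insert, Finset.sum_insert]
  · ring
  · simp
  · simp only [Finset.mem_insert, Finset.mem_Icc]; omega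

/-- truncation -/
noncomputable def trc (u : ℤ → ℝ) (r : ℕ) (n : ℤ) : ℝ := if n ∈ Finset.Icc (-(r:ℤ)) r then u n else 0

lemma trc_in (u : ℤ → ℝ) (r : ℕ) (n : ℤ) (h : -(r:ℤ) ≤ n ∧ n ≤ r) : trc u r n = u n := by
  unfold trc; rw [if_pos (Finset.mem_Icc.mpr h)]
lemma trc_out (u : ℤ → ℝ) (r : ℕ) (n : ℤ) (h : n < -(r:ℤ) ∨ r < n) : trc u r n = 0 := by
  unfold trc; rw [if_neg]; simp only [Finset.mem_Icc]; omega

lemma trc_defect (W u : ℤ → ℝ) (E : ℝ)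
    (hu : ∀ n : ℤ, u (n+1) + u (n-1) + W n * u n = E * u n) (s : ℕ) :
    ∑ n ∈ Finset.Icc (-((s+2:ℕ):ℤ)) ((s+2:ℕ):ℤ),
      (trc u (s+1) (n+1) + trc u (s+1) (n-1) + (W n - E) * trc u (s+1) n)^2 =
    ∑ n ∈ Finset.Icc (-((s+2:ℕ):ℤ)) ((s+2:ℕ):ℤ), u n ^ 2 - ∑ n ∈ Finset.Icc (-(s:ℤ)) s, u n ^ 2 := by
  rw [sum_Icc_symm, sum_Icc_symm, sum_Icc_symm, sum_Icc_symm]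
  have h0 : ∑ n ∈ Finset.Icc (-(s:ℤ)) s,
      (trc u (s+1) (n+1) + trc u (s+1) (n-1) + (W n - E) * trc u (s+1) n)^2 = 0 := by
    apply Finset.sum_eq_zero
    intro n hn
    rw [Finset.mem_Icc] at hn
    rw [trc_in _ _ _ (by push_cast; omega), trc_in _ _ _ (by push_cast; omega),
      trc_in _ _ _ (by push_cast; omega)]
    have := hu n
    rw [pow_eq_zero_iff (by norm_num)]; linarith
  rw [h0]
  push_cast
  have a1 := hu (s+1)
  have a2 := hu (-(s+1))
  rw [trc_out _ _ ((s:ℤ)+1+1) (by push_cast; omega), trc_in _ _ ((s:ℤ)+1-1) (by push_cast; omega),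
    trc_in _ _ ((s:ℤ)+1) (by push_cast; omega),
    trc_in _ _ (-((s:ℤ)+1)+1) (by push_cast; omega),
    trc_out _ _ (-((s:ℤ)+1)-1) (by push_cast; omega),
    trc_in _ _ (-((s:ℤ)+1)) (by push_cast; omega),
    trc_out _ _ ((s:ℤ)+1+1+1) (by push_cast; omega),
    trc_in _ _ ((s:ℤ)+1+1-1) (by push_cast; omega),
    trc_in _ _ (-((s:ℤ)+1+1)+1) (by push_cast; omega),
    trc_out _ _ (-((s:ℤ)+1+1)-1) (by push_cast; omega),
    trc_out _ _ (-((s:ℤ)+1+1)) (by push_cast; omega)]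
  have b1 : u ((s:ℤ)+1-1) + (W (s+1) - E) * u (s+1) = - u (s+1+1) := by linarith
  have b2 : u (-((s:ℤ)+1)+1) + (W (-(s+1)) - E) * u (-(s+1)) = - u (-(s+1+1)) := by
    have : -((s:ℤ)+1+1) = -(s+1) - 1 := by ring
    rw [this]; linarith
  have c1 : u ((s:ℤ)+1+1-1) = u (s+1) := by congr 1; omega
  have c2 : u (-((s:ℤ)+1+1)+1) = u (-(s+1)) := by congr 1
  simp only [c1, c2, zero_add, b1, add_zero, b2, mul_zero]
  ring

lemma spectrum_lower (H : lp (fun _ : ℤ => ℂ) 2 →L[ℂ] lp (fun _ : ℤ => ℂ) 2) (E : ℂ)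
    (h : E ∉ spectrum ℂ H) : ∃ c > 0, ∀ φ, c * ‖φ‖ ≤ ‖H φ - E • φ‖ := by
  rw [spectrum.mem_iff, not_not] at h
  obtain ⟨U, hU⟩ := h
  refine ⟨1 / (‖(↑U⁻¹ : lp (fun _ : ℤ => ℂ) 2 →L[ℂ] lp (fun _ : ℤ => ℂ) 2)‖ + 1), by positivity, fun φ => ?_⟩
  have e : (↑U⁻¹ : lp (fun _ : ℤ => ℂ) 2 →L[ℂ] lp (fun _ : ℤ => ℂ) 2) ((U : lp (fun _ : ℤ => ℂ) 2 →L[ℂ] lp (fun _ : ℤ => ℂ) 2) φ) = φ := by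
    have := U.inv_mul
    rw [← mul_apply_eq_comp, this]; rfl
  have e2 : (U : lp (fun _ : ℤ => ℂ) 2 →L[ℂ] lp (fun _ : ℤ => ℂ) 2) φ = -(H φ - E • φ) := by
    rw [hU, Algebra.algebraMap_eq_smul_one]; simp
  have n1 : ‖φ‖ ≤ ‖(↑U⁻¹ : lp (fun _ : ℤ => ℂ) 2 →L[ℂ] lp (fun _ : ℤ => ℂ) 2)‖ * ‖H φ - E • φ‖ := by
    conv_lhs => rw [← e]
    refine (ContinuousLinearMap.le_opNorm _ _).trans ?_
    rw [e2, norm_neg]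
  rw [div_mul_eq_mul_div, one_mul, div_le_iff₀ (by positivity)]
  nlinarith [norm_nonneg (H φ - E • φ)]

lemma weyl_growth (V : ℝ → ℝ) (cV : Continuous V) (pV : Function.Periodic V 1) (b θ : ℝ)
    (hb : Irrational b) (H : lp (fun _ : ℤ => ℂ) 2 →L[ℂ] lp (fun _ : ℤ => ℂ) 2)
    (hH : IsSchrodingerOp V b θ H) (E x : ℝ) (u : ℤ → ℝ)
    (hu : ∀ n : ℤ, u (n+1) + u (n-1) + V (x + n * b) * u n = E * u n)
    (c : ℝ) (hc : 0 < c) (hlow : ∀ φ, c * ‖φ‖ ≤ ‖H φ - (E:ℂ) • φ‖) (s : ℕ) :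
    c^2/4 * ∑ n ∈ Finset.Icc (-((s+1:ℕ):ℤ)) ((s+1:ℕ):ℤ), u n ^ 2 ≤
      ∑ n ∈ Finset.Icc (-((s+2:ℕ):ℤ)) ((s+2:ℕ):ℤ), u n ^ 2 - ∑ n ∈ Finset.Icc (-(s:ℤ)) s, u n ^ 2 := by
  obtain ⟨δ, hδ, hV⟩ := periodic_unif V cV pV (c/2) (by positivity)
  obtain ⟨m, l, hml⟩ := approx_shift b hb (x - θ) δ hδ
  have hclose : ∀ n : ℤ, |V (((n+m:ℤ):ℝ) * b + θ) - V (x + n * b)| < c/2 := by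
    intro n
    have e : V (((n+m:ℤ):ℝ) * b + θ) = V (((n+m:ℤ):ℝ) * b + θ + l) := by
      simpa using (pV.int_mul l (((n+m:ℤ):ℝ) * b + θ)).symm
    rw [e]
    apply hV
    refine lt_of_eq_of_lt ?_ hml
    congr 1; push_cast; ring
  have supp : ∀ r : ℕ, s + 1 ≤ r → ∀ n, n ∉ Finset.Icc (-(r:ℤ)) r → ((trc u (s+1) n : ℝ):ℂ) = 0 := by
    intro r hr n hn
    rw [trc_out]; · simp
    rw [Finset.mem_Icc] at hn; push_cast; omega
  obtain ⟨φ, hφ⟩ := lp_shift_exists (s+1) m (fun n => ((trc u (s+1) n : ℝ):ℂ)) (supp _ le_rfl)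
  have n1 := lp_shift_norm (s+1) m _ (supp _ le_rfl) φ hφ
  have n1' := lp_shift_norm (s+2) m _ (supp (s+2) (by omega)) φ hφ
  have n2 := lp_shift_norm (s+2) m (fun n => (((trc u (s+1) (n+1) + trc u (s+1) (n-1)
      + (V (x+n*b) - E) * trc u (s+1) n) + (V (((n+m:ℤ):ℝ) * b + θ) - V (x + n * b)) * trc u (s+1) n : ℝ):ℂ))
      (by
        intro n hn
        rw [Finset.mem_Icc] at hn
        push_cast at hn
        rw [trc_out _ _ n (by push_cast; omega), trc_out _ _ (n+1) (by push_cast; omega),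
          trc_out _ _ (n-1) (by push_cast; omega)]
        simp) (H φ - (E:ℂ) • φ) (by
        intro k
        have h1 := hH φ k
        rw [lp.coeFn_sub, lp.coeFn_smul, Pi.sub_apply, Pi.smul_apply, h1, hφ, hφ, hφ]
        have e1 : k + 1 - m = k - m + 1 := by ring
        have e2 : k - 1 - m = k - m - 1 := by ring
        have e3 : k - m + m = k := by ring
        rw [e1, e2, e3]
        push_cast
        rw [smul_eq_mul]
        ring)
  simp only [Complex.norm_real, Real.norm_eq_abs, sq_abs] at n1 n1' n2
  have hS : ∑ n ∈ Finset.Icc (-((s+1:ℕ):ℤ)) ((s+1:ℕ):ℤ), trc u (s+1) n ^ 2 =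
      ∑ n ∈ Finset.Icc (-((s+1:ℕ):ℤ)) ((s+1:ℕ):ℤ), u n ^ 2 := by
    refine Finset.sum_congr rfl fun n hn => ?_
    rw [trc_in _ _ _ (Finset.mem_Icc.mp hn)]
  have hdef := trc_defect (fun n => V (x + n*b)) u E hu s
  have bound : ‖H φ - (E:ℂ) • φ‖^2 ≤ 2 * (∑ n ∈ Finset.Icc (-((s+2:ℕ):ℤ)) ((s+2:ℕ):ℤ),
      (trc u (s+1) (n+1) + trc u (s+1) (n-1) + (V (x+n*b) - E) * trc u (s+1) n)^2)
      + 2 * (c/2)^2 * ‖φ‖^2 := by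
    rw [n2, n1', Finset.mul_sum, Finset.mul_sum, ← Finset.sum_add_distrib]
    refine Finset.sum_le_sum fun n _ => ?_
    have h1 := hclose n
    have h2 : (V (((n+m:ℤ):ℝ) * b + θ) - V (x + n * b))^2 ≤ (c/2)^2 := by
      rw [sq_le_sq, abs_of_pos (by positivity : 0 < c/2)]; exact h1.le
    generalize V (((n+m:ℤ):ℝ) * b + θ) - V (x + n * b) = d at h2
    generalize trc u (s+1) (n+1) + trc u (s+1) (n-1) + (V (x+n*b) - E) * trc u (s+1) n = D
    generalize trc u (s+1) n = t
    nlinarith [sq_nonneg (D - d * t), mul_le_mul_of_nonneg_right h2 (sq_nonneg t)]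
  have low : c^2 * ‖φ‖^2 ≤ ‖H φ - (E:ℂ) • φ‖^2 := by
    rw [← mul_pow]; exact pow_le_pow_left₀ (by positivity) (hlow φ) 2
  rw [hdef] at bound
  rw [n1, hS] at bound low
  linarith

lemma weyl (V : ℝ → ℝ) (cV : Continuous V) (pV : Function.Periodic V 1) (b θ : ℝ)
    (hb : Irrational b) (H : lp (fun _ : ℤ => ℂ) 2 →L[ℂ] lp (fun _ : ℤ => ℂ) 2)
    (hH : IsSchrodingerOp V b θ H) (E x : ℝ) (u : ℤ → ℝ) (u0 : u 0 = 1)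
    (hu : ∀ n : ℤ, u (n+1) + u (n-1) + V (x + n * b) * u n = E * u n)
    (k : ℕ) (hk : ∀ n : ℤ, |u n| ≤ ((k:ℝ) + |(n:ℝ)|)^2) : (E:ℂ) ∈ spectrum ℂ H := by
  by_contra hE
  obtain ⟨c, hc, hlow⟩ := spectrum_lower H E hE
  have gr := weyl_growth V cV pV b θ hb H hH E x u hu c hc hlow
  obtain ⟨S, hS⟩ : ∃ S : ℕ → ℝ, S = fun s : ℕ => ∑ n ∈ Finset.Icc (-(s:ℤ)) s, u n ^ 2 := ⟨_, rfl⟩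
  have gr' : ∀ s, c^2/4 * S (s+1) ≤ S (s+2) - S s := by intro s; rw [hS]; exact gr s
  have mono : ∀ s, S s ≤ S (s+1) := by
    intro s
    rw [hS]; simp only
    rw [sum_Icc_symm]; nlinarith [sq_nonneg (u (s+1)), sq_nonneg (u (-(s+1)))]
  have S0 : S 0 = 1 := by rw [hS]; simp [u0]
  have ex : ∀ j, (1 + c^2/4)^j ≤ S (2*j) := by
    intro j
    induction j with
    | zero => simp [S0]
    | succ j ih =>
      have h1 := gr' (2*j)
      have h2 := mono (2*j)
      have : 2 * (j+1) = 2*j+2 := by ring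
      rw [this, pow_succ]
      nlinarith [sq_nonneg c, mul_le_mul_of_nonneg_left h2 (by positivity : 0 ≤ c^2/4),
        mul_le_mul_of_nonneg_right ih (by positivity : 0 ≤ 1 + c^2/4)]
  have up : ∀ s : ℕ, S s ≤ (2*s+1) * ((k:ℝ)+s)^4 := by
    intro s
    rw [hS]; simp only
    have : ∀ n ∈ Finset.Icc (-(s:ℤ)) s, u n ^ 2 ≤ ((k:ℝ)+s)^4 := by
      intro n hn
      rw [Finset.mem_Icc] at hn
      have h1 : |(n:ℝ)| ≤ s := by
        rw [abs_le]; constructor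
        · exact_mod_cast hn.1
        · exact_mod_cast hn.2
      rw [← sq_abs]
      calc |u n|^2 ≤ (((k:ℝ) + |(n:ℝ)|)^2)^2 := by gcongr; exact hk n
        _ ≤ (((k:ℝ) + s)^2)^2 := by gcongr
        _ = _ := by ring
    refine (Finset.sum_le_sum this).trans ?_
    rw [Finset.sum_const, nsmul_eq_mul, Int.card_Icc]
    have e : (((s:ℤ) + 1 - -(s:ℤ)).toNat : ℝ) = 2 * s + 1 := by
      have : ((s:ℤ) + 1 - -(s:ℤ)).toNat = 2 * s + 1 := by omega
      rw [this]; push_cast; ring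
    rw [e]
  have lim := tendsto_pow_const_div_const_pow_of_one_lt 5 (r := 1 + c^2/4) (by nlinarith [sq_pos_of_pos hc])
  have ev := (tendsto_order.mp lim).2 (1 / (5 * ((k:ℝ)+2)^4)) (by positivity)
  obtain ⟨j, hj, hj1⟩ := (ev.and (Filter.eventually_ge_atTop 1)).exists
  have h1 := (ex j).trans (up (2*j))
  have hj' : (1:ℝ) ≤ j := by exact_mod_cast hj1
  have h2 : (2*((2*j:ℕ):ℝ)+1) * ((k:ℝ)+((2*j:ℕ):ℝ))^4 ≤ (5 * j) * (((k:ℝ)+2) * j)^4 := by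
    push_cast
    have : (k:ℝ) + 2 * j ≤ (k+2) * j := by nlinarith [(Nat.cast_nonneg k : (0:ℝ) ≤ k)]
    gcongr
    linarith
  rw [div_lt_div_iff₀ (by positivity) (by positivity)] at hj
  have e : (5 * (j:ℝ)) * (((k:ℝ)+2) * j)^4 = (j:ℝ)^5 * (5 * ((k:ℝ)+2)^4) := by ring
  rw [e] at h2
  linarith

lemma summable_w : Summable fun j : ℤ => 1 / (1 + (j:ℝ)^2) := by
  have h1 : Summable fun j : ℤ => 1 / (j:ℝ)^2 := Real.summable_one_div_int_pow.mpr (by norm_num)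
  have h2 : Summable fun j : ℤ => if j = 0 then (1:ℝ) else 0 :=
    summable_of_ne_finset_zero (s := {0}) (by intro j hj; rw [if_neg (by simpa using hj)])
  refine Summable.of_nonneg_of_le (fun j => by positivity) (fun j => ?_) (h1.add h2)
  by_cases hj : j = 0
  · simp [hj]
  · have : (0:ℝ) < (j:ℝ)^2 := by positivity
    rw [if_neg hj, add_zero]
    exact one_div_le_one_div_of_le this (by linarith)

lemma nonres_pre (a c b : ℝ) (hac : a < c) : ∃ x ∈ Set.Ioo a c, ∃ c0 > 0, ∀ j k : ℤ,
    c0 * (1 / (1 + (j:ℝ)^2) * (1 / (1 + (k:ℝ)^2))) ≤ |2 * x + j * b + k| := by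
  have hs := summable_w.mul_of_nonneg summable_w (fun j => by positivity) (fun j => by positivity)
  obtain ⟨T, hT⟩ : ∃ T, T = ∑' x : ℤ × ℤ, 1 / (1 + (x.1:ℝ)^2) * (1 / (1 + (x.2:ℝ)^2)) := ⟨_, rfl⟩
  have hT0 : 0 ≤ T := by rw [hT]; exact tsum_nonneg fun x => by positivity
  obtain ⟨c0, hc0⟩ : ∃ c0, c0 = (c - a) / (T + 1) := ⟨_, rfl⟩
  have hca : 0 < c - a := by linarith
  have hc0p : 0 < c0 := by rw [hc0]; positivity
  by_contra hcon
  push Not at hcon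
  have cover : Set.Ioo a c ⊆ ⋃ x : ℤ × ℤ, Set.Ioo
      ((-(x.1 * b) - x.2 - c0 * (1 / (1 + (x.1:ℝ)^2) * (1 / (1 + (x.2:ℝ)^2))))/2)
      ((-(x.1 * b) - x.2 + c0 * (1 / (1 + (x.1:ℝ)^2) * (1 / (1 + (x.2:ℝ)^2))))/2) := by
    intro x hx
    obtain ⟨j, k, h⟩ := hcon x hx c0 hc0p
    rw [Set.mem_iUnion]
    refine ⟨(j,k), ?_⟩
    rw [abs_lt] at h
    simp only
    constructor <;> linarith [h.1, h.2]
  have m1 := (MeasureTheory.measure_mono (μ := MeasureTheory.volume) cover).trans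
    (MeasureTheory.measure_iUnion_le _)
  simp only [Real.volume_Ioo] at m1
  have e : ∀ x : ℤ × ℤ,
      ((-(x.1 * b) - x.2 + c0 * (1 / (1 + (x.1:ℝ)^2) * (1 / (1 + (x.2:ℝ)^2))))/2) -
      ((-(x.1 * b) - x.2 - c0 * (1 / (1 + (x.1:ℝ)^2) * (1 / (1 + (x.2:ℝ)^2))))/2)
      = c0 * (1 / (1 + (x.1:ℝ)^2) * (1 / (1 + (x.2:ℝ)^2))) := by intro x; ring
  simp only [e] at m1
  rw [← ENNReal.ofReal_tsum_of_nonneg (fun x => by positivity) (hs.mul_left c0), tsum_mul_left,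
    ← hT, ENNReal.ofReal_le_ofReal_iff (by positivity), hc0, div_mul_eq_mul_div,
    le_div_iff₀ (by positivity)] at m1
  nlinarith

/-- nonresonant phases -/
lemma nonres (a c b : ℝ) (hac : a < c) : ∃ x ∈ Set.Ioo a c, ∃ c1 > 0, ∀ j k : ℤ,
    c1 / (1 + (j:ℝ)^2)^2 ≤ |2 * x + j * b + k| := by
  obtain ⟨x, hx, c0, hc0, h⟩ := nonres_pre a c b hac
  obtain ⟨D, hD⟩ : ∃ D, D = 1 + 2 * (1 + 2 * |x|)^2 + 2 * b^2 := ⟨_, rfl⟩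
  have hD1 : 0 < D := by rw [hD]; positivity
  refine ⟨x, hx, min 1 (c0 / D), by positivity, fun j k => ?_⟩
  have hj : (1:ℝ) ≤ 1 + (j:ℝ)^2 := by nlinarith [sq_nonneg (j:ℝ)]
  by_cases hbig : 1 ≤ |2 * x + j * b + k|
  · refine le_trans ?_ hbig
    rw [div_le_one (by positivity)]
    exact (min_le_left _ _).trans (one_le_pow₀ hj)
  · push Not at hbig
    refine le_trans ?_ (h j k)
    have hk : 1 + (k:ℝ)^2 ≤ D * (1 + (j:ℝ)^2) := by
      have h1 : |(k:ℝ)| ≤ (1 + 2 * |x|) + |b| * |(j:ℝ)| := by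
        have e : (k:ℝ) = (2 * x + j * b + k) + (-(2*x)) + (-(j * b)) := by ring
        rw [e]
        refine (abs_add_three _ _ _).trans ?_
        rw [abs_neg, abs_neg, abs_mul, abs_mul, abs_two]
        linarith [mul_comm |b| |(j:ℝ)|]
      have h2 : (k:ℝ)^2 ≤ ((1 + 2 * |x|) + |b| * |(j:ℝ)|)^2 := by
        rw [← sq_abs]; gcongr
      have h3 : ((1 + 2 * |x|) + |b| * |(j:ℝ)|)^2 ≤ 2 * (1 + 2 * |x|)^2 + 2 * (b^2 * (j:ℝ)^2) := by
        rw [← sq_abs b, ← sq_abs (j:ℝ), ← mul_pow]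
        nlinarith [sq_nonneg ((1 + 2 * |x|) - |b| * |(j:ℝ)|)]
      rw [hD]
      nlinarith [sq_nonneg (j:ℝ), sq_nonneg b, sq_nonneg (1 + 2 * |x|),
        mul_nonneg (sq_nonneg (1 + 2 * |x|)) (sq_nonneg (j:ℝ))]
    calc min 1 (c0 / D) / (1 + (j:ℝ)^2)^2 ≤ (c0 / D) / (1 + (j:ℝ)^2)^2 := by
          gcongr; exact min_le_right _ _
      _ = c0 * (1 / (1 + (j:ℝ)^2) * (1 / (D * (1 + (j:ℝ)^2)))) := by field_simp
      _ ≤ c0 * (1 / (1 + (j:ℝ)^2) * (1 / (1 + (k:ℝ)^2))) := by gcongr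

lemma ee_int (k : ℤ) (y : ℝ) : ee (y - k) = ee y := by
  simpa using ee_periodic.sub_int_mul_eq (x := y) k

lemma ee_sub_one_norm (y : ℝ) : ‖ee y - 1‖ = 2 * |Real.sin (π * y)| := by
  have := Complex.norm_exp_I_mul_ofReal_sub_one (2 * π * y)
  unfold ee
  rw [mul_comm, this, norm_mul, Real.norm_eq_abs, Real.norm_eq_abs, abs_two]
  congr 3; ring

lemma ee_sub_one_lower (y d : ℝ) (h : ∀ k : ℤ, d ≤ |y - k|) : 4 * d ≤ ‖ee y - 1‖ := by
  rw [← ee_int (round y) y, ee_sub_one_norm]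
  have h1 := h (round y)
  have h2 := abs_sub_round y
  generalize y - round y = t at *
  have h3 : |Real.sin (π * t)| = Real.sin (π * |t|) := by
    have h5 : π * |t| ≤ π := by nlinarith [Real.pi_pos]
    rw [← abs_of_nonneg (Real.sin_nonneg_of_nonneg_of_le_pi (by positivity) h5)]
    rcases abs_cases t with ⟨h, _⟩ | ⟨h, _⟩ <;> rw [h]
    rw [mul_neg, Real.sin_neg, abs_neg]
  rw [h3]
  have h4 := Real.mul_le_sin (x := π * |t|) (by positivity) (by nlinarith [Real.pi_pos])
  have h5 : 2 / π * (π * |t|) = 2 * |t| := by field_simp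
  linarith

lemma ee_sub_norm (y y' : ℝ) : ‖ee y - ee y'‖ = ‖ee (y - y') - 1‖ := by
  have : ee y - ee y' = ee y' * (ee (y - y') - 1) := by
    rw [mul_sub, ← ee_add]; simp
  rw [this, norm_mul, ee_norm, one_mul]

lemma ee_sub_one_neg (y : ℝ) : ‖ee (-y) - 1‖ = ‖ee y - 1‖ := by
  rw [ee_sub_one_norm, ee_sub_one_norm, mul_neg, Real.sin_neg, abs_neg]

/-- good denominators -/
lemma good_den (b : ℝ) (hb : Irrational b) (M : ℕ) : ∃ q : ℕ, M ≤ q ∧ 0 < q ∧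
    ∀ j : ℤ, j ≠ 0 → 2 * |j| ≤ q → ∀ k : ℤ, 1 / (2 * (q:ℝ)) ≤ |j * b - k| := by
  obtain ⟨r, hr, hM⟩ : ∃ r : ℚ, |b - r| < 1 / (r.den:ℝ)^2 ∧ M ≤ r.den := by
    by_contra hcon
    push Not at hcon
    apply Real.infinite_rat_abs_sub_lt_one_div_den_sq_of_irrational hb
    obtain ⟨B, hB⟩ := exists_nat_gt ((|b| + 1) * M)
    refine Set.Finite.subset (((Set.finite_Icc (-(B:ℤ)) B).prod (Set.finite_Iio M)).image
      (fun x : ℤ × ℕ => (x.1 : ℚ) / x.2)) ?_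
    intro r hr
    have hd := hcon r hr
    refine ⟨(r.num, r.den), ⟨?_, hd⟩, Rat.num_div_den r⟩
    have hden : (0:ℝ) < r.den := by exact_mod_cast r.den_pos
    have hden1 : (1:ℝ) ≤ r.den := by exact_mod_cast r.den_pos
    have h1 : |b - r| < 1 := by
      refine lt_of_lt_of_le hr ?_
      rw [div_le_one (by positivity)]; exact one_le_pow₀ hden1
    have h2 : |(r:ℝ)| ≤ |b| + 1 := by
      have : (r:ℝ) = b - (b - r) := by ring
      rw [this]
      exact (abs_sub _ _).trans (by linarith)
    have h3 : (r.num:ℝ) = r * r.den := by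
      have := Rat.mul_den_eq_num r
      exact_mod_cast this.symm
    have h4 : |(r.num:ℝ)| ≤ B := by
      rw [h3, abs_mul, abs_of_pos hden]
      have : (r.den:ℝ) ≤ M := by exact_mod_cast hd.le
      have := mul_le_mul h2 this hden.le (by positivity)
      linarith
    rw [abs_le] at h4
    exact ⟨by exact_mod_cast h4.1, by exact_mod_cast h4.2⟩
  refine ⟨r.den, hM, r.den_pos, fun j hj hj2 k => ?_⟩
  have hden : (0:ℝ) < r.den := by exact_mod_cast r.den_pos
  have hne : j * r.num - k * r.den ≠ 0 := by
    intro h0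
    have h1 : (r.den : ℤ) ∣ j * r.num := ⟨k, by linarith⟩
    have h2 : IsCoprime (r.den : ℤ) r.num := by
      rw [Int.isCoprime_iff_gcd_eq_one, Int.gcd_comm]
      exact r.reduced
    have h3 := h2.dvd_of_dvd_mul_right h1
    have h4 := Int.le_of_dvd (abs_pos.mpr hj) ((dvd_abs _ _).mpr h3)
    have := abs_pos.mpr hj
    omega
  have h1 : (1:ℝ) ≤ |((j * r.num - k * r.den : ℤ):ℝ)| := by
    have := Int.one_le_abs hne
    exact_mod_cast this
  have h3 : (r.num:ℝ) = r * r.den := by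
    have := Rat.mul_den_eq_num r
    exact_mod_cast this.symm
  have h4 : 1 / (r.den:ℝ) ≤ |(j:ℝ) * r - k| := by
    rw [div_le_iff₀ hden, ← abs_of_pos hden, ← abs_mul]
    refine h1.trans_eq ?_
    congr 1; push_cast; rw [h3]; ring
  have h5 : |(j:ℝ) * r - k| ≤ |j * b - k| + |(j:ℝ)| * |b - r| := by
    rw [← abs_mul]
    have : (j:ℝ) * r - k = (j * b - k) - j * (b - r) := by ring
    rw [this]; exact abs_sub _ _
  have h6 : |(j:ℝ)| * |b - r| ≤ 1 / (2 * r.den) := by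
    have a1 : 2 * |(j:ℝ)| ≤ r.den := by exact_mod_cast hj2
    calc |(j:ℝ)| * |b - r| ≤ ((r.den:ℝ)/2) * (1 / (r.den:ℝ)^2) := by
          gcongr; linarith
      _ = 1 / (2 * r.den) := by field_simp
  have h7 : 1 / (r.den:ℝ) = 1 / (2 * r.den) + 1 / (2 * r.den) := by field_simp; norm_num
  linarith

lemma log_one_add_le_sqrt (x : ℝ) (hx : 0 ≤ x) : Real.log (1 + x) ≤ 2 * √x := by
  have h0 := Real.sqrt_nonneg x
  have h1 : 1 + x ≤ (1 + √x)^2 := by nlinarith [Real.sq_sqrt hx]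
  have h2 := Real.log_le_log (by positivity) h1
  rw [Real.log_pow] at h2
  have h3 := Real.log_le_sub_one_of_pos (by positivity : 0 < 1 + √x)
  push_cast at h2; linarith

lemma sqrt_step (n : ℕ) : 1 / √((n:ℝ)+1) ≤ 2 * √((n:ℝ)+1) - 2 * √n := by
  have h1 : 0 < √((n:ℝ)+1) := Real.sqrt_pos.mpr (by positivity)
  have h2 := Real.sqrt_nonneg (n:ℝ)
  have h3 := Real.sq_sqrt (by positivity : (0:ℝ) ≤ (n:ℝ)+1)
  have h4 := Real.sq_sqrt (by positivity : (0:ℝ) ≤ (n:ℝ))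
  rw [div_le_iff₀ h1]
  nlinarith [sq_nonneg (√((n:ℝ)+1) - √n)]

/-- comparison weight -/
noncomputable def gW (ε d : ℝ) (Q : ℕ) (q : ℕ) : ℝ := Real.log (1 + ε / (4 * max d ((q:ℝ)/Q)))

lemma gW_sum (ε d : ℝ) (Q : ℕ) (hε : 0 < ε) (hε1 : ε ≤ 1) (hd : 0 < d) (hQ : 0 < Q) (n : ℕ) :
    ∑ q ∈ Finset.range (n+1), gW ε d Q q ≤ Real.log (1 + 1/d) + √(ε * Q) * (2 * √n) := by
  have hQ' : (0:ℝ) < Q := by exact_mod_cast hQ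
  induction n with
  | zero =>
    simp only [zero_add, Finset.range_one, Finset.sum_singleton, gW]
    simp only [Nat.cast_zero, zero_div, Real.sqrt_zero, mul_zero, add_zero]
    rw [max_eq_left hd.le]
    apply Real.log_le_log (by positivity)
    have : ε / (4 * d) ≤ 1 / d := by
      rw [div_le_div_iff₀ (by positivity) hd]; nlinarith
    linarith
  | succ n ih =>
    rw [Finset.sum_range_succ]
    have h1 : gW ε d Q (n+1) ≤ √(ε * Q) * (1 / √((n:ℝ)+1)) := by
      unfold gW
      have hx : 0 ≤ ε * Q / (4 * ((n:ℝ)+1)) := by positivity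
      have h2 : Real.log (1 + ε / (4 * max d (((n+1:ℕ):ℝ)/Q))) ≤ Real.log (1 + ε * Q / (4 * ((n:ℝ)+1))) := by
        apply Real.log_le_log (by positivity)
        have h3 : (((n+1:ℕ):ℝ)/Q) ≤ max d (((n+1:ℕ):ℝ)/Q) := le_max_right _ _
        have h4 : ε / (4 * max d (((n+1:ℕ):ℝ)/Q)) ≤ ε / (4 * (((n+1:ℕ):ℝ)/Q)) := by gcongr
        have h5 : ε / (4 * (((n+1:ℕ):ℝ)/Q)) = ε * Q / (4 * ((n:ℝ)+1)) := by
          push_cast; field_simp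
        linarith
      refine h2.trans ((log_one_add_le_sqrt _ hx).trans (le_of_eq ?_))
      rw [Real.sqrt_div (by positivity), Real.sqrt_mul (by norm_num) ((n:ℝ)+1)]
      have : √(4:ℝ) = 2 := by
        rw [show (4:ℝ) = 2^2 by norm_num]; exact Real.sqrt_sq (by norm_num)
      rw [this]
      have h1 : 0 < √((n:ℝ)+1) := Real.sqrt_pos.mpr (by positivity)
      field_simp
    have h2 := mul_le_mul_of_nonneg_left (sqrt_step n) (Real.sqrt_nonneg (ε * Q))
    push_cast
    nlinarith

lemma sep_sum (A : Finset ℕ) (y : ℕ → ℝ) (Q : ℕ) (ε d : ℝ) (hε : 0 < ε) (hε1 : ε ≤ 1) (hd : 0 < d)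
    (hQ : 0 < Q) (sep : ∀ i ∈ A, ∀ j ∈ A, i ≠ j → ∀ k : ℤ, 1 / (Q:ℝ) ≤ |y i - y j - k|)
    (hdist : ∀ i ∈ A, ∀ k : ℤ, d ≤ |y i - k|) :
    ∑ i ∈ A, Real.log (1 + ε / ‖ee (y i) - 1‖) ≤ 2 * Real.log (1 + 1/d) + 4 * √ε * Q := by
  have hQ' : (0:ℝ) < Q := by exact_mod_cast hQ
  obtain ⟨q, hq⟩ : ∃ q : ℕ → ℕ, q = fun i => ⌊Q * Int.fract (y i)⌋₊ := ⟨_, rfl⟩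
  have q1 : ∀ i, (q i : ℝ) ≤ Q * Int.fract (y i) := fun i => by
    rw [hq]; exact Nat.floor_le (mul_nonneg hQ'.le (Int.fract_nonneg _))
  have q2 : ∀ i, Q * Int.fract (y i) < q i + 1 := fun i => by rw [hq]; exact Nat.lt_floor_add_one _
  have q3 : ∀ i, q i < Q := fun i => by
    have h1 := q1 i
    have h2 := Int.fract_lt_one (y i)
    have : (q i : ℝ) < Q := by nlinarith
    exact_mod_cast this
  have inj : Set.InjOn q A := by
    intro i hi j hj hij
    by_contra hne
    have h := sep i hi j hj hne (⌊y i⌋ - ⌊y j⌋)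
    have e : y i - y j - ((⌊y i⌋ - ⌊y j⌋ : ℤ):ℝ) = Int.fract (y i) - Int.fract (y j) := by
      unfold Int.fract; push_cast; ring
    rw [e, div_le_iff₀ hQ', ← abs_of_pos hQ', ← abs_mul] at h
    have a1 := q1 i; have a2 := q2 i; have a3 := q1 j; have a4 := q2 j
    rw [hij] at a1 a2
    have : |(Int.fract (y i) - Int.fract (y j)) * Q| < 1 := by
      rw [abs_lt]; constructor <;> nlinarith
    linarith
  have term : ∀ i ∈ A, Real.log (1 + ε / ‖ee (y i) - 1‖) ≤ gW ε d Q (q i) + gW ε d Q (Q - 1 - q i) := by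
    intro i hi
    have pos : ∀ n, 0 ≤ gW ε d Q n := fun n => by
      apply Real.log_nonneg
      have : 0 ≤ ε / (4 * max d ((n:ℝ)/Q)) := by
        have : 0 < max d ((n:ℝ)/Q) := lt_max_of_lt_left hd
        positivity
      linarith
    have key : ∀ n : ℕ, (∀ k : ℤ, (n:ℝ)/Q ≤ |y i - k|) → Real.log (1 + ε / ‖ee (y i) - 1‖) ≤ gW ε d Q n := by
      intro n hn
      have h1 := ee_sub_one_lower (y i) (max d ((n:ℝ)/Q)) (fun k => max_le (hdist i hi k) (hn k))
      have h0 : 0 < max d ((n:ℝ)/Q) := lt_max_of_lt_left hd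
      unfold gW
      apply Real.log_le_log
      · positivity
      · gcongr
    have c1 : (((Q - 1 - q i : ℕ):ℝ)) = Q - 1 - q i := by
      have := q3 i
      rw [Nat.cast_sub (by omega), Nat.cast_sub (by omega)]; push_cast; ring
    have f0 := Int.fract_nonneg (y i)
    have f1 := Int.fract_lt_one (y i)
    have a1 := q1 i; have a2 := q2 i
    by_cases hhalf : Int.fract (y i) ≤ 1/2
    · have := key (q i) (fun k => by
        have e : y i = ⌊y i⌋ + Int.fract (y i) := (Int.floor_add_fract _).symm
        rw [div_le_iff₀ hQ']
        have hle : Int.fract (y i) ≤ |y i - k| := by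
          rcases le_or_gt k ⌊y i⌋ with h | h
          · have : (k:ℝ) ≤ ⌊y i⌋ := by exact_mod_cast h
            refine le_trans ?_ (le_abs_self _); linarith
          · have : (⌊y i⌋:ℝ) + 1 ≤ k := by exact_mod_cast h
            refine le_trans ?_ (neg_le_abs _); linarith
        nlinarith)
      linarith [pos (Q - 1 - q i)]
    · have := key (Q - 1 - q i) (fun k => by
        have e : y i = ⌊y i⌋ + Int.fract (y i) := (Int.floor_add_fract _).symm
        rw [div_le_iff₀ hQ', c1]
        have hle : 1 - Int.fract (y i) ≤ |y i - k| := by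
          rcases le_or_gt k ⌊y i⌋ with h | h
          · have : (k:ℝ) ≤ ⌊y i⌋ := by exact_mod_cast h
            refine le_trans ?_ (le_abs_self _); linarith
          · have : (⌊y i⌋:ℝ) + 1 ≤ k := by exact_mod_cast h
            refine le_trans ?_ (neg_le_abs _); linarith
        nlinarith)
      linarith [pos (q i)]
  have pos : ∀ n, 0 ≤ gW ε d Q n := fun n => by
      apply Real.log_nonneg
      have : 0 ≤ ε / (4 * max d ((n:ℝ)/Q)) := by
        have : 0 < max d ((n:ℝ)/Q) := lt_max_of_lt_left hd
        positivity
      linarith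
  refine (Finset.sum_le_sum term).trans ?_
  rw [← Finset.sum_image (f := fun n => gW ε d Q n + gW ε d Q (Q - 1 - n)) inj]
  refine (Finset.sum_le_sum_of_subset_of_nonneg (t := Finset.range Q) ?_ ?_).trans ?_
  · intro n hn
    obtain ⟨i, _, rfl⟩ := Finset.mem_image.mp hn
    exact Finset.mem_range.mpr (q3 i)
  · intro n _ _; exact add_nonneg (pos _) (pos _)
  rw [Finset.sum_add_distrib, Finset.sum_range_reflect (fun n => gW ε d Q n)]
  have h := gW_sum ε d Q hε hε1 hd hQ (Q - 1)
  rw [Nat.sub_add_cancel hQ] at h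
  have h2 : √(((Q-1:ℕ):ℝ)) ≤ √Q := Real.sqrt_le_sqrt (by exact_mod_cast Nat.sub_le _ _)
  have h3 : √(ε * Q) * (2 * √(((Q-1:ℕ):ℝ))) ≤ √(ε * Q) * (2 * √Q) := by gcongr
  have h4 : √(ε * Q) * (2 * √Q) = 2 * √ε * Q := by
    rw [Real.sqrt_mul hε.le]
    have := Real.mul_self_sqrt hQ'.le
    linear_combination 2 * √ε * this
  linarith

lemma prod_lower (b : ℝ) (hb : Irrational b) (σ : ℝ) (hσ : 0 < σ) : ∃ m0 : ℕ, ∀ m ≥ m0,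
    ∀ (t d : ℝ) (Q i0 : ℕ), 0 < d → 0 < Q → Q ≤ 16 * m →
    (∀ i < m, ∀ j < m, i ≠ j → ∀ k : ℤ, 1 / (Q:ℝ) ≤ |((i:ℝ) - j) * b - k|) →
    (∀ i < m, i ≠ i0 → ∀ k : ℤ, d ≤ |t + i * b - k|) →
    Real.exp (-(σ * m) - 2 * Real.log (1 + 1/d)) ≤
      ∏ i ∈ (Finset.range m).erase i0, ‖ee (t + i * b) - 1‖ := by
  obtain ⟨ε, hε⟩ : ∃ ε, ε = min 1 ((σ/192)^2) := ⟨_, rfl⟩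
  have hε0 : 0 < ε := by rw [hε]; positivity
  have hε1 : ε ≤ 1 := by rw [hε]; exact min_le_left _ _
  have hεs : √ε ≤ σ/192 := by
    rw [Real.sqrt_le_left (by positivity), hε]; exact min_le_right _ _
  obtain ⟨β, hβ⟩ : ∃ β : ℝ, β = (1+ε)⁻¹ := ⟨_, rfl⟩
  have hβ0 : 0 < β := by rw [hβ]; positivity
  have hβ1 : β < 1 := by rw [hβ]; exact inv_lt_one_of_one_lt₀ (by linarith)
  have hβn : ‖(β:ℂ)‖ < 1 := by rw [Complex.norm_real, Real.norm_eq_abs, abs_of_pos hβ0]; exact hβ1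
  obtain ⟨n0, hn0⟩ := equidist_log b hb β hβn (σ/3) (by positivity)
  obtain ⟨n1, hn1⟩ := exists_nat_gt (3 / σ * Real.log 2)
  refine ⟨max n0 n1, fun m hm t d Q i0 hd hQ hQm sep hdist => ?_⟩
  have hE := (abs_le.mp (hn0 m ((le_max_left _ _).trans hm) t)).1
  have hm1 : Real.log 2 ≤ σ/3 * m := by
    have : (n1:ℝ) ≤ m := by exact_mod_cast (le_max_right _ _).trans hm
    have h := hn1.le.trans this
    rw [div_mul_eq_mul_div, div_le_iff₀ hσ] at h
    linarith
  obtain ⟨A, hA⟩ : ∃ A, A = (Finset.range m).erase i0 := ⟨_, rfl⟩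
  have memA : ∀ i ∈ A, i < m ∧ i ≠ i0 := by
    intro i hi; rw [hA, Finset.mem_erase, Finset.mem_range] at hi; exact ⟨hi.2, hi.1⟩
  rw [← hA]
  have spos : ∀ i ∈ A, 0 < ‖ee (t + i * b) - 1‖ := fun i hi => by
    have := ee_sub_one_lower _ d (hdist i (memA i hi).1 (memA i hi).2); linarith
  rw [← Real.log_le_log_iff (Real.exp_pos _) (Finset.prod_pos spos), Real.log_exp,
    Real.log_prod (fun i hi => (spos i hi).ne')]
  have h1 := sep_sum A (fun i => t + i * b) Q ε d hε0 hε1 hd hQ (by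
    intro i hi j hj hij k
    have := sep i (memA i hi).1 j (memA j hj).1 hij k
    have e : t + (i:ℝ) * b - (t + j * b) - k = ((i:ℝ) - j) * b - k := by ring
    simp only [e]; exact this) (fun i hi => hdist i (memA i hi).1 (memA i hi).2)
  have h2 : ∀ i ∈ A, Real.log ‖ee (t + i * b) - β‖ - Real.log (1 + ε / ‖ee (t + i * b) - 1‖)
      ≤ Real.log ‖ee (t + i * b) - 1‖ := by
    intro i hi
    have hs := spos i hi
    generalize ht : t + (i:ℝ) * b = y at *
    have e1 : ‖ee y - β‖ ≤ ‖ee y - 1‖ + ε := by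
      have e2 : (ee y - β) = β * ((ee y - 1) + ε * ee y) := by
        have : (β:ℂ) * (1 + ε) = 1 := by
          have : β * (1 + ε) = 1 := by rw [hβ]; field_simp
          exact_mod_cast this
        linear_combination -(ee y) * this
      rw [e2, norm_mul, Complex.norm_real, Real.norm_eq_abs, abs_of_pos hβ0]
      have e3 : ‖(ee y - 1) + ε * ee y‖ ≤ ‖ee y - 1‖ + ε := by
        refine (norm_add_le _ _).trans ?_
        rw [norm_mul, ee_norm, Complex.norm_real, Real.norm_eq_abs, abs_of_pos hε0, mul_one]
      nlinarith [norm_nonneg ((ee y - 1) + ε * ee y)]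
    have e4 : 1 + ε / ‖ee y - 1‖ = (‖ee y - 1‖ + ε) / ‖ee y - 1‖ := by field_simp
    rw [e4, Real.log_div (by positivity) hs.ne']
    have hne : 0 < ‖ee y - β‖ := norm_pos_iff.mpr (one_sub_ne_zero' β hβn y)
    have := Real.log_le_log hne e1
    linarith
  have h3 := Finset.sum_le_sum h2
  rw [Finset.sum_sub_distrib] at h3
  have h4 : ∑ i ∈ Finset.range m, Real.log ‖ee (t + i * b) - β‖ - Real.log 2 ≤
      ∑ i ∈ A, Real.log ‖ee (t + i * b) - β‖ := by
    by_cases hi : i0 ∈ Finset.range m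
    · rw [hA, ← Finset.add_sum_erase _ _ hi]
      have hne : 0 < ‖ee (t + i0 * b) - β‖ := norm_pos_iff.mpr (one_sub_ne_zero' β hβn _)
      have : Real.log ‖ee (t + i0 * b) - β‖ ≤ Real.log 2 := by
        apply Real.log_le_log hne
        refine (norm_sub_le _ _).trans ?_
        rw [ee_norm]; linarith
      linarith
    · rw [hA, Finset.erase_eq_of_notMem hi]
      have := Real.log_nonneg (by norm_num : (1:ℝ) ≤ 2)
      linarith
  have hQm' : (Q:ℝ) ≤ 16 * m := by exact_mod_cast hQm
  have h5 : 4 * √ε * Q ≤ σ/3 * m := by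
    calc 4 * √ε * Q ≤ 4 * (σ/192) * (16 * m) := by gcongr
      _ = σ/3 * m := by ring
  linarith

lemma tProd_entry10 (V : ℝ → ℝ) (b : ℝ) (n : ℕ) (x : ℝ) (z : ℂ) :
    tProd V b (n+1) x z 1 0 = tProd V b n x z 0 0 := by
  rw [tProd_succ]; simp [tMat, Matrix.mul_apply, Fin.sum_univ_two]

lemma tProd_entry01 (V : ℝ → ℝ) (b : ℝ) (n : ℕ) (x : ℝ) (z : ℂ) :
    tProd V b (n+1) x z 0 1 = - tProd V b n (x+b) z 0 0 := by
  rw [tProd_succ']; simp [tMat, Matrix.mul_apply, Fin.sum_univ_two]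

lemma tProd_entry11 (V : ℝ → ℝ) (b : ℝ) (n : ℕ) (x : ℝ) (z : ℂ) :
    tProd V b (n+2) x z 1 1 = - tProd V b n (x+b) z 0 0 := by
  rw [tProd_succ, ← tProd_entry01]; simp [tMat, Matrix.mul_apply, Fin.sum_univ_two]

lemma tProd_even_aux (V : ℝ → ℝ) (hV : ∀ x, V (-x) = V x) (b : ℝ) (n : ℕ) (z : ℂ) : ∀ y : ℝ,
    tProd V b n (-y - ((n:ℝ) - 1) * b) z 0 0 = tProd V b n y z 0 0 ∧
    tProd V b n (-y - ((n:ℝ) - 1) * b) z 0 1 = - tProd V b n y z 1 0 ∧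
    tProd V b n (-y - ((n:ℝ) - 1) * b) z 1 0 = - tProd V b n y z 0 1 ∧
    tProd V b n (-y - ((n:ℝ) - 1) * b) z 1 1 = tProd V b n y z 1 1 := by
  induction n with
  | zero => intro y; simp [tProd_zero]
  | succ n ih =>
    intro y
    obtain ⟨h1, h2, h3, h4⟩ := ih (y + b)
    have e1 : -y - (((n+1:ℕ):ℝ) - 1) * b = -(y+b) - ((n:ℝ) - 1) * b := by push_cast; ring
    have e2 : -(y+b) - ((n:ℝ) - 1) * b + n * b = -y := by ring
    rw [e1, tProd_succ, tProd_succ', e2]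
    simp only [Matrix.mul_apply, Fin.sum_univ_two, h1, h2, h3, h4]
    simp [tMat, hV]
    refine ⟨?_, ?_⟩ <;> ring

lemma tProd_even (V : ℝ → ℝ) (hV : ∀ x, V (-x) = V x) (b : ℝ) (n : ℕ) (z : ℂ) (y : ℝ) :
    tProd V b n (-y - ((n:ℝ) - 1) * b) z 0 0 = tProd V b n y z 0 0 :=
  (tProd_even_aux V hV b n z y).1

lemma tProd_sol (V : ℝ → ℝ) (b x E : ℝ) (u : ℤ → ℝ)
    (hu : ∀ n : ℤ, u (n+1) + u (n-1) + V (x + n * b) * u n = E * u n) (a : ℤ) (n : ℕ) :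
    (u (a + n) : ℂ) = tProd V b n (x + a * b) E 0 0 * u a + tProd V b n (x + a * b) E 0 1 * u (a-1) ∧
    (u (a + n - 1) : ℂ) = tProd V b n (x + a * b) E 1 0 * u a
      + tProd V b n (x + a * b) E 1 1 * u (a-1) := by
  induction n with
  | zero => simp [tProd_zero]
  | succ n ih =>
    obtain ⟨h1, h2⟩ := ih
    have e := hu (a + n)
    have e' : u (a + (n+1:ℕ)) = (E - V (x + a * b + n * b)) * u (a + n) - u (a + n - 1) := by
      have : (x + ((a + n : ℤ):ℝ) * b) = x + a * b + n * b := by push_cast; ring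
      rw [this] at e
      have : a + ((n+1:ℕ):ℤ) = a + n + 1 := by push_cast; ring
      rw [this]; linarith
    have e3 : a + ((n+1:ℕ):ℤ) - 1 = a + n := by push_cast; ring
    rw [tProd_succ, e', e3]
    push_cast
    simp only [Matrix.mul_apply, Fin.sum_univ_two]
    simp only [h1, h2, tMat]
    constructor
    · simp; ring
    · simp

lemma box_id (V : ℝ → ℝ) (b x E : ℝ) (u : ℤ → ℝ) (u0 : u 0 = 1)
    (hu : ∀ n : ℤ, u (n+1) + u (n-1) + V (x + n * b) * u n = E * u n) (k l : ℕ) :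
    tProd V b (l + k) (x - k * b) E 0 0 =
      tProd V b k (x - k * b) E 0 0 * u l - tProd V b l x E 0 1 * u (-k - 1) := by
  have h1 := tProd_sol V b x E u hu (-k) k
  have h2 := (tProd_sol V b x E u hu 0 l).1
  have hd := tProd_det V b k (x - k * b) E
  have e : x + ((-(k:ℤ) : ℤ):ℝ) * b = x - k * b := by push_cast; ring
  rw [e] at h1
  simp only [Int.cast_zero, zero_mul, add_zero, zero_add, zero_sub, neg_add_cancel, u0] at h1 h2
  rw [tProd_add]
  have : x - k * b + k * b = x := by ring
  rw [this, h2]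
  rw [Matrix.det_fin_two] at hd
  simp only [Matrix.mul_apply, Fin.sum_univ_two]
  obtain ⟨h3, h4⟩ := h1
  push_cast at *
  generalize tProd V b k (x - k * b) E = T at *
  generalize tProd V b l x E = S at *
  generalize (u (-1) : ℂ) = p at *
  generalize (u (-(k:ℤ)-1) : ℂ) = q at *
  generalize (u (-(k:ℤ)) : ℂ) = r at *
  linear_combination S 0 1 * (T 1 0 * h3 - T 0 0 * h4 - q * hd)

lemma poly_absorb (C : ℝ) (hC : 0 < C) (k : ℕ) (η : ℝ) (hη : 0 < η) :
    ∃ n0 : ℕ, ∀ n ≥ n0, 2 * C * ((k:ℝ) + n + 1)^2 ≤ Real.exp (η * n) := by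
  have h1 : (fun n : ℕ => 2 * C * ((k:ℝ) + n + 1)^2) =o[Filter.atTop] fun n : ℕ => Real.exp (η * n) := by
    have h := (isLittleO_pow_exp_pos_mul_atTop 2 hη).comp_tendsto
      (tendsto_natCast_atTop_atTop (R := ℝ))
    refine Asymptotics.IsBigO.trans_isLittleO ?_ h
    refine Asymptotics.IsBigO.of_bound (2 * C * ((k:ℝ)+2)^2) ?_
    filter_upwards [Filter.eventually_ge_atTop 1] with n hn
    have : (1:ℝ) ≤ n := by exact_mod_cast hn
    have h0 : (0:ℝ) ≤ k := by positivity
    simp only [Function.comp]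
    rw [Real.norm_of_nonneg (by positivity), Real.norm_of_nonneg (by positivity)]
    have : (k:ℝ) + n + 1 ≤ (k+2) * n := by nlinarith
    calc _ ≤ 2 * C * ((k+2) * n)^2 := by gcongr
      _ = _ := by ring
  obtain ⟨n0, h⟩ := Filter.eventually_atTop.1 (h1.bound one_pos)
  refine ⟨n0, fun n hn => ?_⟩
  have := h n hn
  rw [Real.norm_of_nonneg (by positivity), Real.norm_of_nonneg (by positivity)] at this
  linarith

lemma box_bound (V : ℝ → ℝ) (cV : Continuous V) (pV : Function.Periodic V 1) (b x E : ℝ)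
    (hb : Irrational b) (u : ℤ → ℝ) (u0 : u 0 = 1)
    (hu : ∀ n : ℤ, u (n+1) + u (n-1) + V (x + n * b) * u n = E * u n)
    (κ : ℕ) (hk : ∀ n : ℤ, |u n| ≤ ((κ:ℝ) + |(n:ℝ)|)^2) (η : ℝ) (hη : 0 < η) :
    ∃ n0 : ℕ, ∀ n ≥ n0, ∀ k ≤ n, ∀ M : ℝ, (k:ℝ) ≤ M → (n:ℝ) - k ≤ M →
      ‖tProd V b n (x - k * b) E 0 0‖ ≤ Real.exp (M * lyap V b E + η * n) := by
  obtain ⟨C, hC, hT⟩ := tProd_upper V cV pV b hb E (η/2) (by positivity)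
  obtain ⟨n0, hn0⟩ := poly_absorb C hC κ (η/2) (by positivity)
  refine ⟨n0, fun n hn k hkn M h1 h2 => ?_⟩
  obtain ⟨l, rfl⟩ := Nat.exists_eq_add_of_le' hkn
  rw [box_id V b x E u u0 hu k l]
  have hl := lyap_nonneg V b E
  have hp := hn0 _ hn
  push_cast at *
  have k0 : (0:ℝ) ≤ k := by positivity
  have l0 : (0:ℝ) ≤ l := by positivity
  have b1 : ‖tProd V b k (x - k * b) E 0 0‖ ≤ C * Real.exp (M * lyap V b E + η/2 * (l + k)) := by
    refine (opNorm2_entry _ _ _).trans ((hT _ _).trans ?_)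
    gcongr
    nlinarith
  have b2 : ‖tProd V b l x E 0 1‖ ≤ C * Real.exp (M * lyap V b E + η/2 * (l + k)) := by
    refine (opNorm2_entry _ _ _).trans ((hT _ _).trans ?_)
    gcongr
    have : (l:ℝ) ≤ M := by linarith
    nlinarith
  have u1 : ‖(u l : ℂ)‖ ≤ ((κ:ℝ) + (l+k) + 1)^2 := by
    rw [Complex.norm_real, Real.norm_eq_abs]
    refine (hk l).trans ?_
    have : |((l:ℤ):ℝ)| = l := by simp
    rw [this]; exact pow_le_pow_left₀ (by positivity) (by linarith) 2
  have u2 : ‖(u (-k-1) : ℂ)‖ ≤ ((κ:ℝ) + (l+k) + 1)^2 := by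
    rw [Complex.norm_real, Real.norm_eq_abs]
    refine (hk (-k-1)).trans ?_
    have : |((-(k:ℤ)-1:ℤ):ℝ)| = k + 1 := by
      push_cast; rw [abs_of_neg (by linarith)]; ring
    rw [this]; exact pow_le_pow_left₀ (by positivity) (by linarith) 2
  refine (norm_sub_le _ _).trans ?_
  rw [norm_mul, norm_mul]
  calc _ ≤ C * Real.exp (M * lyap V b E + η/2 * (l + k)) * ((κ:ℝ) + (l+k) + 1)^2 +
        C * Real.exp (M * lyap V b E + η/2 * (l + k)) * ((κ:ℝ) + (l+k) + 1)^2 := by gcongr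
    _ = (2 * C * ((κ:ℝ) + (l+k) + 1)^2) * Real.exp (M * lyap V b E + η/2 * (l + k)) := by ring
    _ ≤ Real.exp (η/2*(l+k)) * Real.exp (M * lyap V b E + η/2 * (l + k)) := by gcongr
    _ = _ := by rw [← Real.exp_add]; congr 1; ring

lemma interp_ineq {ι : Type*} [DecidableEq ι] (s : Finset ι) (v : ι → ℂ) (hv : Set.InjOn v s)
    (hv1 : ∀ i ∈ s, ‖v i‖ = 1) (F : Polynomial ℂ) (T R r A B : ℝ) (hr : 1 < r) (hR : r ≤ R)
    (hT : ∑ i ∈ s, ‖Lagrange.nodalWeight s v i‖ * ‖F.eval (v i)‖ ≤ T)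
    (hA : ∀ z : ℂ, ‖z‖ = R → ‖F.eval z‖ ≤ A * (R - 1) ^ s.card)
    (hB : ∀ z : ℂ, ‖z‖ = r → ∏ i ∈ s, ‖z - v i‖ ≤ B) (z : ℂ) (hz : ‖z‖ ≤ r) :
    ‖F.eval z‖ ≤ B * (A + T / (R - 1) + T / (r - 1)) := by
  obtain ⟨I, hI⟩ : ∃ I, I = Lagrange.interpolate s v fun i => F.eval (v i) := ⟨_, rfl⟩
  have T0 : 0 ≤ T := le_trans (Finset.sum_nonneg fun i _ => by positivity) hT
  have hdvd : Lagrange.nodal s v ∣ F - I := by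
    rw [Lagrange.nodal]
    refine Finset.prod_dvd_of_coprime ?_ ?_
    · intro i hi j hj hij
      refine Polynomial.isCoprime_X_sub_C_of_isUnit_sub ?_
      exact (sub_ne_zero.2 fun h => hij (hv hi hj h)).isUnit
    · intro i hi
      rw [Polynomial.dvd_iff_isRoot, Polynomial.IsRoot, Polynomial.eval_sub, hI,
        Lagrange.eval_interpolate_at_node _ hv hi, sub_self]
  obtain ⟨Q, hQ⟩ := hdvd
  have hW : ∀ z : ℂ, ‖(Lagrange.nodal s v).eval z‖ = ∏ i ∈ s, ‖z - v i‖ := fun z => by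
    rw [Lagrange.eval_nodal, norm_prod]
  have hd : ∀ z : ℂ, ∀ i ∈ s, ‖z‖ - 1 ≤ ‖z - v i‖ := fun z i hi => by
    have := norm_sub_norm_le z (v i)
    rwa [hv1 i hi] at this
  have hIb : ∀ z : ℂ, 1 < ‖z‖ → ‖I.eval z‖ ≤ (∏ i ∈ s, ‖z - v i‖) * (T / (‖z‖ - 1)) := by
    intro z hz1
    rw [hI, Lagrange.eval_interpolate_not_at_node, norm_mul, hW]
    · gcongr
      refine (norm_sum_le _ _).trans ?_
      calc _ ≤ ∑ i ∈ s, ‖Lagrange.nodalWeight s v i‖ * ‖F.eval (v i)‖ / (‖z‖ - 1) := by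
            refine Finset.sum_le_sum fun i hi => ?_
            rw [norm_mul, norm_mul, norm_inv, mul_right_comm, ← div_eq_mul_inv]
            have := hd z i hi
            gcongr
        _ ≤ _ := by rw [← Finset.sum_div]; gcongr
    · intro i hi h
      rw [h, hv1 i hi] at hz1
      exact lt_irrefl _ hz1
  have hFe : ∀ z, F.eval z = (Lagrange.nodal s v).eval z * Q.eval z + I.eval z := fun z => by
    rw [← Polynomial.eval_mul, ← Polynomial.eval_add, ← hQ]; simp
  have hR1 : 1 < R := lt_of_lt_of_le hr hR
  have hQb : ∀ z : ℂ, ‖z‖ ≤ R → ‖Q.eval z‖ ≤ A + T / (R - 1) := by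
    refine maxmod Q R _ (by linarith) fun z hz => ?_
    have hWl : (R - 1) ^ s.card ≤ ∏ i ∈ s, ‖z - v i‖ := by
      rw [← Finset.prod_const]
      refine Finset.prod_le_prod (fun _ _ => by linarith) fun i hi => ?_
      have := hd z i hi
      rwa [hz] at this
    have hWp : 0 < ∏ i ∈ s, ‖z - v i‖ := lt_of_lt_of_le (pow_pos (by linarith) _) hWl
    have hA0 : 0 ≤ A := by
      have := (norm_nonneg _).trans (hA z hz)
      exact nonneg_of_mul_nonneg_left this (pow_pos (by linarith) _)
    have h1 := hIb z (by linarith)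
    rw [hz] at h1
    have h2 : ‖(Lagrange.nodal s v).eval z * Q.eval z‖ ≤ ‖F.eval z‖ + ‖I.eval z‖ := by
      have : (Lagrange.nodal s v).eval z * Q.eval z = F.eval z - I.eval z := by rw [hFe]; ring
      rw [this]; exact norm_sub_le _ _
    rw [norm_mul, hW] at h2
    have h3 := hA z hz
    have h4 : A * (R - 1) ^ s.card ≤ A * ∏ i ∈ s, ‖z - v i‖ := by gcongr
    refine le_of_mul_le_mul_left ?_ hWp
    linarith
  refine maxmod F r _ (by linarith) (fun z hz => ?_) z hz
  rw [hFe]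
  refine (norm_add_le _ _).trans ?_
  rw [norm_mul, hW]
  have h1 := hIb z (by linarith)
  rw [hz] at h1
  have h2 := hQb z (by linarith)
  have h0 : 0 ≤ ∏ i ∈ s, ‖z - v i‖ := Finset.prod_nonneg fun _ _ => norm_nonneg _
  have h3 : 0 ≤ T / (r - 1) := div_nonneg T0 (by linarith)
  calc _ ≤ (∏ i ∈ s, ‖z - v i‖) * (A + T / (R - 1)) + (∏ i ∈ s, ‖z - v i‖) * (T / (r - 1)) := by gcongr
    _ = (∏ i ∈ s, ‖z - v i‖) * (A + T / (R - 1) + T / (r - 1)) := by ring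
    _ ≤ _ := by
      have := (norm_nonneg _).trans h2
      have := hB z hz
      gcongr

/-- interpolation nodes -/
noncomputable def nodeY (x b : ℝ) (n k0 : ℕ) (p : Bool × ℕ) : ℝ :=
  if p.1 then x - ((k0 + p.2 : ℕ):ℝ) * b else -(x - ((k0 + p.2 : ℕ):ℝ) * b) - ((n:ℝ) - 1) * b

lemma prod_erase_bool (g : Bool × ℕ → ℝ) (m i : ℕ) (c : Bool) :
    ∏ q ∈ ((Finset.univ : Finset Bool) ×ˢ Finset.range m).erase (c, i), g q =
      (∏ j ∈ (Finset.range m).erase i, g (c, j)) * ∏ j ∈ (Finset.range m).erase m, g (!c, j) := by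
  have : ((Finset.univ : Finset Bool) ×ˢ Finset.range m).erase (c, i) =
      (((Finset.range m).erase i).image fun j => (c, j)) ∪
      (((Finset.range m).erase m).image fun j => (!c, j)) := by
    ext ⟨d, j⟩
    simp only [Finset.mem_erase, Finset.mem_product, Finset.mem_univ, true_and, Finset.mem_range,
      Finset.mem_union, Finset.mem_image, Prod.mk.injEq, ne_eq]
    constructor
    · rintro ⟨h1, h2⟩
      by_cases h : d = c
      · exact Or.inl ⟨j, ⟨fun h' => h1 ⟨h, h'⟩, h2⟩, h.symm, rfl⟩
      · exact Or.inr ⟨j, ⟨h2.ne, h2⟩, by cases c <;> cases d <;> simp_all, rfl⟩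
    · rintro (⟨j, h, rfl, rfl⟩ | ⟨j, h, rfl, rfl⟩)
      · exact ⟨fun h' => h.1 h'.2, h.2⟩
      · exact ⟨fun h' => by simp at h', h.2⟩
  rw [this, Finset.prod_union, Finset.prod_image, Finset.prod_image]
  · intro a _ b _ h; simpa using h
  · intro a _ b _ h; simpa using h
  · rw [Finset.disjoint_left]
    intro q h1 h2
    simp only [Finset.mem_image] at h1 h2
    obtain ⟨j, _, rfl⟩ := h1
    obtain ⟨j', _, h⟩ := h2
    simp at h

lemma node_same (x b : ℝ) (n k0 : ℕ) (c : Bool) (i j : ℕ) :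
    ‖ee (nodeY x b n k0 (c, i)) - ee (nodeY x b n k0 (c, j))‖ = ‖ee (-(i:ℝ) * b + j * b) - 1‖ := by
  cases c
  · rw [norm_sub_rev, ee_sub_norm]; congr 3; simp [nodeY]; ring
  · rw [ee_sub_norm]; congr 3; simp [nodeY]; ring

lemma node_diff (x b : ℝ) (n k0 : ℕ) (c : Bool) (i j : ℕ) :
    ‖ee (nodeY x b n k0 (c, i)) - ee (nodeY x b n k0 (!c, j))‖ =
      ‖ee ((-2 * x + (2 * k0 + i - n + 1) * b) + j * b) - 1‖ := by
  cases c
  · rw [ee_sub_norm]; congr 3; simp [nodeY]; ring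
  · rw [norm_sub_rev, ee_sub_norm]; congr 3; simp [nodeY]; ring

lemma node_lower (b : ℝ) (hb : Irrational b) (σ : ℝ) (hσ : 0 < σ) : ∃ m0 : ℕ, ∀ m ≥ m0,
    ∀ (x d : ℝ) (Q n k0 : ℕ), 0 < d → 0 < Q → Q ≤ 16 * m → k0 + m ≤ n →
    (∀ i < m, ∀ j < m, i ≠ j → ∀ k : ℤ, 1 / (Q:ℝ) ≤ |((i:ℝ) - j) * b - k|) →
    (∀ j k : ℤ, |j| ≤ n → d ≤ |2 * x + j * b + k|) →
    ∀ p ∈ (Finset.univ : Finset Bool) ×ˢ Finset.range m,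
    Real.exp (-(2 * σ * m) - 2 * Real.log (1 + Q) - 2 * Real.log (1 + 1/d)) ≤
      ∏ q ∈ ((Finset.univ : Finset Bool) ×ˢ Finset.range m).erase p,
        ‖ee (nodeY x b n k0 p) - ee (nodeY x b n k0 q)‖ := by
  obtain ⟨m0, h⟩ := prod_lower b hb σ hσ
  refine ⟨m0, ?_⟩
  rintro m hm x d Q n k0 hd hQ hQm hkn h1 h2 ⟨c, i⟩ hp
  have hi : i < m := by simpa using hp
  rw [prod_erase_bool]
  simp only [node_same, node_diff]
  have A1 := h m hm (-(i:ℝ) * b) (1 / Q) Q i (by positivity) hQ hQm h1 (fun j hj hji k => by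
    have := h1 j hj i hi hji k
    convert this using 2; ring)
  have A2 := h m hm (-2 * x + (2 * k0 + i - n + 1) * b) d Q m hd hQ hQm h1 (fun j hj hji k => by
    have := h2 (n - 1 - 2 * k0 - i - j) k (by rw [abs_le]; omega)
    rw [← abs_neg]
    convert this using 2; push_cast; ring)
  rw [one_div_one_div] at A1
  calc _ = Real.exp (-(σ * m) - 2 * Real.log (1 + Q)) * Real.exp (-(σ * m) - 2 * Real.log (1 + 1/d)) := by
        rw [← Real.exp_add]; congr 1; ring
    _ ≤ _ := by gcongr

lemma ee_conj_norm (y r : ℝ) : ‖ee (-y) - (r:ℂ)‖ = ‖ee y - (r:ℂ)‖ := by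
  have : ee (-y) - (r:ℂ) = (starRingEnd ℂ) (ee y - (r:ℂ)) := by
    rw [map_sub, Complex.conj_ofReal, ee_neg, Complex.inv_eq_conj (ee_norm y)]
  rw [this, Complex.norm_conj]

lemma circ_dist (w y r : ℝ) (hr : 0 < r) : ‖(r:ℂ) * ee w - ee y‖ = r * ‖ee (w - y) - ((r⁻¹:ℝ):ℂ)‖ := by
  have h : (r:ℂ) ≠ 0 := by exact_mod_cast hr.ne'
  have : (r:ℂ) * ee w - ee y = ee y * (r * (ee (w - y) - ((r⁻¹:ℝ):ℂ))) := by
    have e : ee w = ee y * ee (w - y) := by rw [← ee_add]; congr 1; ring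
    rw [e]; push_cast; field_simp
  rw [this, norm_mul, norm_mul, ee_norm, Complex.norm_real, Real.norm_of_nonneg hr.le, one_mul]

lemma circ_prod (b : ℝ) (hb : Irrational b) (r : ℝ) (hr : 1 < r) (η : ℝ) (hη : 0 < η) :
    ∃ m0 : ℕ, ∀ m ≥ m0, ∀ (x : ℝ) (n k0 : ℕ) (z : ℂ), ‖z‖ = r →
    ∏ q ∈ (Finset.univ : Finset Bool) ×ˢ Finset.range m, ‖z - ee (nodeY x b n k0 q)‖ ≤
      Real.exp (2 * m * (Real.log r + η)) := by
  have hr0 : 0 < r := by linarith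
  have hβ : ‖((r⁻¹:ℝ):ℂ)‖ < 1 := by
    rw [Complex.norm_real, Real.norm_of_nonneg (by positivity)]; exact inv_lt_one_of_one_lt₀ hr
  obtain ⟨m0, h⟩ := equidist_log b hb _ hβ η hη
  refine ⟨m0, fun m hm x n k0 z hz => ?_⟩
  obtain ⟨w, hw⟩ := exists_ee (z / r) (by
    rw [norm_div, hz, Complex.norm_real, Real.norm_of_nonneg hr0.le, div_self hr0.ne'])
  have hz' : z = r * ee w := by
    rw [← hw]; have h : (r:ℂ) ≠ 0 := by exact_mod_cast hr0.ne'
    field_simp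
  have key : ∀ t : ℝ, ∏ i ∈ Finset.range m, (r * ‖ee (t + i * b) - ((r⁻¹:ℝ):ℂ)‖) ≤
      Real.exp (m * (Real.log r + η)) := by
    intro t
    have hp : ∀ y, 0 < ‖ee y - ((r⁻¹:ℝ):ℂ)‖ := by
      intro y
      rw [norm_pos_iff, sub_ne_zero]
      intro h0
      rw [← h0, ee_norm] at hβ
      exact lt_irrefl _ hβ
    have h1 := (abs_le.1 (h m hm t)).2
    rw [Finset.prod_mul_distrib, Finset.prod_const, Finset.card_range]
    rw [← Real.log_prod (fun i _ => (hp _).ne')] at h1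
    rw [Real.log_le_iff_le_exp (Finset.prod_pos fun i _ => hp _)] at h1
    calc _ ≤ r ^ m * Real.exp (η * m) := by gcongr
      _ = _ := by
        rw [mul_add, Real.exp_add, mul_comm η, Real.exp_nat_mul (Real.log r) m, Real.exp_log hr0]
  rw [Finset.prod_product, Fintype.prod_bool]
  have e1 : ∀ i : ℕ, ‖z - ee (nodeY x b n k0 (true, i))‖ =
      r * ‖ee ((w - x + k0 * b) + i * b) - ((r⁻¹:ℝ):ℂ)‖ := fun i => by
    rw [hz', circ_dist _ _ _ hr0]; congr 4; simp [nodeY]; ring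
  have e2 : ∀ i : ℕ, ‖z - ee (nodeY x b n k0 (false, i))‖ =
      r * ‖ee ((-w - x + (k0 - n + 1) * b) + i * b) - ((r⁻¹:ℝ):ℂ)‖ := fun i => by
    rw [hz', circ_dist _ _ _ hr0, ← ee_conj_norm]; congr 4; simp [nodeY]; ring
  simp only [e1, e2]
  calc _ ≤ Real.exp (m * (Real.log r + η)) * Real.exp (m * (Real.log r + η)) :=
        mul_le_mul (key _) (key _) (Finset.prod_nonneg fun _ _ => by positivity) (Real.exp_pos _).le
    _ = _ := by rw [← Real.exp_add]; congr 1; ring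

lemma poly_absorb2 (c : ℝ) (hc : 0 < c) (η : ℝ) (hη : 0 < η) :
    ∃ n0 : ℕ, ∀ n : ℕ, n0 ≤ n → 2 * (n:ℝ) * ((1 + (4 * n + 10))^2 *
      (1 + 1 / (c / (1 + (n:ℝ)^2)^2))^2) ≤ Real.exp (η * n) := by
  have h := (isLittleO_pow_exp_pos_mul_atTop 11 hη).comp_tendsto
      (tendsto_natCast_atTop_atTop (R := ℝ))
  have hK : (0:ℝ) < 2 * (225 * (1 + 4/c)^2) := by positivity
  obtain ⟨n0, h⟩ := Filter.eventually_atTop.1 (h.bound (inv_pos.2 hK))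
  refine ⟨max n0 1, fun n hn => ?_⟩
  have hn1 : (1:ℝ) ≤ n := by exact_mod_cast (le_max_right _ _).trans hn
  have h' := h n ((le_max_left _ _).trans hn)
  simp only [Function.comp] at h'
  rw [Real.norm_of_nonneg (by positivity), Real.norm_of_nonneg (by positivity), inv_mul_eq_div,
    le_div_iff₀ hK] at h'
  refine le_trans ?_ h'
  have e1 : 1 + (4 * (n:ℝ) + 10) ≤ 15 * n := by linarith
  have e2 : 1 + 1 / (c / (1 + (n:ℝ)^2)^2) ≤ (1 + 4/c) * n^4 := by
    rw [one_div_div]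
    have a1 : 1 + (n:ℝ)^2 ≤ 2 * n^2 := by nlinarith
    have a2 : (1 + (n:ℝ)^2)^2 ≤ (2 * n^2)^2 := by gcongr
    have a3 : (1 + (n:ℝ)^2)^2 / c ≤ (2 * n^2)^2 / c := by gcongr
    have a4 : (1:ℝ) ≤ n^4 := one_le_pow₀ hn1
    calc _ ≤ (n:ℝ)^4 + (2 * n^2)^2 / c := by linarith
      _ = _ := by ring
  calc _ ≤ 2 * (n:ℝ) * ((15 * n)^2 * ((1 + 4/c) * n^4)^2) := by gcongr
    _ = _ := by ring

/-- denominators with good separation -/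
def GoodDen (b : ℝ) (q : ℕ) : Prop :=
  ∀ j : ℤ, j ≠ 0 → 2 * |j| ≤ q → ∀ k : ℤ, 1 / (2 * (q:ℝ)) ≤ |j * b - k|

lemma T_bound (α lam b E x : ℝ) (hα : |α| < 1) (hb : Irrational b) (u : ℤ → ℝ) (u0 : u 0 = 1)
    (hu : ∀ n : ℤ, u (n+1) + u (n-1) + potV α lam (x + n * b) * u n = E * u n)
    (κ : ℕ) (hk : ∀ n : ℤ, |u n| ≤ ((κ:ℝ) + |(n:ℝ)|)^2)
    (c1 : ℝ) (hc1 : 0 < c1) (hx : ∀ j k : ℤ, c1 / (1 + (j:ℝ)^2)^2 ≤ |2 * x + j * b + k|)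
    (δ η : ℝ) (hδ8 : δ ≤ 1/8) (hη : 0 < η) :
    ∃ n0 : ℕ, ∀ n : ℕ, n0 ≤ n → ∀ q k0 m : ℕ, 2 * n ≤ q → q ≤ 2 * n + 5 → GoodDen b q →
      δ * n ≤ k0 → (k0:ℝ) ≤ δ * n + 1 → 2 * k0 + m = n →
      Set.InjOn (fun p => ee (nodeY x b n k0 p))
        (((Finset.univ : Finset Bool) ×ˢ Finset.range m : Finset (Bool × ℕ)) : Set (Bool × ℕ)) ∧
      ∑ p ∈ (Finset.univ : Finset Bool) ×ˢ Finset.range m,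
        ‖Lagrange.nodalWeight ((Finset.univ : Finset Bool) ×ˢ Finset.range m)
          (fun p => ee (nodeY x b n k0 p)) p‖ *
        ‖cProd E α (α * E + 2 * lam) b n (ee (nodeY x b n k0 p)) 0 0‖ ≤
      Real.exp (n * (Real.log (kap α) + (1 - δ) * lyap (potV α lam) b E + 5 * η)) := by
  have hαI := potV_continuous α lam hα
  obtain ⟨n1, h1⟩ := box_bound (potV α lam) (potV_continuous α lam hα) (potV_periodic α lam) b x E hb
    u u0 hu κ hk η hη
  obtain ⟨n2, h2⟩ := prod_hh_upper α b hα hb η hη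
  obtain ⟨n3, h3⟩ := poly_absorb2 c1 hc1 η hη
  obtain ⟨n4, h4⟩ := node_lower b hb η hη
  refine ⟨n1 + n2 + n3 + 2 * n4 + 16, fun n hn q k0 m hq1 hq2 hq hk1 hk2 hkm => ?_⟩
  have hn16 : (16:ℝ) ≤ n := by exact_mod_cast (by omega : 16 ≤ n)
  have hkm' : 2 * (k0:ℝ) + m = n := by exact_mod_cast hkm
  have hm2 : n ≤ 2 * m := by
    have : (n:ℝ) ≤ 2 * m := by nlinarith
    exact_mod_cast this
  have hn0 : (0:ℝ) < n := by linarith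
  have hd : 0 < c1 / (1 + (n:ℝ)^2)^2 := by positivity
  have hL := h4 m (by omega) x (c1 / (1 + (n:ℝ)^2)^2) (2 * q) n k0 hd (by omega) (by omega) (by omega)
    (fun i hi j hj hij k => by
      have := hq ((i:ℤ) - j) (by omega) (by
        have : |(i:ℤ) - j| ≤ m := by rw [abs_le]; omega
        omega) k
      push_cast at this ⊢
      exact this)
    (fun j k hj => by
      refine le_trans ?_ (hx j k)
      have h0 : |(j:ℝ)| ≤ n := by exact_mod_cast hj
      have : (j:ℝ)^2 ≤ (n:ℝ)^2 := sq_le_sq' (by linarith [neg_abs_le (j:ℝ)]) (by linarith [le_abs_self (j:ℝ)])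
      gcongr)
  refine ⟨?_, ?_⟩
  · intro p hp p' hp' he
    by_contra hne
    have hl := hL p hp
    have hz : ∏ q ∈ ((Finset.univ : Finset Bool) ×ˢ Finset.range m).erase p,
        ‖ee (nodeY x b n k0 p) - ee (nodeY x b n k0 q)‖ = 0 := by
      refine Finset.prod_eq_zero (i := p') (Finset.mem_erase.2 ⟨Ne.symm hne, hp'⟩) ?_
      rw [norm_eq_zero, sub_eq_zero]; exact he
    rw [hz] at hl
    exact absurd (Real.exp_pos _) (not_lt.2 hl)
  · have hw : ∀ p ∈ (Finset.univ : Finset Bool) ×ˢ Finset.range m,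
        ‖Lagrange.nodalWeight ((Finset.univ : Finset Bool) ×ˢ Finset.range m)
          (fun p => ee (nodeY x b n k0 p)) p‖ ≤ Real.exp (2 * η * n) *
          ((1 + (4 * (n:ℝ) + 10))^2 * (1 + 1 / (c1 / (1 + (n:ℝ)^2)^2))^2) := by
      intro p hp
      have hl := hL p hp
      rw [Lagrange.nodalWeight, norm_prod]
      simp only [norm_inv]
      rw [Finset.prod_inv_distrib]
      refine (inv_anti₀ (Real.exp_pos _) hl).trans ?_
      rw [← Real.exp_neg]
      have e : -(-(2 * η * (m:ℝ)) - 2 * Real.log (1 + ((2 * q : ℕ):ℝ)) - 2 * Real.log (1 + 1 / (c1 / (1 + (n:ℝ)^2)^2)))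
        = 2 * η * m + (Real.log ((1 + ((2 * q : ℕ):ℝ))^2) + Real.log ((1 + 1 / (c1 / (1 + (n:ℝ)^2)^2))^2)) := by
        rw [Real.log_pow, Real.log_pow]; push_cast; ring
      rw [e, Real.exp_add, Real.exp_add, Real.exp_log (by positivity), Real.exp_log (by positivity)]
      have hmn : (m:ℝ) ≤ n := by linarith [(Nat.cast_nonneg k0 : (0:ℝ) ≤ k0)]
      have hqn : ((2 * q : ℕ):ℝ) ≤ 4 * n + 10 := by exact_mod_cast (by omega : 2 * q ≤ 4 * n + 10)
      gcongr
    have hF : ∀ p ∈ (Finset.univ : Finset Bool) ×ˢ Finset.range m,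
        ‖cProd E α (α * E + 2 * lam) b n (ee (nodeY x b n k0 p)) 0 0‖ ≤
          Real.exp (n * (Real.log (kap α) + η)) *
          Real.exp ((1 - δ) * n * lyap (potV α lam) b E + η * n) := by
      rintro ⟨c, i⟩ hp
      have hi : i < m := by simpa using hp
      have hi' : (i:ℝ) + 1 ≤ m := by exact_mod_cast hi
      rw [cProd_ee_norm _ _ _ _ _ _ hα]
      refine mul_le_mul (h2 n (by omega) _).1 ?_ (norm_nonneg _) (Real.exp_pos _).le
      have hb1 := h1 n (by omega) (k0 + i) (by omega) ((1 - δ) * n) (by push_cast; nlinarith)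
        (by push_cast; nlinarith [(Nat.cast_nonneg i : (0:ℝ) ≤ i)])
      cases c
      · simp only [nodeY, Bool.false_eq_true, if_false]
        rw [tProd_even _ (potV_even α lam)]
        exact hb1
      · simpa only [nodeY, if_true] using hb1
    have hP := h3 n (by omega)
    have hmn : (m:ℝ) ≤ n := by linarith [(Nat.cast_nonneg k0 : (0:ℝ) ≤ k0)]
    have hD0 : (0:ℝ) ≤ ((1 + (4 * (n:ℝ) + 10))^2 * (1 + 1 / (c1 / (1 + (n:ℝ)^2)^2))^2) := by positivity
    revert hw hP hD0
    generalize ((1 + (4 * (n:ℝ) + 10))^2 * (1 + 1 / (c1 / (1 + (n:ℝ)^2)^2))^2) = D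
    intro hw hP hD0
    calc _ ≤ ∑ p ∈ (Finset.univ : Finset Bool) ×ˢ Finset.range m, (Real.exp (2 * η * n) * D) *
          (Real.exp (n * (Real.log (kap α) + η)) *
          Real.exp ((1 - δ) * n * lyap (potV α lam) b E + η * n)) :=
          Finset.sum_le_sum fun p hp => mul_le_mul (hw p hp) (hF p hp) (norm_nonneg _) (by positivity)
      _ = (2 * (m:ℝ) * D) * (Real.exp (2 * η * n) * (Real.exp (n * (Real.log (kap α) + η)) *
          Real.exp ((1 - δ) * n * lyap (potV α lam) b E + η * n))) := by
          rw [Finset.sum_const, Finset.card_product, Finset.card_univ, Fintype.card_bool,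
            Finset.card_range, nsmul_eq_mul]
          push_cast; ring
      _ ≤ (2 * (n:ℝ) * D) * (Real.exp (2 * η * n) * (Real.exp (n * (Real.log (kap α) + η)) *
          Real.exp ((1 - δ) * n * lyap (potV α lam) b E + η * n))) := by gcongr
      _ ≤ Real.exp (η * n) * (Real.exp (2 * η * n) * (Real.exp (n * (Real.log (kap α) + η)) *
          Real.exp ((1 - δ) * n * lyap (potV α lam) b E + η * n))) := by gcongr
      _ = _ := by
          rw [← Real.exp_add, ← Real.exp_add, ← Real.exp_add]; congr 1; ring

lemma A_bound (C R κ η0 ℓ δ : ℝ) (hC : 0 < C) (hκ : 0 < κ) (hη0 : 0 < η0) (hη0' : η0 ≤ ℓ/16)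
    (hR2 : 2 ≤ R) (hR : 32 ≤ ℓ * (R - 1)) (hδ : 4 * δ * Real.log (R - 1) ≤ ℓ/16)
    (n m k0 : ℕ) (hk : (k0:ℝ) ≤ δ * n + 1) (hkm : 2 * k0 + m = n) :
    C * (R^2 * κ * (1 + η0))^n / (R - 1)^(2 * m) ≤
      C * Real.exp (4 * Real.log (R - 1)) * Real.exp (n * (Real.log κ + 3 * ℓ/16)) := by
  have hkm' : 2 * (k0:ℝ) + m = n := by exact_mod_cast hkm
  have hρ : 0 < R - 1 := by linarith
  have hlρ : 0 ≤ Real.log (R - 1) := Real.log_nonneg (by linarith)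
  have e1 : (R^2 * κ * (1 + η0))^n = Real.exp (n * (2 * Real.log R + Real.log κ + Real.log (1 + η0))) := by
    rw [Real.exp_nat_mul, Real.exp_add, Real.exp_add, Real.exp_log hκ, Real.exp_log (by linarith),
      two_mul, Real.exp_add, Real.exp_log (by linarith)]
    congr 1; ring
  have e2 : (R - 1)^(2 * m) = Real.exp (2 * m * Real.log (R - 1)) := by
    have := Real.exp_nat_mul (Real.log (R - 1)) (2 * m)
    rw [Real.exp_log hρ] at this
    rw [← this]; push_cast; rfl
  rw [e1, e2, mul_div_assoc, ← Real.exp_sub, mul_assoc C (Real.exp _), ← Real.exp_add]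
  refine mul_le_mul_of_nonneg_left (Real.exp_le_exp.2 ?_) hC.le
  have l1 : Real.log (1 + η0) ≤ ℓ/16 := by
    have := Real.log_le_sub_one_of_pos (show 0 < 1 + η0 by linarith)
    linarith
  have l2 : Real.log R - Real.log (R - 1) ≤ ℓ/32 := by
    rw [← Real.log_div (by linarith) (by linarith)]
    have := Real.log_le_sub_one_of_pos (show 0 < R / (R - 1) by apply div_pos <;> linarith)
    refine this.trans ?_
    rw [div_sub_one (by linarith), div_le_iff₀ hρ]; linarith
  have n0 : (0:ℝ) ≤ n := by positivity
  have h1 : (n:ℝ) * Real.log (1 + η0) ≤ n * (ℓ/16) := by gcongr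
  have h2 : (n:ℝ) * (Real.log R - Real.log (R - 1)) ≤ n * (ℓ/32) := by gcongr
  have h3 : (n:ℝ) * (4 * δ * Real.log (R - 1)) ≤ n * (ℓ/16) := by gcongr
  have h4 : (k0:ℝ) * Real.log (R - 1) ≤ (δ * n + 1) * Real.log (R - 1) := by gcongr
  have h5 : 2 * (m:ℝ) * Real.log (R - 1) = 2 * n * Real.log (R - 1) - 4 * (k0 * Real.log (R - 1)) := by
    rw [← hkm']; ring
  rw [h5]
  linarith

lemma sup_bound (α lam b E x : ℝ) (hα : |α| < 1) (hα0 : α ≠ 0) (hb : Irrational b)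
    (hτ : |α * E + 2 * lam| < 2) (u : ℤ → ℝ) (u0 : u 0 = 1)
    (hu : ∀ n : ℤ, u (n+1) + u (n-1) + potV α lam (x + n * b) * u n = E * u n)
    (κ : ℕ) (hk : ∀ n : ℤ, |u n| ≤ ((κ:ℝ) + |(n:ℝ)|)^2)
    (c1 : ℝ) (hc1 : 0 < c1) (hx : ∀ j k : ℤ, c1 / (1 + (j:ℝ)^2)^2 ≤ |2 * x + j * b + k|)
    (hℓ : 0 < lyap (potV α lam) b E) :
    ∃ γ : ℝ, 0 < γ ∧ ∃ C1 : ℝ, 0 < C1 ∧ ∃ n0 : ℕ, ∀ n : ℕ, n0 ≤ n → ∀ q : ℕ, 2 * n ≤ q →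
      q ≤ 2 * n + 5 → GoodDen b q → ∀ y : ℝ,
      ‖tProd (potV α lam) b n y E 0 0‖ ≤ C1 * Real.exp (n * (lyap (potV α lam) b E - γ)) := by
  have hT := T_bound α lam b E x hα hb u u0 hu κ hk c1 hc1 hx
  obtain ⟨ℓ, hℓd⟩ : ∃ ℓ, ℓ = lyap (potV α lam) b E := ⟨_, rfl⟩
  rw [← hℓd] at hT hℓ ⊢
  have hκ : 0 < kap α := by linarith [kap_gt α hα]
  obtain ⟨R0, hR0, C, hC, hG⟩ := cProd_growth E α (α * E + 2 * lam) b hα hα0 hτ (ℓ/16) (by positivity)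
  obtain ⟨R, hRd⟩ : ∃ R, R = R0 + 2 + 32/ℓ + Real.exp ℓ := ⟨_, rfl⟩
  have h32 : 0 < 32/ℓ := by positivity
  have hR2 : 2 ≤ R := by linarith [Real.exp_pos ℓ]
  have hRR : R0 ≤ R := by linarith [Real.exp_pos ℓ]
  have hR32 : 32 ≤ ℓ * (R - 1) := by
    have : 32/ℓ ≤ R - 1 := by linarith [Real.exp_pos ℓ]
    rw [div_le_iff₀ hℓ] at this; linarith
  have hRe : Real.exp ℓ ≤ R := by linarith
  have hlρ : 0 ≤ Real.log (R - 1) := Real.log_nonneg (by linarith)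
  obtain ⟨δ, hδd⟩ : ∃ δ, δ = min (1/8) (ℓ / (64 * (Real.log (R - 1) + 1))) := ⟨_, rfl⟩
  have hδ0 : 0 < δ := by rw [hδd]; positivity
  have hδ8 : δ ≤ 1/8 := by rw [hδd]; exact min_le_left _ _
  have hδR : 4 * δ * Real.log (R - 1) ≤ ℓ/16 := by
    have : δ ≤ ℓ / (64 * (Real.log (R - 1) + 1)) := by rw [hδd]; exact min_le_right _ _
    rw [le_div_iff₀ (by positivity)] at this
    nlinarith
  have hδℓ : 0 < δ * ℓ := by positivity
  have hδℓ8 : δ * ℓ ≤ ℓ/8 := by nlinarith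
  obtain ⟨r, hrd⟩ : ∃ r, r = Real.exp (δ * ℓ/16) := ⟨_, rfl⟩
  have hr1 : 1 < r := by rw [hrd]; exact Real.one_lt_exp_iff.2 (by positivity)
  have hrR : r ≤ R := by
    refine le_trans ?_ hRe
    rw [hrd]; exact Real.exp_le_exp.2 (by linarith)
  have hlr : Real.log r = δ * ℓ/16 := by rw [hrd, Real.log_exp]
  obtain ⟨n1, h1⟩ := hT δ (δ * ℓ/32) hδ8 (by positivity)
  obtain ⟨n2, h2⟩ := circ_prod b hb r hr1 (δ * ℓ/32) (by positivity)
  obtain ⟨n3, h3⟩ := prod_hh_upper α b hα hb (δ * ℓ/4) (by positivity)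
  have hC1 : 0 < C * Real.exp (4 * Real.log (R - 1)) + 2 / (r - 1) := by
    have : 0 < 2 / (r - 1) := div_pos two_pos (by linarith)
    positivity
  refine ⟨δ * ℓ/4, by positivity, _, hC1, n1 + 2 * n2 + n3 + 16, fun n hn q hq1 hq2 hq y => ?_⟩
  have hn16 : (16:ℝ) ≤ n := by exact_mod_cast (by omega : 16 ≤ n)
  have n00 : (0:ℝ) < n := by linarith
  obtain ⟨k0, hk0⟩ : ∃ k0, k0 = ⌈δ * n⌉₊ := ⟨_, rfl⟩
  have hk1 : δ * n ≤ k0 := by rw [hk0]; exact Nat.le_ceil _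
  have hk2 : (k0:ℝ) ≤ δ * n + 1 := by rw [hk0]; exact (Nat.ceil_lt_add_one (by positivity)).le
  have h4k : 4 * k0 ≤ n := by
    have : 4 * (k0:ℝ) ≤ n := by nlinarith
    exact_mod_cast this
  obtain ⟨m, hkm⟩ : ∃ m, 2 * k0 + m = n := ⟨n - 2 * k0, by omega⟩
  have hkm' : 2 * (k0:ℝ) + m = n := by exact_mod_cast hkm
  have hmn : (m:ℝ) ≤ n := by linarith [(Nat.cast_nonneg k0 : (0:ℝ) ≤ k0)]
  obtain ⟨hinj, hTT⟩ := h1 n (by omega) q k0 m hq1 hq2 hq hk1 hk2 hkm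
  obtain ⟨P, hP⟩ := cProd_poly E α (α * E + 2 * lam) b n
  have hent : ∀ z, cProd E α (α * E + 2 * lam) b n z 0 0 = (P 0 0).eval z := fun z => by
    rw [hP]; simp
  simp only [hent] at hTT
  have hcard : ((Finset.univ : Finset Bool) ×ˢ Finset.range m).card = 2 * m := by
    rw [Finset.card_product, Finset.card_univ, Fintype.card_bool, Finset.card_range]
  have hρ : 0 < R - 1 := by linarith
  have key := interp_ineq ((Finset.univ : Finset Bool) ×ˢ Finset.range m)
    (fun p => ee (nodeY x b n k0 p)) hinj (fun _ _ => ee_norm _) (P 0 0) _ R r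
    (C * (R^2 * kap α * (1 + ℓ/16))^n / (R - 1)^(2 * m)) _ hr1 hrR hTT
    (fun z hz => by
      rw [hcard, div_mul_cancel₀ _ (pow_pos hρ _).ne', ← hent]
      exact hG R hRR n z hz)
    (fun z hz => h2 m (by omega) x n k0 z hz) (ee y) (by rw [ee_norm]; exact hr1.le)
  rw [← hent, cProd_ee_norm _ _ _ _ _ _ hα, hlr] at key
  have hAb := A_bound C R (kap α) (ℓ/16) ℓ δ hC hκ (by positivity) le_rfl hR2 hR32 hδR n m k0 hk2 hkm
  have hhl := (h3 n (by omega) y).2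
  -- bounds
  have kp : 0 < ∏ j ∈ Finset.range n, hh α (y + j * b) := lt_of_lt_of_le (Real.exp_pos _) hhl
  refine le_of_mul_le_mul_left ?_ kp
  refine key.trans ?_
  have hTr : Real.exp (n * (Real.log (kap α) + (1 - δ) * ℓ + 5 * (δ * ℓ/32))) / (R - 1) ≤
      Real.exp (n * (Real.log (kap α) + (1 - δ) * ℓ + 5 * (δ * ℓ/32))) / (r - 1) :=
    div_le_div_of_nonneg_left (Real.exp_pos _).le (by linarith) (by linarith)
  have hB : Real.exp (2 * m * (δ * ℓ/16 + δ * ℓ/32)) ≤ Real.exp (n * (6 * (δ * ℓ)/32)) := by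
    refine Real.exp_le_exp.2 ?_
    have : (m:ℝ) * (δ * ℓ) ≤ n * (δ * ℓ) := by gcongr
    linarith
  have f1 : Real.exp (n * (6 * (δ * ℓ)/32)) * Real.exp (n * (Real.log (kap α) + 3 * ℓ/16)) ≤
      Real.exp (n * (Real.log (kap α) + ℓ - δ * ℓ/2)) := by
    rw [← Real.exp_add, ← mul_add]
    exact Real.exp_le_exp.2 (mul_le_mul_of_nonneg_left (by linarith) n00.le)
  have f2 : Real.exp (n * (6 * (δ * ℓ)/32)) *
      Real.exp (n * (Real.log (kap α) + (1 - δ) * ℓ + 5 * (δ * ℓ/32))) ≤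
      Real.exp (n * (Real.log (kap α) + ℓ - δ * ℓ/2)) := by
    rw [← Real.exp_add, ← mul_add]
    exact Real.exp_le_exp.2 (mul_le_mul_of_nonneg_left (by linarith) n00.le)
  have f3 : Real.exp (n * (Real.log (kap α) + ℓ - δ * ℓ/2)) =
      Real.exp (n * (Real.log (kap α) - δ * ℓ/4)) * Real.exp (n * (ℓ - δ * ℓ/4)) := by
    rw [← Real.exp_add]; congr 1; ring
  have hrp : 0 < r - 1 := by linarith
  generalize C * (R^2 * kap α * (1 + ℓ/16))^n / (R - 1)^(2 * m) = A at *
  generalize Real.exp (n * (Real.log (kap α) + (1 - δ) * ℓ + 5 * (δ * ℓ/32))) = T at *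
  generalize hC'd : C * Real.exp (4 * Real.log (R - 1)) = C' at *
  have hT0 : 0 ≤ A + T / (R - 1) + T / (r - 1) := by
    have := (mul_nonneg kp.le (norm_nonneg _)).trans key
    exact nonneg_of_mul_nonneg_right this (Real.exp_pos _)
  have hC'0 : 0 ≤ C' := by rw [← hC'd]; positivity
  calc _ ≤ Real.exp (n * (6 * (δ * ℓ)/32)) * (A + T / (R - 1) + T / (r - 1)) := by gcongr
    _ ≤ Real.exp (n * (6 * (δ * ℓ)/32)) * (C' * Real.exp (n * (Real.log (kap α) + 3 * ℓ/16))
        + T / (r - 1) + T / (r - 1)) := by gcongr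
    _ = C' * (Real.exp (n * (6 * (δ * ℓ)/32)) * Real.exp (n * (Real.log (kap α) + 3 * ℓ/16)))
        + 2 / (r - 1) * (Real.exp (n * (6 * (δ * ℓ)/32)) * T) := by ring
    _ ≤ C' * Real.exp (n * (Real.log (kap α) + ℓ - δ * ℓ/2))
        + 2 / (r - 1) * Real.exp (n * (Real.log (kap α) + ℓ - δ * ℓ/2)) := by gcongr
    _ = Real.exp (n * (Real.log (kap α) - δ * ℓ/4)) *
        ((C' + 2 / (r - 1)) * Real.exp (n * (ℓ - δ * ℓ/4))) := by rw [f3]; ring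
    _ ≤ _ := by gcongr

lemma lyap_zero (α lam b E x : ℝ) (hα : |α| < 1) (hα0 : α ≠ 0) (hb : Irrational b)
    (hτ : |α * E + 2 * lam| < 2) (u : ℤ → ℝ) (u0 : u 0 = 1)
    (hu : ∀ n : ℤ, u (n+1) + u (n-1) + potV α lam (x + n * b) * u n = E * u n)
    (κ : ℕ) (hk : ∀ n : ℤ, |u n| ≤ ((κ:ℝ) + |(n:ℝ)|)^2)
    (c1 : ℝ) (hc1 : 0 < c1) (hx : ∀ j k : ℤ, c1 / (1 + (j:ℝ)^2)^2 ≤ |2 * x + j * b + k|) :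
    lyap (potV α lam) b E = 0 := by
  by_contra hne
  have hℓ : 0 < lyap (potV α lam) b E := lt_of_le_of_ne (lyap_nonneg _ _ _) (Ne.symm hne)
  obtain ⟨γ', hγ', C1, hC1, n0, hS'⟩ := sup_bound α lam b E x hα hα0 hb hτ u u0 hu κ hk c1 hc1 hx hℓ
  obtain ⟨ℓ, hℓd⟩ : ∃ ℓ, ℓ = lyap (potV α lam) b E := ⟨_, rfl⟩
  obtain ⟨γ, hγ, hγℓ, hγγ⟩ : ∃ γ, 0 < γ ∧ γ ≤ ℓ ∧ γ ≤ γ' := ⟨min ℓ γ', by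
    rw [hℓd]; exact lt_min hℓ hγ', min_le_left _ _, min_le_right _ _⟩
  rw [← hℓd] at hS' hℓ
  obtain ⟨n1, hn1⟩ := exists_nat_gt (4 * C1 / γ)
  obtain ⟨q, hq, hq0, hgood⟩ := good_den b hb (2 * (n0 + n1) + 10)
  obtain ⟨N, hN1, hN2⟩ : ∃ N, 2 * (N + 2) ≤ q ∧ q ≤ 2 * (N + 2) + 1 := ⟨q / 2 - 2, by omega, by omega⟩
  obtain ⟨y, hy⟩ := exists_ge_lyap (potV α lam) (potV_continuous α lam hα) b E (N + 2) (by omega)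
  rw [← hℓd] at hy
  have hS : ∀ n, N ≤ n → n ≤ N + 2 → ∀ y, ‖tProd (potV α lam) b n y E 0 0‖ ≤
      C1 * Real.exp (((N + 2 : ℕ):ℝ) * (ℓ - γ)) := by
    intro n h1 h2 y
    refine (hS' n (by omega) q (by omega) (by omega) hgood y).trans ?_
    have h3 : (n:ℝ) ≤ ((N + 2 : ℕ):ℝ) := by exact_mod_cast h2
    have h4 : (n:ℝ) * (ℓ - γ') ≤ n * (ℓ - γ) := by gcongr
    have h5 : (n:ℝ) * (ℓ - γ) ≤ ((N + 2 : ℕ):ℝ) * (ℓ - γ) :=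
      mul_le_mul_of_nonneg_right h3 (by linarith)
    exact mul_le_mul_of_nonneg_left (Real.exp_le_exp.2 (h4.trans h5)) hC1.le
  have h := hy.trans (opNorm2_le_sum _)
  have e1 := hS (N+2) (by omega) le_rfl y
  have e2 := hS (N+1) (by omega) (by omega) (y + b)
  have e3 := hS (N+1) (by omega) (by omega) y
  have e4 := hS N le_rfl (by omega) (y + b)
  rw [tProd_entry11, norm_neg, show N + 2 = (N + 1) + 1 from rfl, tProd_entry01, norm_neg,
    tProd_entry10] at h
  have h' : Real.exp (((N + 2 : ℕ):ℝ) * ℓ) ≤ 4 * C1 * Real.exp (((N + 2 : ℕ):ℝ) * (ℓ - γ)) := by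
    have : N + 1 + 1 = N + 2 := rfl
    rw [this] at h
    linarith
  have e : Real.exp (((N + 2 : ℕ):ℝ) * ℓ) =
      Real.exp (((N + 2 : ℕ):ℝ) * γ) * Real.exp (((N + 2 : ℕ):ℝ) * (ℓ - γ)) := by
    rw [← Real.exp_add]; congr 1; ring
  rw [e] at h'
  have h6 := le_of_mul_le_mul_right h' (Real.exp_pos _)
  have h7 := Real.add_one_le_exp (((N + 2 : ℕ):ℝ) * γ)
  rw [div_lt_iff₀ hγ] at hn1
  have h8 : (n1:ℝ) ≤ ((N + 2 : ℕ):ℝ) := by exact_mod_cast (by omega : n1 ≤ N + 2)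
  have h9 : (n1:ℝ) * γ ≤ ((N + 2 : ℕ):ℝ) * γ := by gcongr
  linarith

lemma sign_setup (α lam : ℝ) : ∃ p s : ℝ, (p = 1 ∨ p = -1) ∧ (s = 1 ∨ s = -1) ∧
    s * lam = |lam| ∧ s * α = p * |α| := by
  rcases le_total 0 lam with h | h <;> rcases le_total 0 α with h' | h'
  · exact ⟨1, 1, by simp, by simp, by rw [abs_of_nonneg h]; ring, by rw [abs_of_nonneg h']⟩
  · exact ⟨-1, 1, by simp, by simp, by rw [abs_of_nonneg h]; ring, by rw [abs_of_nonpos h']; ring⟩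
  · exact ⟨-1, -1, by simp, by simp, by rw [abs_of_nonpos h]; ring, by rw [abs_of_nonneg h']⟩
  · exact ⟨1, -1, by simp, by simp, by rw [abs_of_nonpos h]; ring, by rw [abs_of_nonpos h']; ring⟩

lemma hh_extreme (α : ℝ) : (∃ x, hh α x = 1 - |α|) ∧ ∃ x, hh α x = 1 + |α| := by
  have e0 : hh α 0 = 1 - α := by simp [hh]
  have e1 : hh α (1/2) = 1 + α := by
    have : 2 * Real.pi * (1/2) = Real.pi := by ring
    simp only [hh, this, Real.cos_pi]; ring
  rcases le_total 0 α with h | h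
  · rw [abs_of_nonneg h]; exact ⟨⟨0, e0⟩, ⟨1/2, e1⟩⟩
  · rw [abs_of_nonpos h]; exact ⟨⟨1/2, by rw [e1]; ring⟩, ⟨0, by rw [e0]; ring⟩⟩

lemma exists_E1 (α lam b θ : ℝ) (hα : |α| < 1) (hα0 : α ≠ 0) (hb : Irrational b)
    (h1 : 1 - |α| < |lam|) (H : lp (fun _ : ℤ => ℂ) 2 →L[ℂ] lp (fun _ : ℤ => ℂ) 2)
    (hH : IsSchrodingerOp (potV α lam) b θ H) :
    ∃ E : ℝ, (E : ℂ) ∈ spectrum ℂ H ∧ 0 < lyap (potV α lam) b (E : ℂ) := by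
  obtain ⟨p, s, hp, hs, hsl, hsa⟩ := sign_setup α lam
  obtain ⟨x, hx⟩ := (hh_extreme α).1
  have hαp : 0 < |α| := abs_pos.2 hα0
  have cV := potV_continuous α lam hα
  have pV := potV_periodic α lam
  obtain ⟨M, -, hM⟩ := periodic_bdd (potV α lam) cV pV
  have ht : |α| * (p * potV α lam x) + 2 * |lam| = 2 * |lam| / (1 - |α|) := by
    have := potV_tau α lam x hα
    rw [hx] at this
    calc _ = s * (α * potV α lam x + 2 * lam) := by rw [← hsl]; linear_combination (-potV α lam x) * hsa
      _ = _ := by rw [this, ← hsl]; ring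
  have ht2 : 2 < |α| * (p * potV α lam x) + 2 * |lam| := by
    rw [ht, lt_div_iff₀ (by linarith)]; linarith
  have hlt : (2 - 2 * |lam|) / |α| < p * potV α lam x := by
    rw [div_lt_iff₀ hαp]; linarith
  obtain ⟨e0, he1, he2⟩ := exists_between hlt
  obtain ⟨E, -, -, hE, u, u0, hu, k, hk⟩ := schnol (fun n : ℤ => potV α lam (x + n * b)) (-M) M
    (fun n => abs_le.1 (hM _)) p e0 hp (by simpa using he2)
  refine ⟨E, weyl _ cV pV b θ hb H hH E x u u0 hu k hk, lyap_pos E α lam b hα hα0 hb ?_⟩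
  have h3 : 2 < s * (α * E + 2 * lam) := by
    have : s * (α * E + 2 * lam) = |α| * (p * E) + 2 * |lam| := by
      rw [← hsl]; linear_combination E * hsa
    rw [this]
    rw [div_lt_iff₀ hαp] at he1
    nlinarith
  rcases hs with rfl | rfl
  · exact lt_of_lt_of_le (by linarith) (le_abs_self _)
  · exact lt_of_lt_of_le (by linarith) (neg_le_abs _)

lemma exists_E2 (α lam b θ : ℝ) (hα : |α| < 1) (hα0 : α ≠ 0) (hb : Irrational b)
    (h2 : |lam| < 1 + |α|) (H : lp (fun _ : ℤ => ℂ) 2 →L[ℂ] lp (fun _ : ℤ => ℂ) 2)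
    (hH : IsSchrodingerOp (potV α lam) b θ H) :
    ∃ E : ℝ, (E : ℂ) ∈ spectrum ℂ H ∧ lyap (potV α lam) b (E : ℂ) = 0 := by
  obtain ⟨p, s, hp, hs, hsl, hsa⟩ := sign_setup α lam
  obtain ⟨x0, hx0⟩ := (hh_extreme α).2
  have hαp : 0 < |α| := abs_pos.2 hα0
  have cV := potV_continuous α lam hα
  have pV := potV_periodic α lam
  obtain ⟨M, -, hM⟩ := periodic_bdd (potV α lam) cV pV
  have hop : IsOpen {y | |lam| < hh α y} := isOpen_lt continuous_const (continuous_hh α)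
  obtain ⟨ε, hε, hball⟩ := Metric.isOpen_iff.1 hop x0 (by rw [Set.mem_ofPred_eq, hx0]; exact h2)
  obtain ⟨x, hxI, c1, hc1, hres⟩ := nonres (x0 - ε) (x0 + ε) b (by linarith)
  have hx : |lam| < hh α x := hball (by rwa [Real.ball_eq_Ioo])
  have hlin : ∀ y, |α| * (p * y) + 2 * |lam| = s * (α * y + 2 * lam) := fun y => by
    rw [← hsl]; linear_combination (-y) * hsa
  have ht : ∀ y, |α| * (p * potV α lam y) + 2 * |lam| = 2 * |lam| / hh α y := fun y => by
    rw [hlin, potV_tau α lam y hα, ← hsl]; ring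
  have ht2 : |α| * (p * potV α lam x) + 2 * |lam| < 2 := by
    rw [ht, div_lt_iff₀ (hh_pos _ _ hα)]; linarith
  have hlow : ∀ y, -(2 * |lam|) / |α| ≤ p * potV α lam y := fun y => by
    have := ht y
    have h0 : 0 ≤ 2 * |lam| / hh α y := div_nonneg (by positivity) (hh_pos _ _ hα).le
    rw [div_le_iff₀ hαp]; linarith
  have hlt : -((2 - 2 * |lam|) / |α|) < -p * potV α lam x := by
    have : p * potV α lam x < (2 - 2 * |lam|) / |α| := by rw [lt_div_iff₀ hαp]; linarith
    linarith
  obtain ⟨e0, he1, he2⟩ := exists_between hlt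
  obtain ⟨E, hE, hEl, u, u0, hu, k, hk⟩ : ∃ E : ℝ, e0 ≤ -p * E ∧ -(2 * |lam|) / |α| - 2 ≤ p * E ∧
      ∃ u : ℤ → ℝ, u 0 = 1 ∧ (∀ n : ℤ, u (n+1) + u (n-1) + potV α lam (x + n * b) * u n = E * u n) ∧
      ∃ k : ℕ, ∀ n : ℤ, |u n| ≤ ((k:ℝ) + |(n:ℝ)|)^2 := by
    rcases hp with rfl | rfl
    · obtain ⟨E, l, -, hE, r⟩ := schnol (fun n : ℤ => potV α lam (x + n * b)) (-(2 * |lam|) / |α|) M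
        (fun n => ⟨by simpa using hlow (x + n * b), (abs_le.1 (hM _)).2⟩) (-1) e0 (by simp)
        (by simpa using he2)
      exact ⟨E, by simpa using hE, by linarith, r⟩
    · obtain ⟨E, -, l, hE, r⟩ := schnol (fun n : ℤ => potV α lam (x + n * b)) (-M)
        (-(-(2 * |lam|) / |α|))
        (fun n => ⟨(abs_le.1 (hM _)).1, by have := hlow (x + n * b); linarith⟩) 1 e0 (by simp)
        (by simpa using he2)
      exact ⟨E, by simpa using hE, by linarith, r⟩
  refine ⟨E, weyl _ cV pV b θ hb H hH E x u u0 hu k hk,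
    lyap_zero α lam b E x hα hα0 hb ?_ u u0 hu k hk c1 hc1 hres⟩
  have h3 : s * (α * E + 2 * lam) < 2 := by
    rw [← hlin]
    have : p * E < (2 - 2 * |lam|) / |α| := by linarith
    rw [lt_div_iff₀ hαp] at this
    linarith
  have h4 : -2 < s * (α * E + 2 * lam) := by
    rw [← hlin]
    have : -(2 * |lam|) / |α| ≤ p * E + 2 := by linarith
    rw [div_le_iff₀ hαp] at this
    nlinarith
  rw [abs_lt]
  rcases hs with rfl | rfl
  · constructor <;> linarith
  · constructor <;> linarith

/-- if `1 - |α| < |λ| < 1 + |α|`, then for every `θ` there are energies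
`E₁, E₂` in the spectrum of `H_{α,θ,b}` with `L(E₁) > 0` and `L(E₂) = 0`. -/
theorem coexistence_of_zero_and_positive_lyapunov (α lam b θ : ℝ)
    (hα : α ∈ Set.Ioo (-1 : ℝ) 1) (hb : Irrational b)
    (h1 : 1 - |α| < |lam|) (h2 : |lam| < 1 + |α|)
    (H : lp (fun _ : ℤ => ℂ) 2 →L[ℂ] lp (fun _ : ℤ => ℂ) 2)
    (hH : IsSchrodingerOp (potV α lam) b θ H) :
    ∃ E₁ E₂ : ℝ, (E₁ : ℂ) ∈ spectrum ℂ H ∧ (E₂ : ℂ) ∈ spectrum ℂ H ∧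
      0 < lyap (potV α lam) b (E₁ : ℂ) ∧ lyap (potV α lam) b (E₂ : ℂ) = 0 := by
  have hα1 : |α| < 1 := abs_lt.2 hα
  have hα0 : α ≠ 0 := by
    rintro rfl
    rw [abs_zero] at h1 h2
    linarith
  obtain ⟨E₁, a1, a2⟩ := exists_E1 α lam b θ hα1 hα0 hb h1 H hH
  obtain ⟨E₂, c1, c2⟩ := exists_E2 α lam b θ hα1 hα0 hb h2 H hH
  exact ⟨E₁, E₂, a1, c1, a2, c2⟩
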